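/- arXiv:1012.2401 — 4 statements merged into one kernel-verified Lean document; each statement's English description precedes it below -/
import Mathlib

section
/- Let u : B_1^+ ∪ B_1^0 → ℝ be continuous, a-harmonic in B_1^+, and satisfy ∫_{B_1^+} y^a u(x,y)² dx dy < ∞, and suppose that f(x) := u(x,0) is C^{1,1} on B_1^0. Then there exist a number D ∈ ℝ and a constant C > 0, with C and |D| bounded in terms of n, a, ‖f‖_{C^{1,1}(B_1^0)} and (∫_{B_1^+} y^a u²)^{1/2} only, such that for all (x,y) ∈ B_{1/2}^+: |u(x,y) − f(0) − ∇f(0)·x − D y^{1−a}| ≤ C (|x|² + y² + |x| y^{1−a}). -/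
open Set Filter Topology MeasureTheory
open scoped RealInnerProductSpace

noncomputable section

abbrev En (n : ℕ) := EuclideanSpace ℝ (Fin n)

/-- The open upper half ball `B_r^+`. -/
def halfBall (n : ℕ) (r : ℝ) : Set (En n × ℝ) :=
  {p | ‖p.1‖ ^ 2 + p.2 ^ 2 < r ^ 2 ∧ 0 < p.2}

/-- The closure of the upper half ball. -/
def closedHalfBall (n : ℕ) (r : ℝ) : Set (En n × ℝ) :=
  {p | ‖p.1‖ ^ 2 + p.2 ^ 2 ≤ r ^ 2 ∧ 0 ≤ p.2}

/-- `B_r^+ ∪ B_r^0`. -/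
def halfBallWithBase (n : ℕ) (r : ℝ) : Set (En n × ℝ) :=
  {p | ‖p.1‖ ^ 2 + p.2 ^ 2 < r ^ 2 ∧ 0 ≤ p.2}

/-- The flat ball `B_r^0` in `ℝⁿ`. -/
def flatBall (n : ℕ) (r : ℝ) : Set (En n) := {x | ‖x‖ < r}

/-- `(∂B_1)^+`. -/
def spherePlus (n : ℕ) : Set (En n × ℝ) := {p | ‖p.1‖ ^ 2 + p.2 ^ 2 = 1 ∧ 0 < p.2}

/-- closure of `(∂B_1)^+`. -/
def closedSpherePlus (n : ℕ) : Set (En n × ℝ) := {p | ‖p.1‖ ^ 2 + p.2 ^ 2 = 1 ∧ 0 ≤ p.2}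

/-- Second directional derivative of `u` at `p` in direction `v`. -/
def D2 {n : ℕ} (u : En n × ℝ → ℝ) (p v : En n × ℝ) : ℝ :=
  fderiv ℝ (fun q => fderiv ℝ u q v) p v

/-- The Laplacian in the `n+1` variables `(x, y)`. -/
def lap {n : ℕ} (u : En n × ℝ → ℝ) (p : En n × ℝ) : ℝ :=
  (∑ i : Fin n, D2 u p (EuclideanSpace.single i 1, 0)) + D2 u p (0, 1)

/-- `u` is `a`-harmonic on `Ω`: it is `C²` there and `Δu + (a/y) ∂_y u = 0`. -/
def IsAHarmonicOn {n : ℕ} (a : ℝ) (u : En n × ℝ → ℝ) (Ω : Set (En n × ℝ)) : Prop :=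
  ContDiffOn ℝ 2 u Ω ∧ ∀ p ∈ Ω, lap u p + (a / p.2) * fderiv ℝ u p (0, 1) = 0

/-- `lim_{y → 0⁺} y^a ∂_y w(x, y) = L`. -/
def NormalDerivLimit {n : ℕ} (a : ℝ) (w : En n × ℝ → ℝ) (x : En n) (L : ℝ) : Prop :=
  Tendsto (fun y : ℝ => y ^ a * fderiv ℝ w (x, y) (0, 1)) (𝓝[>] (0 : ℝ)) (𝓝 L)

/-- The boundary-restriction `(t, x) ↦ u(t, x, 0)`. -/
def bdryFun {n : ℕ} (u : ℝ → En n × ℝ → ℝ) : ℝ × En n → ℝ := fun q => u q.1 (q.2, 0)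

/-- A classical solution of the extended drift–diffusion equation on
`[-1,0] × closure (B_1^+)` with drift `b` and right-hand side `f`. -/
def IsExtDDSolution {n : ℕ} (a : ℝ) (b : ℝ → En n → En n) (f : ℝ → En n → ℝ)
    (u : ℝ → En n × ℝ → ℝ) : Prop :=
  ContinuousOn (fun q : ℝ × (En n × ℝ) => u q.1 q.2) (Icc (-1 : ℝ) 0 ×ˢ closedHalfBall n 1) ∧
  (∀ t ∈ Icc (-1 : ℝ) 0, IsAHarmonicOn a (u t) (halfBall n 1)) ∧
  (∀ q ∈ Ioc (-1 : ℝ) 0 ×ˢ flatBall n 1,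
      DifferentiableWithinAt ℝ (bdryFun u) (Ioc (-1 : ℝ) 0 ×ˢ flatBall n 1) q) ∧
  (∀ t x, (t, x) ∈ Ioc (-1 : ℝ) 0 ×ˢ flatBall n 1 →
      ∃ L : ℝ, NormalDerivLimit a (u t) x L ∧
        fderivWithin ℝ (bdryFun u) (Ioc (-1 : ℝ) 0 ×ˢ flatBall n 1) (t, x) (1, 0) +
          fderivWithin ℝ (bdryFun u) (Ioc (-1 : ℝ) 0 ×ˢ flatBall n 1) (t, x) (0, b t x) -
          L = f t x)

/-- A classical solution of the localized fractional heat equation on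
`[-1,0] × closure (B_1^+)`. -/
def IsFracHeatSolution {n : ℕ} (a : ℝ) (u : ℝ → En n × ℝ → ℝ) : Prop :=
  ContinuousOn (fun q : ℝ × (En n × ℝ) => u q.1 q.2) (Icc (-1 : ℝ) 0 ×ˢ closedHalfBall n 1) ∧
  (∀ t ∈ Icc (-1 : ℝ) 0, IsAHarmonicOn a (u t) (halfBall n 1)) ∧
  (∀ t ∈ Ioc (-1 : ℝ) 0, ∀ x ∈ flatBall n 1,
      DifferentiableWithinAt ℝ (fun τ => u τ (x, 0)) (Ioc (-1 : ℝ) 0) t ∧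
      NormalDerivLimit a (u t) x (derivWithin (fun τ => u τ (x, 0)) (Ioc (-1 : ℝ) 0) t))



/-! ### One dimensional calculus -/

def HasD2 (g : ℝ → ℝ) (d1 d2 : ℝ) : Prop :=
  ∃ g' : ℝ → ℝ, (∀ᶠ t in 𝓝 (0:ℝ), HasDerivAt g (g' t) t) ∧ g' 0 = d1 ∧ HasDerivAt g' d2 0

lemma HasD2.congr_val {g : ℝ → ℝ} {d1 d2 e1 e2 : ℝ} (h : HasD2 g d1 d2) (h1 : d1 = e1)
    (h2 : d2 = e2) : HasD2 g e1 e2 := by subst h1; subst h2; exact h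

lemma HasD2.add {f g : ℝ → ℝ} {a1 a2 b1 b2 : ℝ} (hf : HasD2 f a1 a2) (hg : HasD2 g b1 b2) :
    HasD2 (fun t => f t + g t) (a1 + b1) (a2 + b2) := by
  obtain ⟨f', h1, h2, h3⟩ := hf
  obtain ⟨g', k1, k2, k3⟩ := hg
  refine ⟨fun t => f' t + g' t, ?_, by simp [h2, k2], h3.add k3⟩
  filter_upwards [h1, k1] with t ht kt using ht.add kt

lemma HasD2.mul {f g : ℝ → ℝ} {a1 a2 b1 b2 : ℝ} (hf : HasD2 f a1 a2) (hg : HasD2 g b1 b2) :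
    HasD2 (fun t => f t * g t) (a1 * g 0 + f 0 * b1) (a2 * g 0 + 2 * a1 * b1 + f 0 * b2) := by
  obtain ⟨f', h1, h2, h3⟩ := hf
  obtain ⟨g', k1, k2, k3⟩ := hg
  refine ⟨fun t => f' t * g t + f t * g' t, ?_, by simp [h2, k2], ?_⟩
  · filter_upwards [h1, k1] with t ht kt using ht.mul kt
  · have := (h3.mul k1.self_of_nhds).add (h1.self_of_nhds.mul k3)
    refine this.congr_deriv ?_
    rw [h2, k2]; ring

lemma hasD2_const (c : ℝ) : HasD2 (fun _ => c) 0 0 :=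
  ⟨fun _ => 0, Eventually.of_forall fun t => hasDerivAt_const t c, rfl, hasDerivAt_const 0 0⟩

lemma HasD2.const_mul {g : ℝ → ℝ} {b1 b2 : ℝ} (c : ℝ) (hg : HasD2 g b1 b2) :
    HasD2 (fun t => c * g t) (c * b1) (c * b2) := by
  refine ((hasD2_const c).mul hg).congr_val ?_ ?_ <;> ring

lemma HasD2.sub {f g : ℝ → ℝ} {a1 a2 b1 b2 : ℝ} (hf : HasD2 f a1 a2) (hg : HasD2 g b1 b2) :
    HasD2 (fun t => f t - g t) (a1 - b1) (a2 - b2) := by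
  obtain ⟨f', h1, h2, h3⟩ := hf
  obtain ⟨g', k1, k2, k3⟩ := hg
  refine ⟨fun t => f' t - g' t, ?_, by simp [h2, k2], h3.sub k3⟩
  filter_upwards [h1, k1] with t ht kt using ht.sub kt

lemma hasD2_id_add (c : ℝ) : HasD2 (fun t => c + t) 1 0 :=
  ⟨fun _ => 1, Eventually.of_forall fun t => by simpa using (hasDerivAt_id t).const_add c, rfl,
    hasDerivAt_const 0 1⟩

lemma hasD2_quad (c0 c1 c2 : ℝ) : HasD2 (fun t => c0 + c1 * t + c2 * t ^ 2) c1 (2 * c2) := by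
  refine ⟨fun t => c1 + 2 * c2 * t, Eventually.of_forall fun t => ?_, by simp, ?_⟩
  · have := (((hasDerivAt_id t).const_mul c1).const_add c0).add
      (((hasDerivAt_id t).pow 2).const_mul c2)
    refine this.congr_deriv ?_
    simp; ring
  · have := ((hasDerivAt_id (0:ℝ)).const_mul (2 * c2)).const_add c1
    simpa using this

lemma HasD2.localMax {g : ℝ → ℝ} {d1 d2 : ℝ} (h : HasD2 g d1 d2) (hm : IsLocalMax g 0) :
    d1 = 0 ∧ d2 ≤ 0 := by
  obtain ⟨g', h1, h2, h3⟩ := h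
  have e0 : d1 = 0 := by rw [← h2]; exact hm.hasDerivAt_eq_zero h1.self_of_nhds
  refine ⟨e0, ?_⟩
  by_contra hd
  push Not at hd
  have hde : deriv g =ᶠ[𝓝 0] g' := by
    filter_upwards [h1] with t ht using ht.deriv
  have hmin : IsLocalMin g 0 := by
    apply isLocalMin_of_deriv_deriv_pos
    · rw [hde.deriv_eq, h3.deriv]; exact hd
    · rw [hde.self_of_nhds, h2, e0]
    · exact h1.self_of_nhds.continuousAt
  have hc : g =ᶠ[𝓝 0] fun _ => g 0 := by
    filter_upwards [hm, hmin] with t a b using le_antisymm a b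
  have h5 : ∀ᶠ t in 𝓝 (0:ℝ), g' t = 0 := by
    filter_upwards [hc.eventuallyEq_nhds, h1] with t ht h1t
    rw [← h1t.deriv, ht.deriv_eq]; simp
  have h6 : HasDerivAt g' 0 0 := (hasDerivAt_const (0:ℝ) (0:ℝ)).congr_of_eventuallyEq h5
  have := h3.unique h6
  linarith

/-! ### Coordinates -/

def dir {n : ℕ} : Option (Fin n) → En n × ℝ
  | none => (0, 1)
  | some i => (EuclideanSpace.single i 1, 0)

def co {n : ℕ} : Option (Fin n) → En n × ℝ → ℝ
  | none, X => X.2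
  | some i, X => X.1 i

lemma lap_eq {n : ℕ} (u : En n × ℝ → ℝ) (p : En n × ℝ) : lap u p = ∑ o, D2 u p (dir o) := by
  rw [Fintype.sum_option, add_comm]; rfl

def eN {n : ℕ} (X : En n × ℝ) : ℝ := √(‖X.1‖ ^ 2 + X.2 ^ 2)

lemma eN_sq {n : ℕ} (X : En n × ℝ) : eN X ^ 2 = ‖X.1‖ ^ 2 + X.2 ^ 2 :=
  Real.sq_sqrt (by positivity)

lemma eN_nonneg {n : ℕ} (X : En n × ℝ) : 0 ≤ eN X := Real.sqrt_nonneg _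

lemma eN_eq {n : ℕ} (X : En n × ℝ) : eN X = ‖WithLp.toLp 2 X‖ := by
  rw [WithLp.prod_norm_eq_of_L2]; simp [eN]

lemma eN_add {n : ℕ} (X Y : En n × ℝ) : eN (X + Y) ≤ eN X + eN Y := by
  simp only [eN_eq]; rw [WithLp.toLp_add]; exact norm_add_le _ _

lemma eN_neg {n : ℕ} (X : En n × ℝ) : eN (-X) = eN X := by simp [eN]

lemma eN_hor {n : ℕ} (h : En n) : eN ((h, 0) : En n × ℝ) = ‖h‖ := by
  simp [eN]

lemma eN_ver {n : ℕ} (t : ℝ) : eN ((0, t) : En n × ℝ) = |t| := by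
  simp [eN, Real.sqrt_sq_eq_abs]

lemma eN_zero {n : ℕ} : eN (0 : En n × ℝ) = 0 := by simp [eN]

lemma eN_smul {n : ℕ} (t : ℝ) (X : En n × ℝ) : eN (t • X) = |t| * eN X := by
  simp only [eN_eq]; rw [WithLp.toLp_smul, norm_smul, Real.norm_eq_abs]

lemma eN_dir {n : ℕ} (o : Option (Fin n)) : eN (dir o : En n × ℝ) = 1 := by
  cases o <;> simp [dir, eN]

lemma fst_le_eN {n : ℕ} (X : En n × ℝ) : ‖X.1‖ ≤ eN X := by
  apply Real.le_sqrt_of_sq_le; nlinarith [sq_nonneg X.2]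

lemma snd_le_eN {n : ℕ} (X : En n × ℝ) : |X.2| ≤ eN X := by
  apply Real.le_sqrt_of_sq_le; rw [sq_abs]; nlinarith [sq_nonneg ‖X.1‖]

lemma norm_le_eN {n : ℕ} (X : En n × ℝ) : ‖X‖ ≤ eN X := by
  rw [Prod.norm_def]; exact max_le (fst_le_eN X) (snd_le_eN X)

lemma continuous_eN {n : ℕ} : Continuous (eN : En n × ℝ → ℝ) := by
  unfold eN; fun_prop

lemma eN_sq_sum {n : ℕ} (X : En n × ℝ) : eN X ^ 2 = ∑ o, co o X ^ 2 := by
  rw [eN_sq, Fintype.sum_option, EuclideanSpace.norm_sq_eq, add_comm]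
  simp [co]

lemma eN_sq_line {n : ℕ} (X : En n × ℝ) (o : Option (Fin n)) (t : ℝ) :
    eN (X + t • dir o) ^ 2 = eN X ^ 2 + 2 * co o X * t + 1 * t ^ 2 := by
  cases o with
  | none => simp [eN_sq, dir, co]; ring
  | some i =>
    simp only [eN_sq, dir, co, Prod.fst_add, Prod.snd_add, Prod.smul_fst, Prod.smul_snd]
    rw [norm_add_sq_real, norm_smul, inner_smul_right, EuclideanSpace.inner_single_right]
    simp; ring

/-- closed and open half-ball pieces -/
def cP {n : ℕ} (X0 : En n × ℝ) (R : ℝ) : Set (En n × ℝ) := {X | 0 ≤ X.2 ∧ eN (X - X0) ≤ R}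
def oP {n : ℕ} (X0 : En n × ℝ) (R : ℝ) : Set (En n × ℝ) := {X | 0 < X.2 ∧ eN (X - X0) < R}

lemma isOpen_oP {n : ℕ} (X0 : En n × ℝ) (R : ℝ) : IsOpen (oP X0 R) := by
  apply IsOpen.inter
  · exact isOpen_lt continuous_const continuous_snd
  · exact isOpen_lt (continuous_eN.comp (continuous_id.sub continuous_const)) continuous_const

lemma isCompact_cP {n : ℕ} (X0 : En n × ℝ) (R : ℝ) : IsCompact (cP X0 R) := by
  apply Metric.isCompact_of_isClosed_isBounded
  · apply IsClosed.inter
    · exact isClosed_le continuous_const continuous_snd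
    · exact isClosed_le (continuous_eN.comp (continuous_id.sub continuous_const)) continuous_const
  · apply (Metric.isBounded_closedBall (x := X0) (r := R)).subset
    intro X hX
    rw [Metric.mem_closedBall, dist_eq_norm]
    exact (norm_le_eN _).trans hX.2

lemma oP_sub_cP {n : ℕ} (X0 : En n × ℝ) (R : ℝ) : oP X0 R ⊆ cP X0 R :=
  fun _ hX => ⟨hX.1.le, hX.2.le⟩

lemma no_max {n : ℕ} {a : ℝ} {Φ : En n × ℝ → ℝ} {Z : En n × ℝ} (hm : IsLocalMax Φ Z)
    (d1 d2 : Option (Fin n) → ℝ) (hd : ∀ o, HasD2 (fun t => Φ (Z + t • dir o)) (d1 o) (d2 o))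
    (hpos : 0 < ∑ o, d2 o + a * d1 none) : False := by
  have key : ∀ o, d1 o = 0 ∧ d2 o ≤ 0 := by
    intro o
    apply (hd o).localMax
    have hc : ContinuousAt (fun t : ℝ => Z + t • (dir o : En n × ℝ)) 0 := by fun_prop
    have : Tendsto (fun t : ℝ => Z + t • (dir o : En n × ℝ)) (𝓝 0) (𝓝 Z) := by
      simpa [ContinuousAt] using hc
    have h2 := this.eventually hm
    simpa [IsLocalMax, IsMaxFilter] using h2
  have h1 : ∑ o, d2 o ≤ 0 := Finset.sum_nonpos fun o _ => (key o).2
  rw [(key none).1] at hpos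
  linarith

lemma hasD2_contDiff {n : ℕ} {u : En n × ℝ → ℝ} {X : En n × ℝ} (h : ContDiffAt ℝ 2 u X)
    (v : En n × ℝ) : HasD2 (fun t => u (X + t • v)) (fderiv ℝ u X v) (D2 u X v) := by
  have hline : ∀ t : ℝ, HasDerivAt (fun t : ℝ => X + t • v) v t := fun t => by
    simpa using ((hasDerivAt_id t).smul_const v).const_add X
  have hc : Tendsto (fun t : ℝ => X + t • v) (𝓝 0) (𝓝 X) := by
    simpa [ContinuousAt] using (hline 0).continuousAt
  refine ⟨fun t => fderiv ℝ u (X + t • v) v, ?_, by simp, ?_⟩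
  · have h1 : ∀ᶠ Y in 𝓝 X, ContDiffAt ℝ 2 u Y := h.eventually (by simp)
    filter_upwards [hc.eventually h1] with t ht
    exact (ht.differentiableAt (by simp)).hasFDerivAt.comp_hasDerivAt t (hline t)
  · have h2 : ContDiffAt ℝ 1 (fderiv ℝ u) X := h.fderiv_right (by norm_num)
    have h3 : DifferentiableAt ℝ (fun q => fderiv ℝ u q v) X :=
      (h2.differentiableAt (by simp)).clm_apply (differentiableAt_const v)
    have h4 : HasFDerivAt (fun q => fderiv ℝ u q v) (fderiv ℝ (fun q => fderiv ℝ u q v) X)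
      (X + (0:ℝ) • v) := by simpa using h3.hasFDerivAt
    exact h4.comp_hasDerivAt (0:ℝ) (hline 0)

/-- a-harmonic facts -/
lemma IsAHarmonicOn.mono {n : ℕ} {a : ℝ} {u : En n × ℝ → ℝ} {S T : Set (En n × ℝ)}
    (h : IsAHarmonicOn a u T) (hST : S ⊆ T) : IsAHarmonicOn a u S :=
  ⟨h.1.mono hST, fun p hp => h.2 p (hST hp)⟩

lemma D2_sub {n : ℕ} {u w : En n × ℝ → ℝ} {X : En n × ℝ} (hu : ContDiffAt ℝ 2 u X)
    (hw : ContDiffAt ℝ 2 w X) (v : En n × ℝ) :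
    D2 (fun Y => u Y - w Y) X v = D2 u X v - D2 w X v := by
  have e : (fun q => fderiv ℝ (fun Y => u Y - w Y) q v) =ᶠ[𝓝 X]
      fun q => fderiv ℝ u q v - fderiv ℝ w q v := by
    filter_upwards [hu.eventually (by simp), hw.eventually (by simp)] with q h1 h2
    rw [fderiv_fun_sub (h1.differentiableAt (by simp)) (h2.differentiableAt (by simp))]
    rfl
  have hd : ∀ {u : En n × ℝ → ℝ}, ContDiffAt ℝ 2 u X →
      DifferentiableAt ℝ (fun q => fderiv ℝ u q v) X := fun h =>
    ((h.fderiv_right (m := 1) (by norm_num)).differentiableAt (by simp)).clm_apply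
      (differentiableAt_const v)
  unfold D2
  rw [e.fderiv_eq, fderiv_fun_sub (hd hu) (hd hw)]
  rfl

lemma D2_shift {n : ℕ} (u : En n × ℝ → ℝ) (X h v : En n × ℝ) :
    D2 (fun Y => u (Y + h)) X v = D2 u (X + h) v := by
  unfold D2
  have : (fun q => fderiv ℝ (fun Y => u (Y + h)) q v) = fun q => fderiv ℝ u (q + h) v := by
    ext q; rw [fderiv_comp_add_right]
  rw [this, fderiv_comp_add_right (f := fun q => fderiv ℝ u q v)]

lemma IsAHarmonicOn.diff {n : ℕ} {a : ℝ} {u : En n × ℝ → ℝ} {T S : Set (En n × ℝ)}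
    (hT : IsOpen T) (h : IsAHarmonicOn a u T) (k : En n) (hS : IsOpen S) (hST : S ⊆ T)
    (hSk : ∀ X ∈ S, X + (k, 0) ∈ T) :
    IsAHarmonicOn a (fun X => u (X + (k, 0)) - u X) S := by
  have c1 : ∀ X ∈ S, ContDiffAt ℝ 2 u X := fun X hX =>
    h.1.contDiffAt (hT.mem_nhds (hST hX))
  have c2 : ∀ X ∈ S, ContDiffAt ℝ 2 (fun X => u (X + (k, 0))) X := fun X hX => by
    have h1 : ContDiffAt ℝ 2 u (X + (k, 0)) := h.1.contDiffAt (hT.mem_nhds (hSk X hX))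
    exact ContDiffAt.comp X h1 (by fun_prop)
  refine ⟨fun X hX => ((c2 X hX).sub (c1 X hX)).contDiffWithinAt, fun X hX => ?_⟩
  have e1 := h.2 X (hST hX)
  have e2 := h.2 _ (hSk X hX)
  rw [lap_eq] at *
  rw [fderiv_fun_sub ((c2 X hX).differentiableAt (by simp)) ((c1 X hX).differentiableAt (by simp)),
    fderiv_comp_add_right]
  simp only [D2_sub (c2 X hX) (c1 X hX), D2_shift, Finset.sum_sub_distrib,
    sub_apply]
  simp only [Prod.snd_add, add_zero] at e2
  linear_combination e2 - e1


lemma hasDerivAt_int {F F1 : ℝ → ℝ → ℝ} {δ t0 : ℝ} (ht0 : t0 ∈ Ioo (-δ) δ)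
    (cF : ContinuousOn (fun q : ℝ × ℝ => F q.1 q.2) (Icc (-δ) δ ×ˢ Icc 0 1))
    (cF1 : ContinuousOn (fun q : ℝ × ℝ => F1 q.1 q.2) (Icc (-δ) δ ×ˢ Icc 0 1))
    (hd : ∀ t ∈ Ioo (-δ) δ, ∀ τ ∈ Icc (0:ℝ) 1, HasDerivAt (fun t => F t τ) (F1 t τ) t) :
    HasDerivAt (fun t => ∫ τ in (0:ℝ)..1, F t τ) (∫ τ in (0:ℝ)..1, F1 t0 τ) t0 := by
  have hcomp : IsCompact (Icc (-δ) δ ×ˢ Icc (0:ℝ) 1) := isCompact_Icc.prod isCompact_Icc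
  obtain ⟨C, hC⟩ := hcomp.exists_bound_of_continuousOn cF1
  have sl : ∀ {G : ℝ → ℝ → ℝ}, ContinuousOn (fun q : ℝ × ℝ => G q.1 q.2) (Icc (-δ) δ ×ˢ Icc 0 1) →
      ∀ t ∈ Ioo (-δ) δ, ContinuousOn (G t) (Icc 0 1) := by
    intro G hG t ht
    exact hG.comp (f := fun τ : ℝ => (t, τ)) (by fun_prop)
      (fun τ hτ => ⟨⟨ht.1.le, ht.2.le⟩, hτ⟩)
  have hU : uIoc (0:ℝ) 1 ⊆ Icc 0 1 := by
    rw [uIoc_of_le zero_le_one]; exact Ioc_subset_Icc_self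
  have ms : ∀ {g : ℝ → ℝ}, ContinuousOn g (Icc 0 1) →
      AEStronglyMeasurable g (volume.restrict (uIoc (0:ℝ) 1)) := fun hg =>
    (hg.mono hU).aestronglyMeasurable measurableSet_uIoc
  refine (intervalIntegral.hasDerivAt_integral_of_dominated_loc_of_deriv_le
    (s := Ioo (-δ) δ) (bound := fun _ => C) (isOpen_Ioo.mem_nhds ht0) ?_ ?_ ?_ ?_ ?_ ?_).2
  · filter_upwards [isOpen_Ioo.mem_nhds ht0] with t ht using ms (sl cF t ht)
  · apply ContinuousOn.intervalIntegrable
    rw [uIcc_of_le zero_le_one]; exact sl cF t0 ht0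
  · exact ms (sl cF1 t0 ht0)
  · refine Eventually.of_forall fun τ hτ t ht => ?_
    exact hC (t, τ) ⟨⟨ht.1.le, ht.2.le⟩, hU hτ⟩
  · exact intervalIntegrable_const
  · exact Eventually.of_forall fun τ hτ t ht => hd t ht τ (hU hτ)

lemma hasD2_int {F F1 F2 : ℝ → ℝ → ℝ} {δ : ℝ} (hδ : 0 < δ)
    (cF : ContinuousOn (fun q : ℝ × ℝ => F q.1 q.2) (Icc (-δ) δ ×ˢ Icc 0 1))
    (cF1 : ContinuousOn (fun q : ℝ × ℝ => F1 q.1 q.2) (Icc (-δ) δ ×ˢ Icc 0 1))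
    (cF2 : ContinuousOn (fun q : ℝ × ℝ => F2 q.1 q.2) (Icc (-δ) δ ×ˢ Icc 0 1))
    (hd : ∀ t ∈ Ioo (-δ) δ, ∀ τ ∈ Icc (0:ℝ) 1, HasDerivAt (fun t => F t τ) (F1 t τ) t)
    (hd1 : ∀ t ∈ Ioo (-δ) δ, ∀ τ ∈ Icc (0:ℝ) 1, HasDerivAt (fun t => F1 t τ) (F2 t τ) t) :
    HasD2 (fun t => ∫ τ in (0:ℝ)..1, F t τ) (∫ τ in (0:ℝ)..1, F1 0 τ)
      (∫ τ in (0:ℝ)..1, F2 0 τ) := by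
  have h0 : (0:ℝ) ∈ Ioo (-δ) δ := ⟨by linarith, hδ⟩
  refine ⟨fun t => ∫ τ in (0:ℝ)..1, F1 t τ, ?_, rfl, hasDerivAt_int h0 cF1 cF2 hd1⟩
  filter_upwards [isOpen_Ioo.mem_nhds h0] with t ht using hasDerivAt_int ht cF cF1 hd

lemma grad_cs {n : ℕ} (φ : En n × ℝ →L[ℝ] ℝ) (h : En n) :
    φ (h, 0) ^ 2 ≤ ‖h‖ ^ 2 * ∑ o, φ (dir o) ^ 2 := by
  have e : φ (h, 0) = ∑ i, h i * φ (dir (some i)) := by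
    have : ((h, 0) : En n × ℝ) = ∑ i, h i • dir (some i) := by
      apply Prod.ext
      · rw [Prod.fst_sum]
        simp only [dir, Prod.smul_fst]
        ext j
        simp [Pi.single_apply]
      · rw [Prod.snd_sum]; simp [dir]
    rw [this, map_sum]; simp
  rw [e, Fintype.sum_option, EuclideanSpace.norm_sq_eq]
  refine (Finset.sum_mul_sq_le_sq_mul_sq _ _ _).trans ?_
  simp only [Real.norm_eq_abs, sq_abs]
  apply mul_le_mul_of_nonneg_left _ (by positivity)
  nlinarith [sq_nonneg (φ (dir none))]

/-- derivative data along lines in an open set -/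
lemma line_deriv {n : ℕ} {u : En n × ℝ → ℝ} {Ω : Set (En n × ℝ)} (hΩ : IsOpen Ω)
    (hu : ContDiffOn ℝ 2 u Ω) {Y v : En n × ℝ} {t : ℝ} (ht : Y + t • v ∈ Ω) :
    HasDerivAt (fun t => u (Y + t • v)) (fderiv ℝ u (Y + t • v) v) t ∧
    HasDerivAt (fun t => fderiv ℝ u (Y + t • v) v) (D2 u (Y + t • v) v) t := by
  have hline : HasDerivAt (fun t : ℝ => Y + t • v) v t := by
    simpa using ((hasDerivAt_id t).smul_const v).const_add Y
  have h : ContDiffAt ℝ 2 u (Y + t • v) := hu.contDiffAt (hΩ.mem_nhds ht)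
  constructor
  · exact (h.differentiableAt (by simp)).hasFDerivAt.comp_hasDerivAt t hline
  · have h2 : ContDiffAt ℝ 1 (fderiv ℝ u) (Y + t • v) := h.fderiv_right (by norm_num)
    have h3 : DifferentiableAt ℝ (fun q => fderiv ℝ u q v) (Y + t • v) :=
      (h2.differentiableAt (by simp)).clm_apply (differentiableAt_const v)
    exact h3.hasFDerivAt.comp_hasDerivAt t hline

lemma cont_fderiv {n : ℕ} {u : En n × ℝ → ℝ} {Ω : Set (En n × ℝ)} (hΩ : IsOpen Ω)
    (hu : ContDiffOn ℝ 2 u Ω) (v : En n × ℝ) :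
    ContinuousOn (fun q => fderiv ℝ u q v) Ω ∧ ContinuousOn (fun q => D2 u q v) Ω := by
  have h1 : ContDiffOn ℝ 1 (fderiv ℝ u) Ω := hu.fderiv_of_isOpen hΩ (by norm_num)
  have h2 : ContDiffOn ℝ 1 (fun q => fderiv ℝ u q v) Ω := h1.clm_apply contDiffOn_const
  refine ⟨h2.continuousOn, ?_⟩
  exact (h2.continuousOn_fderiv_of_isOpen hΩ (by norm_num)).clm_apply continuousOn_const

lemma jensen_int {G : ℝ → ℝ} (hG : ContinuousOn G (Icc 0 1)) :
    (∫ τ in (0:ℝ)..1, G τ) ^ 2 ≤ ∫ τ in (0:ℝ)..1, G τ ^ 2 := by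
  set W := ∫ τ in (0:ℝ)..1, G τ with hW
  have i1 : IntervalIntegrable G volume 0 1 := by
    apply ContinuousOn.intervalIntegrable; rwa [uIcc_of_le zero_le_one]
  have i2 : IntervalIntegrable (fun τ => G τ ^ 2) volume 0 1 := by
    apply ContinuousOn.intervalIntegrable; rw [uIcc_of_le zero_le_one]; exact hG.pow 2
  have h0 : 0 ≤ ∫ τ in (0:ℝ)..1, (G τ ^ 2 - 2 * W * G τ + W ^ 2) := by
    apply intervalIntegral.integral_nonneg zero_le_one
    intro τ _; nlinarith [sq_nonneg (G τ - W)]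
  rw [intervalIntegral.integral_add (i2.sub (i1.const_mul _)) intervalIntegrable_const,
    intervalIntegral.integral_sub i2 (i1.const_mul _), intervalIntegral.integral_const_mul,
    ← hW] at h0
  simp at h0
  nlinarith

/-- The averaged square and its derivatives. -/
lemma T_data {n : ℕ} {a : ℝ} {u : En n × ℝ → ℝ} {Ω : Set (En n × ℝ)} (hΩ : IsOpen Ω)
    (hu : IsAHarmonicOn a u Ω) {Z : En n × ℝ} {h : En n} {δ : ℝ} (hδ : 0 < δ)
    (hin : ∀ o : Option (Fin n), ∀ t ∈ Icc (-δ) δ, ∀ τ ∈ Icc (0:ℝ) 1,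
      Z + τ • ((h, 0) : En n × ℝ) + t • dir o ∈ Ω) :
    ∃ T1 T2 : Option (Fin n) → ℝ,
      (∀ o, HasD2 (fun t => ∫ τ in (0:ℝ)..1, u (Z + t • dir o + τ • ((h, 0) : En n × ℝ)) ^ 2)
        (T1 o) (T2 o)) ∧
      2 * (u (Z + (h, 0)) - u Z) ^ 2 ≤ ‖h‖ ^ 2 * (∑ o, T2 o + a / Z.2 * T1 none) := by
  set hv : En n × ℝ := (h, 0) with hhv
  have cseg : ∀ (o : Option (Fin n)) {G : En n × ℝ → ℝ}, ContinuousOn G Ω →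
      ContinuousOn (fun q : ℝ × ℝ => G (Z + q.2 • hv + q.1 • dir o)) (Icc (-δ) δ ×ˢ Icc 0 1) := by
    intro o G hG
    exact hG.comp (by fun_prop) (fun q hq => hin o q.1 hq.1 q.2 hq.2)
  have h00 : (0:ℝ) ∈ Icc (-δ) δ := ⟨by linarith, hδ.le⟩
  have hin0 : ∀ τ ∈ Icc (0:ℝ) 1, Z + τ • hv ∈ Ω := by
    intro τ hτ; simpa using hin none 0 h00 τ hτ
  have c0 : ∀ {G : En n × ℝ → ℝ}, ContinuousOn G Ω →
      ContinuousOn (fun τ : ℝ => G (Z + τ • hv)) (Icc 0 1) := by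
    intro G hG
    exact hG.comp (by fun_prop) (fun q hq => hin0 q hq)
  have ii : ∀ {g : ℝ → ℝ}, ContinuousOn g (Icc 0 1) → IntervalIntegrable g volume 0 1 := by
    intro g hg; apply ContinuousOn.intervalIntegrable; rwa [uIcc_of_le zero_le_one]
  have cu : ContinuousOn u Ω := hu.1.continuousOn
  have cd : ∀ v, ContinuousOn (fun q => fderiv ℝ u q v) Ω := fun v => (cont_fderiv hΩ hu.1 v).1
  have cdd : ∀ v, ContinuousOn (fun q => D2 u q v) Ω := fun v => (cont_fderiv hΩ hu.1 v).2
  refine ⟨fun o => ∫ τ in (0:ℝ)..1, 2 * u (Z + τ • hv) * fderiv ℝ u (Z + τ • hv) (dir o),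
    fun o => ∫ τ in (0:ℝ)..1, (2 * fderiv ℝ u (Z + τ • hv) (dir o) ^ 2
      + 2 * u (Z + τ • hv) * D2 u (Z + τ • hv) (dir o)), ?_, ?_⟩
  · intro o
    have := hasD2_int (F := fun t τ => u (Z + τ • hv + t • dir o) ^ 2)
      (F1 := fun t τ => 2 * u (Z + τ • hv + t • dir o) * fderiv ℝ u (Z + τ • hv + t • dir o) (dir o))
      (F2 := fun t τ => 2 * fderiv ℝ u (Z + τ • hv + t • dir o) (dir o) ^ 2
        + 2 * u (Z + τ • hv + t • dir o) * D2 u (Z + τ • hv + t • dir o) (dir o)) hδ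
      ((cseg o cu).pow 2)
      (((cseg o cu).const_mul 2).mul (cseg o (cd (dir o))))
      ((((cseg o (cd (dir o))).pow 2).const_mul 2).add
        (((cseg o cu).const_mul 2).mul (cseg o (cdd (dir o))))) ?_ ?_
    · have e : (fun t : ℝ => ∫ τ in (0:ℝ)..1, u (Z + t • dir o + τ • hv) ^ 2) =
          fun t : ℝ => ∫ τ in (0:ℝ)..1, u (Z + τ • hv + t • dir o) ^ 2 := by
        ext t; congr 1; ext τ; rw [add_right_comm]
      rw [e]
      simpa using this
    · intro t ht τ hτ
      have := (line_deriv hΩ hu.1 (hin o t (Ioo_subset_Icc_self ht) τ hτ)).1.fun_pow 2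
      refine this.congr_deriv ?_
      simp
    · intro t ht τ hτ
      have h1 := (line_deriv hΩ hu.1 (hin o t (Ioo_subset_Icc_self ht) τ hτ))
      refine ((h1.1.const_mul 2).mul h1.2).congr_deriv ?_
      ring
  · have hsum : ∑ o, (∫ τ in (0:ℝ)..1, (2 * fderiv ℝ u (Z + τ • hv) (dir o) ^ 2
      + 2 * u (Z + τ • hv) * D2 u (Z + τ • hv) (dir o))) + a / Z.2 *
        ∫ τ in (0:ℝ)..1, 2 * u (Z + τ • hv) * fderiv ℝ u (Z + τ • hv) (dir none)
        = ∫ τ in (0:ℝ)..1, 2 * ∑ o, fderiv ℝ u (Z + τ • hv) (dir o) ^ 2 := by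
      have ic : ∀ o, IntervalIntegrable (fun τ => (2 * fderiv ℝ u (Z + τ • hv) (dir o) ^ 2
          + 2 * u (Z + τ • hv) * D2 u (Z + τ • hv) (dir o))) volume 0 1 := fun o =>
        ii ((((c0 (cd (dir o))).pow 2).const_mul 2).add
          (((c0 cu).const_mul 2).mul (c0 (cdd (dir o)))))
      have ic1 : IntervalIntegrable (fun τ => a / Z.2 * (2 * u (Z + τ • hv) *
          fderiv ℝ u (Z + τ • hv) (dir none))) volume 0 1 :=
        ii ((((c0 cu).const_mul 2).mul (c0 (cd (dir none)))).const_mul _)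
      rw [← intervalIntegral.integral_finsetSum (fun o _ => ic o),
        ← intervalIntegral.integral_const_mul, ← intervalIntegral.integral_add _ ic1]
      · apply intervalIntegral.integral_congr
        intro τ hτ
        rw [uIcc_of_le zero_le_one] at hτ
        have e := hu.2 _ (hin0 τ hτ)
        rw [lap_eq] at e
        have e2 : (Z + τ • hv).2 = Z.2 := by simp [hhv]
        rw [e2] at e
        simp only [Finset.sum_add_distrib, ← Finset.mul_sum]
        change _ + a / Z.2 * fderiv ℝ u (Z + τ • hv) (dir none) = 0 at e
        linear_combination (2 * u (Z + τ • hv)) * e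
      · have := IntervalIntegrable.sum (μ := volume) Finset.univ (fun o _ => ic o)
        refine this.congr ?_
        intro τ _; simp
    rw [hsum]
    have ftc : ∫ τ in (0:ℝ)..1, fderiv ℝ u (Z + τ • hv) hv = u (Z + hv) - u Z := by
      have := intervalIntegral.integral_eq_sub_of_hasDerivAt (a := 0) (b := 1)
        (f := fun τ : ℝ => u (Z + τ • hv)) (f' := fun τ => fderiv ℝ u (Z + τ • hv) hv)
        (fun τ hτ => by
          rw [uIcc_of_le zero_le_one] at hτ
          exact (line_deriv hΩ hu.1 (hin0 τ hτ)).1) (ii (c0 (cd hv)))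
      simpa using this
    rw [← ftc]
    have j := jensen_int (c0 (cd hv))
    have : ∫ τ in (0:ℝ)..1, fderiv ℝ u (Z + τ • hv) hv ^ 2 ≤
        ∫ τ in (0:ℝ)..1, ‖h‖ ^ 2 * ∑ o, fderiv ℝ u (Z + τ • hv) (dir o) ^ 2 := by
      apply intervalIntegral.integral_mono_on zero_le_one (ii ((c0 (cd hv)).pow 2))
      · apply ii
        apply ContinuousOn.const_mul
        exact continuousOn_finsetSum _ fun o _ => (c0 (cd (dir o))).pow 2
      · intro τ _; exact grad_cs _ h
    rw [intervalIntegral.integral_const_mul] at this ⊢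
    linarith


lemma bern_alg {ι : Type*} [Fintype ι] (η w b : ℝ) (η1 η2 w1 w2 : ι → ℝ) (o0 : ι)
    (hw : ∑ o, w2 o + b * w1 o0 = 0) :
    -6 * w ^ 2 * ∑ o, η1 o ^ 2 + 2 * η * w ^ 2 * (∑ o, η2 o + b * η1 o0) ≤
      ∑ o, ((η2 o * w + 2 * η1 o * w1 o + η * w2 o) * (η * w)
        + 2 * (η1 o * w + η * w1 o) * (η1 o * w + η * w1 o)
        + (η * w) * (η2 o * w + 2 * η1 o * w1 o + η * w2 o))
      + b * ((η1 o0 * w + η * w1 o0) * (η * w) + (η * w) * (η1 o0 * w + η * w1 o0)) := by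
  have h1 : ∑ o, (-6 * w ^ 2 * η1 o ^ 2 + 2 * η * w ^ 2 * η2 o + 2 * η ^ 2 * w * w2 o) ≤
      ∑ o, ((η2 o * w + 2 * η1 o * w1 o + η * w2 o) * (η * w)
        + 2 * (η1 o * w + η * w1 o) * (η1 o * w + η * w1 o)
        + (η * w) * (η2 o * w + 2 * η1 o * w1 o + η * w2 o)) := by
    apply Finset.sum_le_sum
    intro o _
    nlinarith [sq_nonneg (η * w1 o + 2 * η1 o * w)]
  refine le_trans (le_of_eq ?_) (add_le_add_left h1 _)
  simp only [Finset.sum_add_distrib, ← Finset.mul_sum]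
  have : 2 * η ^ 2 * w * (∑ o, w2 o + b * w1 o0) = 0 := by rw [hw]; ring
  linear_combination -this

set_option maxHeartbeats 2000000 in
lemma tang_lip {n : ℕ} {a : ℝ} (ha : 0 ≤ a) (ha1 : a ≤ 1) {u : En n × ℝ → ℝ} {X0 : En n × ℝ}
    {r K M : ℝ} (hr : 0 < r) (hy : 0 ≤ X0.2) {h : En n} (hh : ‖h‖ ≤ r)
    (hc : ContinuousOn u (cP X0 (2 * r))) (hu : IsAHarmonicOn a u (oP X0 (2 * r)))
    (hK : ∀ X ∈ cP X0 (2 * r), |u X| ≤ K) (hM0 : 0 ≤ M)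
    (hM : ∀ x : En n, (x, 0) ∈ cP X0 (2 * r) → (x + h, 0) ∈ cP X0 (2 * r) →
      |u (x + h, 0) - u (x, 0)| ≤ M * ‖h‖) :
    |u (X0 + (h, 0)) - u X0| ≤ (M + (n + 4) * K / r) * ‖h‖ := by
  have X0mem : X0 ∈ cP X0 r := ⟨hy, by simp [eN_zero, hr.le]⟩
  have hsub : ∀ X ∈ cP X0 r, ∀ τ ∈ Icc (0:ℝ) 1, X + τ • ((h, 0) : En n × ℝ) ∈ cP X0 (2 * r) := by
    intro X hX τ hτ
    refine ⟨by simpa using hX.1, ?_⟩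
    have e : X + τ • ((h, 0) : En n × ℝ) - X0 = (X - X0) + τ • (h, 0) := by abel
    rw [e]
    refine (eN_add _ _).trans ?_
    rw [eN_smul, eN_hor, abs_of_nonneg hτ.1]
    have := hX.2
    nlinarith [hτ.2, hτ.1, norm_nonneg h]
  have hsub1 : ∀ X ∈ cP X0 r, X + (h, 0) ∈ cP X0 (2 * r) := fun X hX => by
    simpa using hsub X hX 1 ⟨zero_le_one, le_rfl⟩
  have hsub0 : ∀ X ∈ cP X0 r, X ∈ cP X0 (2 * r) := fun X hX => by
    simpa using hsub X hX 0 ⟨le_rfl, zero_le_one⟩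
  have hK0 : 0 ≤ K := (abs_nonneg _).trans (hK X0 (hsub0 X0 X0mem))
  set η : En n × ℝ → ℝ := fun X => 1 - eN (X - X0) ^ 2 / r ^ 2 with hη
  set W : En n × ℝ → ℝ := fun X => u (X + (h, 0)) - u X with hW
  set T : En n × ℝ → ℝ := fun X => ∫ τ in (0:ℝ)..1, u (X + τ • ((h, 0) : En n × ℝ)) ^ 2 with hT
  set l : ℝ := (n + 4) ^ 2 / r ^ 2 * ‖h‖ ^ 2 with hl
  have hl0 : 0 ≤ l := by positivity
  have hWh : IsAHarmonicOn a W (oP X0 r) := by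
    apply hu.diff (isOpen_oP _ _) h (isOpen_oP _ _)
    · intro X hX; exact ⟨hX.1, by linarith [hX.2]⟩
    · intro X hX
      refine ⟨by simpa using hX.1, ?_⟩
      have e : X + ((h, 0) : En n × ℝ) - X0 = (X - X0) + (h, 0) := by abel
      rw [e]
      refine (eN_add _ _).trans_lt ?_
      rw [eN_hor]; linarith [hX.2]
  -- continuity
  have cW : ContinuousOn W (cP X0 r) :=
    (hc.comp (by fun_prop) hsub1).sub (hc.mono hsub0)
  have cη : Continuous η := by
    have := (continuous_eN (n := n))
    simp only [hη]; fun_prop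
  have cT : ContinuousOn T (cP X0 r) := by
    intro X hX
    apply intervalIntegral.continuousWithinAt_of_dominated_interval (bound := fun _ => K ^ 2)
    · filter_upwards [self_mem_nhdsWithin] with Y hY
      rw [uIoc_of_le zero_le_one]
      apply ContinuousOn.aestronglyMeasurable _ measurableSet_Ioc
      refine (hc.comp (by fun_prop) fun τ hτ => ?_).pow 2
      exact hsub Y hY τ ⟨hτ.1.le, hτ.2⟩
    · filter_upwards [self_mem_nhdsWithin] with Y hY
      refine Eventually.of_forall fun τ hτ => ?_
      rw [uIoc_of_le zero_le_one] at hτ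
      have := hK _ (hsub Y hY τ ⟨hτ.1.le, hτ.2⟩)
      rw [Real.norm_eq_abs, abs_of_nonneg (sq_nonneg _), ← sq_abs]
      exact pow_le_pow_left₀ (abs_nonneg _) this 2
    · exact intervalIntegrable_const
    · refine Eventually.of_forall fun τ hτ => ?_
      rw [uIoc_of_le zero_le_one] at hτ
      have : ContinuousOn (fun Y => u (Y + τ • ((h, 0) : En n × ℝ)) ^ 2) (cP X0 r) :=
        (hc.comp (by fun_prop) fun Y hY => hsub Y hY τ ⟨hτ.1.le, hτ.2⟩).pow 2
      exact this X hX
  have hTb : ∀ X ∈ cP X0 r, T X ≤ K ^ 2 := by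
    intro X hX
    have : T X ≤ ∫ τ in (0:ℝ)..1, K ^ 2 := by
      apply intervalIntegral.integral_mono_on zero_le_one
      · apply ContinuousOn.intervalIntegrable
        rw [uIcc_of_le zero_le_one]
        exact (hc.comp (by fun_prop) fun τ hτ => hsub X hX τ hτ).pow 2
      · exact intervalIntegrable_const
      · intro τ hτ
        rw [← sq_abs]
        exact pow_le_pow_left₀ (abs_nonneg _) (hK _ (hsub X hX τ hτ)) 2
    simpa using this
  have hT0 : ∀ X, 0 ≤ T X := fun X =>
    intervalIntegral.integral_nonneg zero_le_one fun τ _ => sq_nonneg _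
  have hη01 : ∀ X ∈ cP X0 r, 0 ≤ η X ∧ η X ≤ 1 := by
    intro X hX
    have h1 : eN (X - X0) ^ 2 ≤ r ^ 2 := pow_le_pow_left₀ (eN_nonneg _) hX.2 2
    have h2 : eN (X - X0) ^ 2 / r ^ 2 ≤ 1 := (div_le_one (by positivity)).2 h1
    have h3 : 0 ≤ eN (X - X0) ^ 2 / r ^ 2 := by positivity
    constructor <;> simp only [hη] <;> linarith
  -- the main bound with ε
  have main : ∀ ε > 0, W X0 ^ 2 ≤ M ^ 2 * ‖h‖ ^ 2 + l * K ^ 2 + ε * (X0.2 + r) ^ 2 := by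
    intro ε hε
    set Φ : En n × ℝ → ℝ := fun X => (η X * W X) * (η X * W X) + l * T X + ε * X.2 ^ 2 with hΦ
    have cΦ : ContinuousOn Φ (cP X0 r) := by
      have c1 : ContinuousOn η (cP X0 r) := cη.continuousOn
      exact ((((c1.mul cW).mul (c1.mul cW))).add (cT.const_mul _)).add
        (by fun_prop : Continuous fun X : En n × ℝ => ε * X.2 ^ 2).continuousOn
    obtain ⟨Z, hZ, hmax⟩ := (isCompact_cP X0 r).exists_isMaxOn ⟨X0, X0mem⟩ cΦ
    have hX0 : Φ X0 ≤ Φ Z := hmax X0mem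
    have hη0 : η X0 = 1 := by simp [hη, eN_zero]
    have hlow : W X0 ^ 2 ≤ Φ X0 := by
      simp only [hΦ, hη0]
      have := hT0 X0
      nlinarith [mul_nonneg hl0 this, mul_nonneg hε.le (sq_nonneg X0.2)]
    have hZy : Z.2 ≤ X0.2 + r := by
      have h1 := snd_le_eN (Z - X0)
      have h2 := (le_abs_self _).trans (h1.trans hZ.2)
      simp only [Prod.snd_sub] at h2
      linarith
    have hZy2 : ε * Z.2 ^ 2 ≤ ε * (X0.2 + r) ^ 2 :=
      mul_le_mul_of_nonneg_left (pow_le_pow_left₀ hZ.1 hZy 2) hε.le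
    have hTZ : l * T Z ≤ l * K ^ 2 := mul_le_mul_of_nonneg_left (hTb Z hZ) hl0
    suffices hs : (η Z * W Z) * (η Z * W Z) ≤ M ^ 2 * ‖h‖ ^ 2 by
      have : Φ Z ≤ M ^ 2 * ‖h‖ ^ 2 + l * K ^ 2 + ε * (X0.2 + r) ^ 2 := by
        simp only [hΦ]; linarith
      linarith
    rcases hZ.1.eq_or_lt with hz | hz
    · -- flat boundary
      have e : Z = (Z.1, 0) := Prod.ext rfl hz.symm
      have e1 : (Z.1 + h, (0:ℝ)) = Z + (h, 0) := by rw [e]; simp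
      have b := hM Z.1 (by rw [← e]; exact hsub0 Z hZ) (by rw [e1]; exact hsub1 Z hZ)
      rw [e1, ← e] at b
      have hw2 : W Z ^ 2 ≤ M ^ 2 * ‖h‖ ^ 2 := by
        rw [← sq_abs, ← mul_pow]; exact pow_le_pow_left₀ (abs_nonneg _) b 2
      have hh2 : η Z ^ 2 ≤ 1 := pow_le_one₀ (hη01 Z hZ).1 (hη01 Z hZ).2
      nlinarith [sq_nonneg (W Z)]
    rcases hZ.2.eq_or_lt with hzr | hzr
    · have : η Z = 0 := by
        simp only [hη]; rw [hzr, div_self (by positivity)]; ring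
      rw [this]; nlinarith [sq_nonneg (M * ‖h‖)]
    · exfalso
      have hZo : Z ∈ oP X0 r := ⟨hz, hzr⟩
      have hloc : IsLocalMax Φ Z := by
        filter_upwards [(isOpen_oP X0 r).mem_nhds hZo] with Y hY
        exact hmax (oP_sub_cP _ _ hY)
      set δ : ℝ := min (Z.2 / 2) ((r - eN (Z - X0)) / 2) with hδ
      have hδ0 : 0 < δ := lt_min (by linarith) (by linarith)
      obtain ⟨T1, T2, hTd, hTin⟩ := T_data (isOpen_oP X0 (2 * r)) hu (Z := Z) (h := h) hδ0 (by
        intro o t ht τ hτ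
        have hta : |t| ≤ δ := abs_le.2 ht
        constructor
        · have h1 : |(t • (dir o : En n × ℝ)).2| ≤ |t| := by
            have := snd_le_eN (t • (dir o : En n × ℝ))
            rwa [eN_smul, eN_dir, mul_one] at this
          have h2 : δ ≤ Z.2 / 2 := min_le_left _ _
          have h3 := neg_abs_le (t • (dir o : En n × ℝ)).2
          have e : (Z + τ • ((h, 0) : En n × ℝ) + t • dir o).2 = Z.2 + (t • (dir o : En n × ℝ)).2 := by
            simp
          rw [e]; linarith
        · have e : Z + τ • ((h, 0) : En n × ℝ) + t • dir o - X0
            = (Z - X0) + τ • (h, 0) + t • dir o := by abel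
          rw [e]
          refine (eN_add _ _).trans_lt ?_
          have := eN_add (Z - X0) (τ • ((h, 0) : En n × ℝ))
          rw [eN_smul, eN_hor, abs_of_nonneg hτ.1] at this
          rw [eN_smul, eN_dir]
          have h2 : δ ≤ (r - eN (Z - X0)) / 2 := min_le_right _ _
          nlinarith [hτ.2, hτ.1, norm_nonneg h])
      have hWc : ContDiffAt ℝ 2 W Z := hWh.1.contDiffAt ((isOpen_oP X0 r).mem_nhds hZo)
      have hWd := fun o => hasD2_contDiff hWc (dir o)
      have hWe := hWh.2 Z hZo
      rw [lap_eq] at hWe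
      change _ + _ * fderiv ℝ W Z (dir none) = 0 at hWe
      -- η
      have hηd : ∀ o, HasD2 (fun t => η (Z + t • dir o)) (-(2 * co o (Z - X0) / r ^ 2))
          (-(2 / r ^ 2)) := by
        intro o
        have := hasD2_quad (1 - eN (Z - X0) ^ 2 / r ^ 2) (-(2 * co o (Z - X0) / r ^ 2)) (-(1 / r ^ 2))
        have e : (fun t => η (Z + t • dir o)) = fun t => (1 - eN (Z - X0) ^ 2 / r ^ 2)
            + (-(2 * co o (Z - X0) / r ^ 2)) * t + (-(1 / r ^ 2)) * t ^ 2 := by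
          ext t
          simp only [hη]
          have : Z + t • dir o - X0 = (Z - X0) + t • dir o := by abel
          rw [this, eN_sq_line]; ring
        rw [e]
        exact this.congr_val rfl (by ring)
      have hyd : ∀ o : Option (Fin n), HasD2 (fun t => (Z + t • dir o).2 ^ 2)
          (2 * Z.2 * co o ((0:En n), (1:ℝ))) (2 * co o ((0:En n), (1:ℝ)) ^ 2) := by
        intro o
        have := hasD2_quad (Z.2 ^ 2) (2 * Z.2 * co o ((0:En n), (1:ℝ))) (co o ((0:En n), (1:ℝ)) ^ 2)
        have e : (fun t => (Z + t • dir o).2 ^ 2) = fun t => (Z.2 ^ 2) + (2 * Z.2 * co o ((0:En n), (1:ℝ))) * t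
           + (co o ((0:En n), (1:ℝ)) ^ 2) * t ^ 2 := by
          ext t; cases o <;> simp [dir, co] ; ring
        rw [e]; exact this
      have hall := fun o => ((((hηd o).mul (hWd o)).mul ((hηd o).mul (hWd o))).add
        ((hTd o).const_mul l)).add ((hyd o).const_mul ε)
      refine no_max (a := a / Z.2) hloc _ _ hall ?_
      simp only [zero_smul, add_zero]
      have alg := bern_alg (η Z) (W Z) (a / Z.2) (fun o => -(2 * co o (Z - X0) / r ^ 2))
        (fun _ => -(2 / r ^ 2)) (fun o => fderiv ℝ W Z (dir o)) (fun o => D2 W Z (dir o)) none hWe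
      beta_reduce at alg
      rw [Finset.sum_add_distrib, Finset.sum_add_distrib, ← Finset.mul_sum, ← Finset.mul_sum,
        ← Finset.mul_sum]
      have s1 : ∑ o : Option (Fin n), (-(2 * co o (Z - X0) / r ^ 2)) ^ 2
          = 4 * eN (Z - X0) ^ 2 / r ^ 4 := by
        rw [eN_sq_sum, Finset.mul_sum, Finset.sum_div]
        apply Finset.sum_congr rfl; intro o _; field_simp; ring
      have s2 : ∑ o : Option (Fin n), (-(2 / r ^ 2)) = -(2 * (n + 1) / r ^ 2) := by
        simp; ring
      have s3 : ∑ o : Option (Fin n), co o ((0:En n), (1:ℝ)) ^ 2 = 1 := by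
        rw [← eN_sq_sum, eN_ver]; simp
      have s4 : co none ((0:En n), (1:ℝ)) = 1 := rfl
      have s5 : co none (Z - X0) = Z.2 - X0.2 := rfl
      rw [s1, s2] at alg
      rw [s3, s4]
      generalize hA : ∑ o, ((-(2 / r ^ 2) * W Z + 2 * -(2 * co o (Z - X0) / r ^ 2) *
        (fderiv ℝ W Z) (dir o) + η Z * D2 W Z (dir o)) * (η Z * W Z)
        + 2 * (-(2 * co o (Z - X0) / r ^ 2) * W Z + η Z * (fderiv ℝ W Z) (dir o)) *
          (-(2 * co o (Z - X0) / r ^ 2) * W Z + η Z * (fderiv ℝ W Z) (dir o))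
        + (η Z * W Z) * (-(2 / r ^ 2) * W Z + 2 * -(2 * co o (Z - X0) / r ^ 2) *
        (fderiv ℝ W Z) (dir o) + η Z * D2 W Z (dir o))) = A at alg ⊢
      generalize hB : (-(2 * co none (Z - X0) / r ^ 2) * W Z + η Z * (fderiv ℝ W Z) (dir none)) *
        (η Z * W Z) + (η Z * W Z) * (-(2 * co none (Z - X0) / r ^ 2) * W Z +
          η Z * (fderiv ℝ W Z) (dir none)) = B at alg ⊢
      rw [s5] at alg
      clear hA hB hall hηd hyd hWd hTd hWe hmax hloc cΦ
      have hηZ := hη01 Z hZ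
      have low1 : 4 * eN (Z - X0) ^ 2 / r ^ 4 ≤ 4 / r ^ 2 := by
        have h1 : eN (Z - X0) ^ 2 ≤ r ^ 2 := pow_le_pow_left₀ (eN_nonneg _) hZ.2 2
        rw [div_le_div_iff₀ (by positivity) (by positivity)]
        nlinarith [sq_nonneg r, sq_nonneg (r^2)]
      have low2 : -(2 * (n + 2) / r ^ 2) ≤ -(2 * (n + 1) / r ^ 2) + a / Z.2 * -(2 * (Z.2 - X0.2) / r ^ 2) := by
        have e : a / Z.2 * -(2 * (Z.2 - X0.2) / r ^ 2) = (2 * a * (X0.2 / Z.2) - 2 * a) / r ^ 2 := by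
          field_simp; ring
        rw [e, ← neg_div, ← neg_div, ← add_div]
        apply div_le_div_of_nonneg_right _ (by positivity)
        have : 0 ≤ a * (X0.2 / Z.2) := by positivity
        linarith
      have hw2 := sq_nonneg (W Z)
      have q1 : -6 * W Z ^ 2 * (4 / r ^ 2) ≤ -6 * W Z ^ 2 * (4 * eN (Z - X0) ^ 2 / r ^ 4) := by
        nlinarith
      have q2 : -(2 * W Z ^ 2 * (2 * (n + 2) / r ^ 2)) ≤ 2 * η Z * W Z ^ 2 * (-(2 * (n + 1) / r ^ 2) + a / Z.2 * -(2 * (Z.2 - X0.2) / r ^ 2)) := by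
        have g1 : 2 * η Z * W Z ^ 2 * (-(2 * (n + 2) / r ^ 2)) ≤ 2 * η Z * W Z ^ 2 * (-(2 * (n + 1) / r ^ 2) + a / Z.2 * -(2 * (Z.2 - X0.2) / r ^ 2)) :=
          mul_le_mul_of_nonneg_left low2 (by have := hηZ.1; positivity)
        have g2 : η Z * (2 * W Z ^ 2 * (2 * (n + 2) / r ^ 2)) ≤ 1 * (2 * W Z ^ 2 * (2 * (n + 2) / r ^ 2)) :=
          mul_le_mul_of_nonneg_right hηZ.2 (by positivity)
        linarith
      have q3 : (n + 4 : ℝ) ^ 2 / r ^ 2 * (2 * W Z ^ 2) ≤ l * (∑ o, T2 o + a / Z.2 * T1 none) := by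
        rw [hl, mul_assoc]
        exact mul_le_mul_of_nonneg_left hTin (by positivity)
      have q4 : 0 ≤ (n + 4 : ℝ) ^ 2 / r ^ 2 * (2 * W Z ^ 2) + -6 * W Z ^ 2 * (4 / r ^ 2) +
         -(2 * W Z ^ 2 * (2 * (n + 2) / r ^ 2)) := by
        have : (n + 4 : ℝ) ^ 2 / r ^ 2 * (2 * W Z ^ 2) + -6 * W Z ^ 2 * (4 / r ^ 2) +
         -(2 * W Z ^ 2 * (2 * (n + 2) / r ^ 2)) = (W Z ^ 2 / r ^ 2) * (2 * (n + 4) ^ 2 - 24 - 4 * (n + 2)) := by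
          ring
        rw [this]
        have hn : (0:ℝ) ≤ n := Nat.cast_nonneg n
        apply mul_nonneg (by positivity)
        nlinarith
      have q5 : a / Z.2 * (ε * (2 * Z.2 * 1)) = 2 * a * ε := by field_simp
      have q6 : 0 ≤ 2 * a * ε := by positivity
      rw [mul_add, mul_add, q5]
      linarith
  -- conclude
  have fin : W X0 ^ 2 ≤ M ^ 2 * ‖h‖ ^ 2 + l * K ^ 2 := by
    apply le_of_forall_pos_le_add
    intro ε hε
    have hp : 0 < (X0.2 + r) ^ 2 := by positivity
    have := main (ε / (X0.2 + r) ^ 2) (by positivity)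
    rwa [div_mul_cancel₀ _ hp.ne'] at this
  have : W X0 ^ 2 ≤ ((M + (n + 4) * K / r) * ‖h‖) ^ 2 := by
    refine fin.trans ?_
    have e : ((M + (n + 4) * K / r) * ‖h‖) ^ 2 = M ^ 2 * ‖h‖ ^ 2 + l * K ^ 2
      + 2 * M * ((n + 4) * K / r) * ‖h‖ ^ 2 := by
      rw [hl]; ring
    rw [e]
    have : 0 ≤ 2 * M * ((n + 4) * K / r) * ‖h‖ ^ 2 := by positivity
    linarith
  exact abs_le_of_sq_le_sq this (by positivity)


/-! ### Tangential estimates -/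

structure Dat (n : ℕ) (a : ℝ) (u : En n × ℝ → ℝ) (M1 M2 : ℝ) : Prop where
  a0 : 0 < a
  a1 : a < 1
  c : ContinuousOn u (halfBallWithBase n 1)
  h : IsAHarmonicOn a u (halfBall n 1)
  m1 : 0 ≤ M1
  m2 : 0 ≤ M2
  t1 : ∀ x h : En n, ‖x‖ < 1 → ‖x + h‖ < 1 → |u (x + h, 0) - u (x, 0)| ≤ M1 * ‖h‖
  t2 : ∀ x h k : En n, ‖x‖ < 1 → ‖x + h‖ < 1 → ‖x + k‖ < 1 → ‖x + k + h‖ < 1 →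
    |(u (x + k + h, 0) - u (x + k, 0)) - (u (x + h, 0) - u (x, 0))| ≤ M2 * ‖h‖ * ‖k‖

lemma mem_hb {n : ℕ} {X : En n × ℝ} : X ∈ halfBall n 1 ↔ 0 < X.2 ∧ eN X < 1 := by
  unfold halfBall
  rw [mem_setOf_eq, ← eN_sq, sq_lt_sq₀ (eN_nonneg X) zero_le_one, and_comm]

lemma mem_hbb {n : ℕ} {X : En n × ℝ} : X ∈ halfBallWithBase n 1 ↔ 0 ≤ X.2 ∧ eN X < 1 := by
  unfold halfBallWithBase
  rw [mem_setOf_eq, ← eN_sq, sq_lt_sq₀ (eN_nonneg X) zero_le_one, and_comm]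

lemma isOpen_hb {n : ℕ} : IsOpen (halfBall n 1) := by
  have : halfBall n 1 = oP 0 1 := by
    ext X; rw [mem_hb]; simp [oP]
  rw [this]; exact isOpen_oP _ _

lemma eN_le_of_cP {n : ℕ} {X X0 : En n × ℝ} {R : ℝ} (h : X ∈ cP X0 R) : eN X ≤ eN X0 + R := by
  have := eN_add X0 (X - X0)
  rw [add_sub_cancel] at this
  linarith [h.2]

lemma eN_sub_tri {n : ℕ} (X Y Z : En n × ℝ) : eN (X - Z) ≤ eN (X - Y) + eN (Y - Z) := by
  have := eN_add (X - Y) (Y - Z)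
  rwa [sub_add_sub_cancel] at this

lemma eN_shift {n : ℕ} (X Z : En n × ℝ) (h : En n) :
    eN (X + (h, 0) - Z) ≤ eN (X - Z) + ‖h‖ := by
  have e : X + ((h, 0) : En n × ℝ) - Z = (X - Z) + (h, 0) := by abel
  rw [e]
  refine (eN_add _ _).trans ?_
  rw [eN_hor]

lemma cP_sub {n : ℕ} {X X0 : En n × ℝ} {r R : ℝ} (h : X ∈ cP X0 r) {ρ : ℝ} (hρ : r + ρ ≤ R) :
    cP X ρ ⊆ cP X0 R := fun Y hY => ⟨hY.1, by
  linarith [eN_sub_tri Y X X0, hY.2, h.2]⟩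

lemma cP_hbb {n : ℕ} {X0 : En n × ℝ} {R : ℝ} (hin : eN X0 + R < 1) :
    cP X0 R ⊆ halfBallWithBase n 1 := fun X hX =>
  mem_hbb.2 ⟨hX.1, (eN_le_of_cP hX).trans_lt hin⟩

lemma oP_hb {n : ℕ} {X0 : En n × ℝ} {R : ℝ} (hin : eN X0 + R ≤ 1) :
    oP X0 R ⊆ halfBall n 1 := fun X hX =>
  mem_hb.2 ⟨hX.1, by
    have := eN_add X0 (X - X0)
    rw [add_sub_cancel] at this
    linarith [hX.2]⟩

lemma cP_flat {n : ℕ} {X0 : En n × ℝ} {R : ℝ} (hin : eN X0 + R < 1) {x : En n}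
    (hx : (x, 0) ∈ cP X0 R) : ‖x‖ < 1 := by
  have := eN_le_of_cP hx
  rw [eN_hor] at this; linarith

lemma Dat.first {n : ℕ} {a M1 M2 : ℝ} {u : En n × ℝ → ℝ} (H : Dat n a u M1 M2)
    {X0 : En n × ℝ} {R K : ℝ} (hR : 0 < R) (hin : eN X0 + R < 1)
    (hK : ∀ X ∈ cP X0 R, |u X| ≤ K) {X : En n × ℝ} (hX : X ∈ cP X0 (R / 2)) {h : En n}
    (hh : ‖h‖ ≤ R / 4) :
    |u (X + (h, 0)) - u X| ≤ (M1 + (n + 4) * K / (R / 4)) * ‖h‖ := by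
  have hs : cP X (2 * (R / 4)) ⊆ cP X0 R := cP_sub hX (by linarith)
  refine tang_lip (r := R / 4) H.a0.le H.a1.le (by positivity) hX.1 hh
    (H.c.mono (hs.trans (cP_hbb hin))) (H.h.mono ?_) (fun Y hY => hK Y (hs hY)) H.m1 ?_
  · intro Y hY
    exact oP_hb (X0 := X0) hin.le ⟨hY.1, by linarith [eN_sub_tri Y X X0, hY.2, hX.2]⟩
  · intro x h1 h2
    exact H.t1 x h (cP_flat hin (hs h1)) (cP_flat hin (hs h2))

lemma Dat.second {n : ℕ} {a M1 M2 : ℝ} {u : En n × ℝ → ℝ} (H : Dat n a u M1 M2)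
    {X0 : En n × ℝ} {R K : ℝ} (hR : 0 < R) (hin : eN X0 + R < 1)
    (hK : ∀ X ∈ cP X0 R, |u X| ≤ K) {X : En n × ℝ} (hX : X ∈ cP X0 (R / 4)) {h k : En n}
    (hh : ‖h‖ ≤ R / 4) (hk : ‖k‖ ≤ R / 8) :
    |(u (X + (k, 0) + (h, 0)) - u (X + (k, 0))) - (u (X + (h, 0)) - u X)| ≤
      (M2 + (n + 4) * (M1 + (n + 4) * K / (R / 4)) / (R / 8)) * ‖h‖ * ‖k‖ := by
  have hs : cP X (2 * (R / 8)) ⊆ cP X0 (R / 2) := cP_sub hX (by linarith)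
  have hsR : cP X (2 * (R / 8)) ⊆ cP X0 R := cP_sub hX (by linarith)
  have hsR' : ∀ Y ∈ cP X (2 * (R / 8)), Y + (h, 0) ∈ cP X0 R := fun Y hY =>
    ⟨by simpa using hY.1, by linarith [eN_shift Y X0 h, (hs hY).2]⟩
  have := tang_lip (u := fun X => u (X + (h, 0)) - u X) (r := R / 8) (X0 := X) (h := k)
    (K := (M1 + (n + 4) * K / (R / 4)) * ‖h‖) (M := M2 * ‖h‖)
    H.a0.le H.a1.le (by positivity) hX.1 hk ?_ ?_ ?_ ?_ ?_
  · refine this.trans (le_of_eq ?_)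
    ring
  · refine ContinuousOn.sub (H.c.comp (by fun_prop) fun Y hY => cP_hbb hin (hsR' Y hY))
      (H.c.mono (hsR.trans (cP_hbb hin)))
  · refine H.h.diff isOpen_hb h (isOpen_oP _ _) ?_ ?_
    · intro Y hY
      exact mem_hb.2 ⟨hY.1, (mem_hbb.1 (cP_hbb hin (hsR (oP_sub_cP _ _ hY)))).2⟩
    · intro Y hY
      exact mem_hb.2 ⟨by simpa using hY.1,
        (mem_hbb.1 (cP_hbb hin (hsR' _ (oP_sub_cP _ _ hY)))).2⟩
  · intro Y hY
    exact H.first hR hin hK (hs hY) hh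
  · exact mul_nonneg H.m2 (norm_nonneg _)
  · intro x h1 h2
    have e1 := hsR' _ h1
    have e2 := hsR' _ h2
    simp only [Prod.mk_add_mk, add_zero] at e1 e2 ⊢
    exact H.t2 x h k (cP_flat hin (hsR h1)) (cP_flat hin e1) (cP_flat hin (hsR h2))
      (cP_flat hin e2)

def Qc (n : ℕ) (M1 M2 K R : ℝ) : ℝ := M2 + (n + 4) * (M1 + (n + 4) * K / (R / 4)) / (R / 8)

lemma Dat.d2 {n : ℕ} {a M1 M2 : ℝ} {u : En n × ℝ → ℝ} (H : Dat n a u M1 M2)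
    {X0 : En n × ℝ} {R K : ℝ} (hR : 0 < R) (hK0 : 0 ≤ K) (hin : eN X0 + R < 1)
    (hK : ∀ X ∈ cP X0 R, |u X| ≤ K) {X : En n × ℝ} (hX : X ∈ cP X0 (R / 4)) (hXp : 0 < X.2)
    (i : Fin n) : |D2 u X (dir (some i))| ≤ Qc n M1 M2 K R := by
  have m1 := H.m1
  have m2 := H.m2
  have hQ : 0 ≤ Qc n M1 M2 K R := by unfold Qc; positivity
  set v : En n × ℝ := dir (some i) with hv
  have hve : ∀ t : ℝ, t • v = (t • EuclideanSpace.single i (1:ℝ), 0) := fun t => by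
    simp [hv, dir]
  have hvn : ∀ t : ℝ, ‖t • EuclideanSpace.single i (1:ℝ)‖ = |t| := fun t => by
    simp [norm_smul]
  have hin' : ∀ᶠ σ in 𝓝 (0:ℝ), |σ| ≤ R / 8 := by
    have : Tendsto (fun σ : ℝ => |σ|) (𝓝 0) (𝓝 0) := by
      simpa using (continuous_abs.tendsto (0:ℝ))
    exact (this.eventually (gt_mem_nhds (show (0:ℝ) < R / 8 by positivity))).mono
      fun σ h => le_of_lt h
  have hmem : ∀ σ : ℝ, |σ| ≤ R / 8 → X + σ • v ∈ halfBall n 1 := by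
    intro σ hσ
    rw [hve, mem_hb]
    refine ⟨by simpa using hXp, ?_⟩
    have := eN_shift X X0 (σ • EuclideanSpace.single i (1:ℝ))
    rw [hvn] at this
    exact (mem_hbb.1 (cP_hbb hin (show X + ((σ • EuclideanSpace.single i (1:ℝ), 0) : En n × ℝ) ∈ cP X0 R from
      ⟨by simpa using hXp.le, by linarith [hX.2]⟩))).2
  have h0 : X + (0:ℝ) • v ∈ halfBall n 1 := hmem 0 (by simp; positivity)
  have key : ∀ σ : ℝ, |σ| ≤ R / 8 →
      ‖fderiv ℝ u (X + σ • v) v - fderiv ℝ u (X + (0:ℝ) • v) v‖ ≤ Qc n M1 M2 K R * ‖σ - 0‖ := by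
    intro σ hσ
    have d1 := (line_deriv isOpen_hb H.h.1 (Y := X + σ • v) (v := v) (t := 0)
      (by simpa using hmem σ hσ)).1
    have d2 := (line_deriv isOpen_hb H.h.1 (Y := X) (v := v) (t := 0) h0).1
    have d := d1.sub d2
    rw [zero_smul, add_zero, add_zero] at d
    rw [zero_smul, add_zero]
    refine d.le_of_lip' (by positivity) ?_
    filter_upwards [hin'] with t ht
    have := H.second hR hin hK hX (h := t • EuclideanSpace.single i (1:ℝ))
      (k := σ • EuclideanSpace.single i (1:ℝ)) (by rw [hvn]; linarith [abs_nonneg t])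
      (by rw [hvn]; exact hσ)
    rw [hvn, hvn] at this
    simp only [Real.norm_eq_abs, hve, sub_zero, Pi.sub_apply] at this ⊢
    rw [show ((0:ℝ) • EuclideanSpace.single i (1:ℝ), (0:ℝ)) = (0 : En n × ℝ) by simp, add_zero,
      add_zero]
    rw [show ∀ p q r w : ℝ, p - q - (r - w) = p - r - (q - w) by intros; ring]
    refine this.trans (le_of_eq ?_)
    unfold Qc; ring
  have d := (line_deriv isOpen_hb H.h.1 (Y := X) (v := v) (t := 0) h0).2
  have := d.le_of_lip' hQ (by
    filter_upwards [hin'] with σ hσ using key σ hσ)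
  simpa using this

lemma Dat.lapx {n : ℕ} {a M1 M2 : ℝ} {u : En n × ℝ → ℝ} (H : Dat n a u M1 M2)
    {X0 : En n × ℝ} {R K : ℝ} (hR : 0 < R) (hK0 : 0 ≤ K) (hin : eN X0 + R < 1)
    (hK : ∀ X ∈ cP X0 R, |u X| ≤ K) {X : En n × ℝ} (hX : X ∈ cP X0 (R / 4)) (hXp : 0 < X.2) :
    |D2 u X (0, 1) + a / X.2 * fderiv ℝ u X (0, 1)| ≤ n * Qc n M1 M2 K R := by
  have hb : X ∈ halfBall n 1 := mem_hb.2 ⟨hXp, (mem_hbb.1 (cP_hbb hin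
    ⟨hX.1, by linarith [hX.2]⟩)).2⟩
  have e := H.h.2 X hb
  unfold lap at e
  have e2 : D2 u X (0, 1) + a / X.2 * fderiv ℝ u X (0, 1) =
      -∑ i : Fin n, D2 u X (EuclideanSpace.single i 1, 0) := by linarith
  rw [e2, abs_neg]
  refine (Finset.abs_sum_le_sum_abs _ _).trans ?_
  refine (Finset.sum_le_sum fun i _ => H.d2 hR hK0 hin hK hX hXp i).trans ?_
  simp


/-! ### Vertical estimates -/

lemma p_deriv {a y : ℝ} (hy : 0 < y) {g1 : ℝ → ℝ} {g2 : ℝ} (h : HasDerivAt g1 g2 y) :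
    HasDerivAt (fun y => y ^ a * g1 y) (y ^ a * (g2 + a / y * g1 y)) y := by
  have := (Real.hasDerivAt_rpow_const (p := a) (Or.inl hy.ne')).mul h
  refine this.congr_deriv ?_
  rw [Real.rpow_sub_one hy.ne']
  field_simp
  ring

lemma p_lip {a α β Y Q : ℝ} (ha : 0 ≤ a) (hα : 0 ≤ α) {g1 g2 : ℝ → ℝ}
    (h1 : ∀ y ∈ Ioo α β, HasDerivAt g1 (g2 y) y)
    (h2 : ∀ y ∈ Ioo α β, |g2 y + a / y * g1 y| ≤ Q) {y z : ℝ} (hy : y ∈ Ioo α β)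
    (hz : z ∈ Ioo α β) (hyY : y ≤ Y) (hzY : z ≤ Y) :
    |z ^ a * g1 z - y ^ a * g1 y| ≤ Q * Y ^ a * |z - y| := by
  have hQ : 0 ≤ Q := (abs_nonneg _).trans (h2 y hy)
  have hc : Convex ℝ (Ioo α β ∩ Iic Y) := (convex_Ioo α β).inter (convex_Iic Y)
  have := hc.norm_image_sub_le_of_norm_hasDerivWithin_le (f := fun y => y ^ a * g1 y)
    (f' := fun y => y ^ a * (g2 y + a / y * g1 y)) (C := Q * Y ^ a) (x := y) (y := z)
    (fun x hx => (p_deriv (hα.trans_lt hx.1.1) (h1 x hx.1)).hasDerivWithinAt) ?_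
    ⟨hy, hyY⟩ ⟨hz, hzY⟩
  · simpa using this
  · intro x hx
    have x0 : 0 < x := hα.trans_lt hx.1.1
    rw [Real.norm_eq_abs, abs_mul, abs_of_nonneg (Real.rpow_nonneg x0.le a), mul_comm]
    exact mul_le_mul (h2 x hx.1) (Real.rpow_le_rpow x0.le hx.2 ha) (Real.rpow_nonneg x0.le a) hQ

lemma holder_of_deriv {b c ℓ : ℝ} (hb : 0 < b) {g g1 : ℝ → ℝ}
    (hg : ContinuousOn g (Icc 0 ℓ)) (h0 : ∀ t ∈ Ioo 0 ℓ, HasDerivAt g (g1 t) t)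
    (h1 : ∀ t ∈ Ioo 0 ℓ, |g1 t| ≤ c * t ^ (b - 1)) {t : ℝ} (ht : t ∈ Icc 0 ℓ) :
    |g t - g 0| ≤ c / b * t ^ b := by
  have hmono : ∀ σ : ℝ, |σ| = 1 → MonotoneOn (fun t => c / b * t ^ b - σ * g t) (Icc 0 ℓ) := by
    intro σ hσ
    apply monotoneOn_of_hasDerivWithinAt_nonneg (convex_Icc 0 ℓ)
      (f' := fun t => c / b * (b * t ^ (b - 1)) - σ * g1 t)
    · refine ContinuousOn.sub ?_ (hg.const_smul σ)
      exact ((Real.continuous_rpow_const hb.le).const_mul _).continuousOn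
    · rw [interior_Icc]
      intro x hx
      exact (((Real.hasDerivAt_rpow_const (Or.inl hx.1.ne')).const_mul _).sub
        ((h0 x hx).const_mul σ)).hasDerivWithinAt
    · rw [interior_Icc]
      intro x hx
      have e : c / b * (b * x ^ (b - 1)) = c * x ^ (b - 1) := by field_simp
      have : σ * g1 x ≤ c * x ^ (b - 1) := by
        refine (le_abs_self _).trans ?_
        rw [abs_mul, hσ, one_mul]; exact h1 x hx
      linarith
  have hℓ : (0:ℝ) ∈ Icc 0 ℓ := ⟨le_rfl, ht.1.trans ht.2⟩
  have m1 := hmono 1 (by simp) hℓ ht ht.1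
  have m2 := hmono (-1) (by simp) hℓ ht ht.1
  simp only [Real.zero_rpow hb.ne'] at m1 m2
  rw [abs_le]; constructor <;> linarith

lemma vert_holder {a y0 ℓ Q B : ℝ} (ha : 0 < a) (ha1 : a < 1) (hy0 : 0 ≤ y0) (hℓ : 0 < ℓ)
    {g g1 g2 : ℝ → ℝ} (hg : ContinuousOn g (Icc y0 (y0 + ℓ)))
    (h0 : ∀ y ∈ Ioo y0 (y0 + ℓ), HasDerivAt g (g1 y) y)
    (h1 : ∀ y ∈ Ioo y0 (y0 + ℓ), HasDerivAt g1 (g2 y) y)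
    (h2 : ∀ y ∈ Ioo y0 (y0 + ℓ), |g2 y + a / y * g1 y| ≤ Q)
    (hB : ∀ y ∈ Icc y0 (y0 + ℓ), |g y| ≤ B) {t : ℝ} (ht : t ∈ Icc 0 ℓ) :
    |g (y0 + t) - g y0| ≤ (2 * B + Q * ℓ ^ 2) / (1 - a) * (t / ℓ) ^ (1 - a) := by
  have hb : 0 < 1 - a := by linarith
  obtain ⟨c, hc, hce⟩ := exists_hasDerivAt_eq_slope g g1 (show y0 < y0 + ℓ by linarith) hg h0
  have hQ : 0 ≤ Q := (abs_nonneg _).trans (h2 c hc)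
  have hgc : |g1 c| ≤ 2 * B / ℓ := by
    rw [hce, add_sub_cancel_left, abs_div, abs_of_pos hℓ]
    gcongr
    have e1 := hB y0 ⟨le_rfl, by linarith⟩
    have e2 := hB (y0 + ℓ) ⟨by linarith, le_rfl⟩
    have := abs_sub (g (y0 + ℓ)) (g y0)
    linarith
  set G := 2 * B / ℓ + Q * ℓ with hG
  have hG0 : 0 ≤ G := by
    have := (abs_nonneg _).trans hgc
    positivity
  have key : ∀ t ∈ Ioo 0 ℓ, |g1 (y0 + t)| ≤ (G * ℓ ^ a) * t ^ ((1 - a) - 1) := by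
    intro t ht
    have hyt : y0 + t ∈ Ioo y0 (y0 + ℓ) := ⟨by linarith [ht.1], by linarith [ht.2]⟩
    have yt0 : 0 < y0 + t := by linarith [ht.1]
    have l := p_lip (Y := y0 + ℓ) ha.le hy0 h1 h2 hc hyt hc.2.le hyt.2.le
    have c0 : 0 < c := by linarith [hc.1]
    have hP : 0 < (y0 + ℓ) ^ a := Real.rpow_pos_of_pos (by linarith) a
    have e1 : |c ^ a * g1 c| ≤ (y0 + ℓ) ^ a * (2 * B / ℓ) := by
      rw [abs_mul, abs_of_nonneg (Real.rpow_nonneg c0.le a)]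
      exact mul_le_mul (Real.rpow_le_rpow c0.le hc.2.le ha.le) hgc (abs_nonneg _) hP.le
    have e2 : |(y0 + t) - c| ≤ ℓ := by
      rw [abs_le]; constructor <;> linarith [hc.1, hc.2, ht.1, ht.2]
    have e3 : |(y0 + t) ^ a * g1 (y0 + t)| ≤ (y0 + ℓ) ^ a * G := by
      have t1 := abs_add_le ((y0 + t) ^ a * g1 (y0 + t) - c ^ a * g1 c) (c ^ a * g1 c)
      rw [sub_add_cancel] at t1
      have t2 : Q * (y0 + ℓ) ^ a * |(y0 + t) - c| ≤ Q * (y0 + ℓ) ^ a * ℓ := by gcongr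
      rw [hG, mul_add]
      nlinarith
    have yp : 0 < (y0 + t) ^ a := Real.rpow_pos_of_pos yt0 a
    rw [abs_mul, abs_of_pos yp] at e3
    have tp : 0 < t ^ a := Real.rpow_pos_of_pos ht.1 a
    have e4 : (y0 + ℓ) ^ a * t ^ a ≤ ℓ ^ a * (y0 + t) ^ a := by
      rw [← Real.mul_rpow (by linarith) ht.1.le, ← Real.mul_rpow hℓ.le yt0.le]
      apply Real.rpow_le_rpow (mul_nonneg (by linarith) ht.1.le) _ ha.le
      nlinarith [ht.2]
    rw [show (1 - a) - 1 = -a by ring, Real.rpow_neg ht.1.le, ← div_eq_mul_inv, le_div_iff₀ tp]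
    have e5 : (y0 + t) ^ a * (|g1 (y0 + t)| * t ^ a) ≤ (y0 + t) ^ a * (G * ℓ ^ a) := by
      calc (y0 + t) ^ a * (|g1 (y0 + t)| * t ^ a) = ((y0 + t) ^ a * |g1 (y0 + t)|) * t ^ a := by ring
        _ ≤ (y0 + ℓ) ^ a * G * t ^ a := by gcongr
        _ = G * ((y0 + ℓ) ^ a * t ^ a) := by ring
        _ ≤ G * (ℓ ^ a * (y0 + t) ^ a) := by gcongr
        _ = _ := by ring
    exact le_of_mul_le_mul_left e5 yp
  have fin := holder_of_deriv (g := fun t => g (y0 + t)) hb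
    (hg.comp (by fun_prop) fun t ht => ⟨by linarith [ht.1], by linarith [ht.2]⟩)
    (g1 := fun t => g1 (y0 + t))
    (fun t ht => by
      have := h0 (y0 + t) ⟨by linarith [ht.1], by linarith [ht.2]⟩
      exact HasDerivAt.comp_const_add y0 t this) key ht
  simp only [add_zero] at fin
  refine fin.trans (le_of_eq ?_)
  rw [Real.div_rpow ht.1 hℓ.le]
  have lp : 0 < ℓ ^ (1 - a) := Real.rpow_pos_of_pos hℓ _
  have : ℓ ^ a = ℓ / ℓ ^ (1 - a) := by
    rw [Real.rpow_sub hℓ, Real.rpow_one]; field_simp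
  rw [this, hG]; field_simp

lemma vert_exp {a Y Q : ℝ} (ha : 0 < a) (ha1 : a < 1) (hY : 0 < Y)
    {g g1 g2 : ℝ → ℝ} (hg : ContinuousOn g (Ico 0 Y))
    (h0 : ∀ y ∈ Ioo 0 Y, HasDerivAt g (g1 y) y)
    (h1 : ∀ y ∈ Ioo 0 Y, HasDerivAt g1 (g2 y) y)
    (h2 : ∀ y ∈ Ioo 0 Y, |g2 y + a / y * g1 y| ≤ Q) :
    ∃ D : ℝ, ∀ y ∈ Ioo 0 Y, |g y - g 0 - D * y ^ (1 - a)| ≤ Q * y ^ 2 := by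
  have hb : 0 < 1 - a := by linarith
  have hQ : 0 ≤ Q := (abs_nonneg _).trans (h2 (Y / 2) ⟨by linarith, by linarith⟩)
  have hlip : LipschitzOnWith (Real.toNNReal (Q * Y ^ a)) (fun y => y ^ a * g1 y) (Ioo 0 Y) := by
    apply LipschitzOnWith.of_dist_le_mul
    intro z hz y hy
    rw [Real.coe_toNNReal _ (mul_nonneg hQ (Real.rpow_nonneg hY.le a)), Real.dist_eq, Real.dist_eq]
    exact p_lip ha.le le_rfl h1 h2 hy hz hy.2.le hz.2.le
  obtain ⟨P, hP, hPe⟩ := hlip.extend_real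
  have hd : ∀ y ∈ Ioo 0 Y, |y ^ a * g1 y - P 0| ≤ Q * y ^ a * y := by
    intro y hy
    have hT : Tendsto (fun z => |y ^ a * g1 y - P z|) (𝓝[>] 0) (𝓝 |y ^ a * g1 y - P 0|) :=
      ((continuous_const.sub hP.continuous).abs.tendsto 0).mono_left nhdsWithin_le_nhds
    refine le_of_tendsto hT ?_
    filter_upwards [Ioo_mem_nhdsGT hy.1] with z hz
    have hz' : z ∈ Ioo 0 Y := ⟨hz.1, hz.2.trans hy.2⟩
    rw [← hPe hz']
    refine (p_lip ha.le le_rfl h1 h2 hz' hy hz.2.le le_rfl).trans ?_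
    rw [abs_of_pos (by linarith [hz.2])]
    have := Real.rpow_nonneg hy.1.le a
    gcongr
    linarith [hz.1]
  refine ⟨P 0 / (1 - a), fun y hy => ?_⟩
  obtain ⟨c, hc, hce⟩ := exists_hasDerivAt_eq_slope
    (fun y => g y - P 0 / (1 - a) * y ^ (1 - a))
    (fun y => g1 y - P 0 / (1 - a) * ((1 - a) * y ^ ((1 - a) - 1))) hy.1
    ((hg.mono (fun x hx => ⟨hx.1, hx.2.trans_lt hy.2⟩)).sub
      ((Real.continuous_rpow_const hb.le).const_mul _).continuousOn)
    (fun x hx => (h0 x ⟨hx.1, hx.2.trans hy.2⟩).sub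
      ((Real.hasDerivAt_rpow_const (Or.inl hx.1.ne')).const_mul _))
  have hc' : c ∈ Ioo 0 Y := ⟨hc.1, hc.2.trans hy.2⟩
  have cp : 0 < c ^ a := Real.rpow_pos_of_pos hc.1 a
  have e1 : g1 c - P 0 / (1 - a) * ((1 - a) * c ^ ((1 - a) - 1)) = (c ^ a * g1 c - P 0) / c ^ a := by
    rw [show (1 - a) - 1 = -a by ring, Real.rpow_neg hc.1.le]
    field_simp
  have e2 : |g1 c - P 0 / (1 - a) * ((1 - a) * c ^ ((1 - a) - 1))| ≤ Q * c := by
    rw [e1, abs_div, abs_of_pos cp, div_le_iff₀ cp]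
    refine (hd c hc').trans (le_of_eq ?_)
    ring
  rw [hce, Real.zero_rpow hb.ne', mul_zero, sub_zero, sub_zero, abs_div, abs_of_pos hy.1,
    div_le_iff₀ hy.1] at e2
  rw [show g y - g 0 - P 0 / (1 - a) * y ^ (1 - a) = g y - P 0 / (1 - a) * y ^ (1 - a) - g 0 by ring]
  refine e2.trans ?_
  have := hc.2.le
  have := hy.1
  calc Q * c * y ≤ Q * y * y := by gcongr
    _ = Q * y ^ 2 := by ring


lemma Dat.vdata {n : ℕ} {a M1 M2 : ℝ} {u : En n × ℝ → ℝ} (H : Dat n a u M1 M2)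
    {X0 : En n × ℝ} {y : ℝ} (hy : X0 + y • ((0, 1) : En n × ℝ) ∈ halfBall n 1) :
    HasDerivAt (fun y => u (X0 + y • ((0, 1) : En n × ℝ)))
      (fderiv ℝ u (X0 + y • (0, 1)) (0, 1)) y ∧
    HasDerivAt (fun y => fderiv ℝ u (X0 + y • ((0, 1) : En n × ℝ)) (0, 1))
      (D2 u (X0 + y • (0, 1)) (0, 1)) y :=
  line_deriv isOpen_hb H.h.1 hy

lemma mem_cP_vert {n : ℕ} {X0 : En n × ℝ} (h0 : 0 ≤ X0.2) {y R : ℝ} (hy : X0.2 ≤ y)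
    (hyR : y ≤ X0.2 + R) : ((X0.1, 0) : En n × ℝ) + y • (0, 1) ∈ cP X0 R := by
  refine ⟨by simp; linarith, ?_⟩
  have : ((X0.1, 0) : En n × ℝ) + y • (0, 1) - X0 = (0, y - X0.2) := by
    ext <;> simp
  rw [this, eN_ver, abs_of_nonneg (by linarith)]; linarith

lemma Dat.vert {n : ℕ} {a M1 M2 : ℝ} {u : En n × ℝ → ℝ} (H : Dat n a u M1 M2)
    {X0 : En n × ℝ} {R K : ℝ} (hR : 0 < R) (h0 : 0 ≤ X0.2) (hin : eN X0 + R < 1)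
    (hK : ∀ X ∈ cP X0 R, |u X| ≤ K) {t : ℝ} (ht : t ∈ Icc 0 (R / 4)) :
    |u (X0 + (0, t)) - u X0| ≤
      (2 * K + n * Qc n M1 M2 K R * (R / 4) ^ 2) / (1 - a) * (t / (R / 4)) ^ (1 - a) := by
  have hK0 : 0 ≤ K := (abs_nonneg _).trans (hK X0 ⟨h0, by simp [eN_zero, hR.le]⟩)
  have hm : ∀ y ∈ Icc X0.2 (X0.2 + R / 4),
      ((X0.1, 0) : En n × ℝ) + y • (0, 1) ∈ cP X0 (R / 4) := fun y hy => mem_cP_vert h0 hy.1 hy.2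
  have hmR : cP X0 (R / 4) ⊆ cP X0 R := fun X hX => ⟨hX.1, by linarith [hX.2]⟩
  have hmp : ∀ y ∈ Ioo X0.2 (X0.2 + R / 4),
      ((X0.1, 0) : En n × ℝ) + y • (0, 1) ∈ halfBall n 1 := fun y hy =>
    mem_hb.2 ⟨by simp; linarith [hy.1], (mem_hbb.1 (cP_hbb hin (hmR (hm y ⟨hy.1.le, hy.2.le⟩)))).2⟩
  have := vert_holder (y0 := X0.2) (ℓ := R / 4) (Q := n * Qc n M1 M2 K R) (B := K) H.a0 H.a1 h0
    (by positivity) (g := fun y => u (((X0.1, 0) : En n × ℝ) + y • (0, 1)))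
    (H.c.comp (by fun_prop) fun y hy => cP_hbb hin (hmR (hm y hy)))
    (fun y hy => (H.vdata (hmp y hy)).1) (fun y hy => (H.vdata (hmp y hy)).2) ?_
    (fun y hy => hK _ (hmR (hm y hy))) ht
  · have e1 : ((X0.1, 0) : En n × ℝ) + (X0.2 + t) • (0, 1) = X0 + (0, t) := by
      apply Prod.ext <;> simp
    have e2 : ((X0.1, 0) : En n × ℝ) + X0.2 • (0, 1) = X0 := by
      apply Prod.ext <;> simp
    simp only [e1, e2] at this
    exact this
  · intro y hy
    have := H.lapx hR hK0 hin hK (hm y ⟨hy.1.le, hy.2.le⟩) (by simp; linarith [hy.1])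
    simpa using this

lemma osc {n : ℕ} {a : ℝ} (ha1 : a < 1) :
    ∃ ε : ℝ, 0 < ε ∧ ε ≤ 1 / 4 ∧ ∀ (u : En n × ℝ → ℝ) (M1 M2 : ℝ), Dat n a u M1 M2 →
      ∀ (X0 : En n × ℝ) (R A : ℝ), 0 < R → R ≤ 1 → 0 ≤ X0.2 → eN X0 + R < 1 → M1 ≤ A → M2 ≤ A →
      (∀ X ∈ cP X0 R, |u X| ≤ 2 ^ (n + 2) * A) →
      ∀ (h : En n) (t : ℝ), ‖h‖ ≤ ε * R → 0 ≤ t → t ≤ ε * R →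
        |u (X0 + (0, t) + (h, 0)) - u X0| ≤ A / 2 := by
  have hb : 0 < 1 - a := by linarith
  set L : ℝ := 2 ^ (n + 2) with hL
  have hL0 : 0 < L := by positivity
  set c1 : ℝ := (2 * L + n * Qc n 1 1 L 1) / (1 - a) with hc1
  set c2 : ℝ := 1 + 4 * (n + 4) * L with hc2
  have hlim : Tendsto (fun ε : ℝ => c1 * (4 * ε) ^ (1 - a) + c2 * ε) (𝓝[>] 0) (𝓝 0) := by
    have : Continuous (fun ε : ℝ => c1 * (4 * ε) ^ (1 - a) + c2 * ε) := by
      have := Real.continuous_rpow_const hb.le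
      fun_prop
    have := (this.tendsto 0).mono_left (nhdsWithin_le_nhds (s := Ioi 0))
    simpa [Real.zero_rpow hb.ne'] using this
  obtain ⟨ε, hε, hεlt⟩ := ((hlim.eventually (gt_mem_nhds (show (0:ℝ) < 1 / 2 by norm_num))).and
    (Ioo_mem_nhdsGT (show (0:ℝ) < 1 / 4 by norm_num))).exists
  refine ⟨ε, hεlt.1, hεlt.2.le, ?_⟩
  intro u M1 M2 H X0 R A hR hR1 hX0 hin hM1 hM2 hK h t hh ht0 ht
  have m1 := H.m1
  have m2 := H.m2
  have hA : 0 ≤ A := m1.trans hM1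
  have hε0 := hεlt.1
  have hε1 := hεlt.2.le
  have hεR : ε * R ≤ R / 4 := by nlinarith
  have v := H.vert hR hX0 hin hK (t := t) ⟨ht0, ht.trans hεR⟩
  have w := H.first hR hin hK (X := X0 + (0, t)) (h := h)
    ⟨by simp; linarith, by rw [add_sub_cancel_left, eN_ver, abs_of_nonneg ht0]; linarith⟩
    (hh.trans hεR)
  have q1 : Qc n M1 M2 (L * A) R * (R / 4) ^ 2 ≤ Qc n 1 1 L 1 * A := by
    have e1 : Qc n M1 M2 (L * A) R * (R / 4) ^ 2 =
        (M2 * R ^ 2 + 8 * (n + 4) * (M1 * R + 4 * (n + 4) * L * A)) / 16 := by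
      unfold Qc; field_simp; ring
    have e2 : Qc n 1 1 L 1 * A = A + 8 * (n + 4) * (A + 4 * (n + 4) * L * A) := by
      unfold Qc; ring
    have e3 : M2 * R ^ 2 ≤ A * 1 ^ 2 := by gcongr
    have e4 : M1 * R ≤ A * 1 := by gcongr
    have e5 : 8 * ((n:ℝ) + 4) * (M1 * R + 4 * (n + 4) * L * A) ≤
        8 * ((n:ℝ) + 4) * (A * 1 + 4 * (n + 4) * L * A) := by gcongr
    have e6 : 0 ≤ M2 * R ^ 2 + 8 * ((n:ℝ) + 4) * (M1 * R + 4 * (n + 4) * L * A) := by positivity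
    rw [e1, e2]; linarith
  have v2 : |u (X0 + (0, t)) - u X0| ≤ c1 * (4 * ε) ^ (1 - a) * A := by
    refine v.trans ?_
    have f1 : (2 * (L * A) + n * Qc n M1 M2 (L * A) R * (R / 4) ^ 2) / (1 - a) ≤ c1 * A := by
      rw [hc1, div_mul_eq_mul_div]
      gcongr
      have : (n:ℝ) * (Qc n M1 M2 (L * A) R * (R / 4) ^ 2) ≤ n * (Qc n 1 1 L 1 * A) := by gcongr
      linarith
    have f2 : (t / (R / 4)) ^ (1 - a) ≤ (4 * ε) ^ (1 - a) := by
      apply Real.rpow_le_rpow (by positivity) _ hb.le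
      rw [div_le_iff₀ (by positivity)]; linarith
    have f3 : 0 ≤ (t / (R / 4)) ^ (1 - a) := by positivity
    have f4 : 0 ≤ c1 * A := by
      rw [hc1]; unfold Qc; positivity
    calc _ ≤ c1 * A * (4 * ε) ^ (1 - a) := mul_le_mul f1 f2 f3 f4
      _ = _ := by ring
  have w2 : |u (X0 + (0, t) + (h, 0)) - u (X0 + (0, t))| ≤ c2 * ε * A := by
    refine w.trans ?_
    calc (M1 + (n + 4) * (L * A) / (R / 4)) * ‖h‖
        ≤ (M1 + (n + 4) * (L * A) / (R / 4)) * (ε * R) := by gcongr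
      _ = ε * (M1 * R + 4 * (n + 4) * L * A) := by field_simp
      _ ≤ ε * (A * 1 + 4 * (n + 4) * L * A) := by gcongr
      _ = _ := by rw [hc2]; ring
  have tri := abs_sub_le (u (X0 + (0, t) + (h, 0))) (u (X0 + (0, t))) (u X0)
  have : (c1 * (4 * ε) ^ (1 - a) + c2 * ε) * A ≤ 1 / 2 * A := by gcongr
  linarith


/-! ### The sup bound -/

lemma l2_lower {n : ℕ} {a : ℝ} (ha0 : 0 < a) (ha1 : a < 1) {u : En n × ℝ → ℝ} {J δ A : ℝ}
    {X0 : En n × ℝ}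
    (hint : IntegrableOn (fun p : En n × ℝ => p.2 ^ a * (u p) ^ 2) (halfBall n 1) volume)
    (hJ : (∫ p in halfBall n 1, p.2 ^ a * (u p) ^ 2) ≤ J ^ 2) (hδ : 0 < δ) (h0 : 0 ≤ X0.2)
    (hin : eN X0 + 2 * δ < 1) (hA : 0 ≤ A)
    (hu : ∀ (h : En n) (t : ℝ), ‖h‖ ≤ δ → 0 ≤ t → t ≤ δ → A / 2 ≤ |u (X0 + (0, t) + (h, 0))|) :
    volume.real (Metric.ball (0 : En n) 1) / 16 * δ ^ (n + 2) * A ^ 2 ≤ J ^ 2 := by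
  set S : Set (En n × ℝ) := Metric.ball X0.1 δ ×ˢ Ioc (X0.2 + δ / 2) (X0.2 + δ) with hS
  have hSm : MeasurableSet S := measurableSet_ball.prod measurableSet_Ioc
  have hSb : S ⊆ halfBall n 1 := by
    rintro X ⟨h1, h2⟩
    rw [mem_hb]
    rw [mem_ball_iff_norm] at h1
    refine ⟨by linarith [h2.1], ?_⟩
    have e : X = X0 + ((X.1 - X0.1, 0) + (0, X.2 - X0.2)) := by apply Prod.ext <;> simp
    have e1 := eN_add X0 ((X.1 - X0.1, 0) + (0, X.2 - X0.2))
    have e2 := eN_add (X.1 - X0.1, 0) ((0, X.2 - X0.2) : En n × ℝ)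
    rw [← e] at e1
    rw [eN_hor, eN_ver, abs_of_nonneg (by linarith [h2.1])] at e2
    linarith [h2.2]
  have hvol : volume S = volume (Metric.ball X0.1 δ) * volume (Ioc (X0.2 + δ / 2) (X0.2 + δ)) := by
    rw [Measure.volume_eq_prod, hS, Measure.prod_prod]
  have hfin : volume S ≠ ⊤ := by
    rw [hvol]
    refine ENNReal.mul_ne_top measure_ball_lt_top.ne ?_
    rw [Real.volume_Ioc]; exact ENNReal.ofReal_ne_top
  have hreal : volume.real S =
      δ ^ n * volume.real (Metric.ball (0 : En n) 1) * (δ / 2) := by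
    unfold Measure.real
    rw [hvol, Measure.addHaar_ball_of_pos _ _ hδ, Real.volume_Ioc]
    rw [ENNReal.toReal_mul, ENNReal.toReal_mul, ENNReal.toReal_ofReal (by positivity),
      ENNReal.toReal_ofReal (by linarith)]
    simp only [finrank_euclideanSpace, Fintype.card_fin]
    ring
  have hlow : ∀ X ∈ S, (δ / 2) * (A / 2) ^ 2 ≤ X.2 ^ a * (u X) ^ 2 := by
    intro X hX
    have hb := mem_hb.1 (hSb hX)
    have h1 : ‖X.1 - X0.1‖ < δ := mem_ball_iff_norm.1 hX.1
    have h2 := hX.2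
    have e : X = X0 + (0, X.2 - X0.2) + (X.1 - X0.1, 0) := by apply Prod.ext <;> simp
    have hu1 := hu (X.1 - X0.1) (X.2 - X0.2) h1.le (by linarith [h2.1]) (by linarith [h2.2])
    rw [← e] at hu1
    have hX1 : X.2 ≤ 1 := (le_abs_self _).trans ((snd_le_eN X).trans hb.2.le)
    have hpow : δ / 2 ≤ X.2 ^ a := by
      have := Real.rpow_le_rpow_of_exponent_ge hb.1 hX1 ha1.le
      rw [Real.rpow_one] at this
      linarith [h2.1]
    rw [← sq_abs (u X)]
    have := Real.rpow_nonneg hb.1.le a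
    gcongr
  have i1 := setIntegral_ge_of_const_le_real hSm hfin hlow (hint.mono_set hSb)
  have i2 : (∫ p in S, p.2 ^ a * (u p) ^ 2) ≤ ∫ p in halfBall n 1, p.2 ^ a * (u p) ^ 2 := by
    apply setIntegral_mono_set hint _ hSb.eventuallyLE
    filter_upwards [ae_restrict_mem isOpen_hb.measurableSet] with p hp
    have := Real.rpow_nonneg (mem_hb.1 hp).1.le a
    simp only [Pi.zero_apply]
    positivity
  rw [hreal] at i1
  refine le_trans (le_of_eq ?_) (i1.trans (i2.trans hJ))
  ring

lemma sup_bound (n : ℕ) {a : ℝ} (ha0 : 0 < a) (ha1 : a < 1) :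
    ∃ C : ℝ, 0 < C ∧ ∀ (u : En n × ℝ → ℝ) (M1 M2 J : ℝ), Dat n a u M1 M2 → 0 ≤ J →
      IntegrableOn (fun p : En n × ℝ => p.2 ^ a * (u p) ^ 2) (halfBall n 1) volume →
      (∫ p in halfBall n 1, p.2 ^ a * (u p) ^ 2) ≤ J ^ 2 →
      ∀ X ∈ cP (0 : En n × ℝ) (3 / 4), |u X| ≤ C * (M1 + M2 + J) := by
  obtain ⟨ε, hε0, hε1, hosc⟩ := osc (n := n) ha1
  set m : ℝ := volume.real (Metric.ball (0 : En n) 1) / 16 * (ε / 2) ^ (n + 2) with hm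
  have hV : 0 < volume.real (Metric.ball (0 : En n) 1) :=
    ENNReal.toReal_pos (Metric.measure_ball_pos _ _ one_pos).ne' measure_ball_lt_top.ne
  have hm0 : 0 < m := by positivity
  set κ := n + 2 with hκ
  refine ⟨(20 / 3) ^ κ * (1 + 1 / √m), by positivity, ?_⟩
  intro u M1 M2 J H hJ0 hint hJ X hX
  have m1 := H.m1
  have m2 := H.m2
  have hsub : cP (0 : En n × ℝ) (9 / 10) ⊆ halfBallWithBase n 1 :=
    cP_hbb (by rw [eN_zero]; norm_num)
  have hX9 : X ∈ cP (0 : En n × ℝ) (9 / 10) := ⟨hX.1, by linarith [hX.2]⟩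
  have hc : ContinuousOn (fun X => (9 / 10 - eN X) ^ κ * |u X|) (cP (0 : En n × ℝ) (9 / 10)) := by
    refine ContinuousOn.mul ?_ (H.c.mono hsub).abs
    exact ((continuous_const.sub continuous_eN).pow κ).continuousOn
  obtain ⟨X0, hX0, hmax⟩ := (isCompact_cP _ _).exists_isMaxOn ⟨X, hX9⟩ hc
  have hmax' : ∀ Y ∈ cP (0 : En n × ℝ) (9 / 10),
      (9 / 10 - eN Y) ^ κ * |u Y| ≤ (9 / 10 - eN X0) ^ κ * |u X0| := fun Y hY => hmax hY
  set d := 9 / 10 - eN X0 with hd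
  set A := |u X0| with hA
  have hA0 : 0 ≤ A := abs_nonneg _
  have hd0 : 0 ≤ d := by
    have := hX0.2
    rw [sub_zero] at this; linarith
  have hd1 : d ≤ 1 := by linarith [eN_nonneg X0]
  have hdk : d ^ κ ≤ 1 := pow_le_one₀ hd0 hd1
  have main : d ^ κ * A ≤ (1 + 1 / √m) * (M1 + M2 + J) := by
    have hs : 0 ≤ 1 / √m := by positivity
    by_cases hAM : A ≤ M1 + M2
    · calc d ^ κ * A ≤ 1 * (M1 + M2) := by gcongr
        _ ≤ (1 + 1 / √m) * (M1 + M2 + J) := by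
          apply mul_le_mul <;> first | positivity | linarith
    push Not at hAM
    rcases hd0.eq_or_lt with hd00 | hd00
    · rw [← hd00]; simp [hκ]; positivity
    have hin : eN X0 + d / 2 < 1 := by linarith
    have hball : ∀ Y ∈ cP X0 (d / 2), |u Y| ≤ 2 ^ (n + 2) * A := by
      intro Y hY
      have h1 := eN_le_of_cP hY
      have h2 := hmax' Y ⟨hY.1, by rw [sub_zero]; linarith⟩
      have h3 : (d / 2) ^ κ ≤ (9 / 10 - eN Y) ^ κ := by
        apply pow_le_pow_left₀ (by positivity); linarith
      have h4 : (d / 2) ^ κ * |u Y| ≤ d ^ κ * A :=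
        (mul_le_mul_of_nonneg_right h3 (abs_nonneg _)).trans h2
      have h5 : d ^ κ * A = (d / 2) ^ κ * (2 ^ κ * A) := by
        rw [div_pow]; field_simp
      rw [h5] at h4
      exact le_of_mul_le_mul_left h4 (by positivity)
    have ho := hosc u M1 M2 H X0 (d / 2) A (by positivity) (by linarith) hX0.1 hin (by linarith)
      (by linarith) hball
    have low := l2_lower (X0 := X0) (δ := ε * (d / 2)) (A := A) ha0 ha1 hint hJ (by positivity)
      hX0.1 (by nlinarith) hA0 (by
        intro h t hh ht0 ht
        have o := ho h t hh ht0 ht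
        have := abs_sub_abs_le_abs_sub (u X0) (u (X0 + (0, t) + (h, 0)))
        rw [abs_sub_comm] at this
        linarith)
    have low2 : m * (d ^ κ * A ^ 2) ≤ J ^ 2 := by
      refine le_trans (le_of_eq ?_) low
      rw [hm, show ε * (d / 2) = (ε / 2) * d by ring, mul_pow]; ring
    have low3 : (√m * (d ^ κ * A)) ^ 2 ≤ J ^ 2 := by
      rw [mul_pow, Real.sq_sqrt hm0.le]
      refine le_trans ?_ low2
      gcongr
      calc (d ^ κ * A) ^ 2 = d ^ κ * (d ^ κ * A ^ 2) := by ring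
        _ ≤ 1 * (d ^ κ * A ^ 2) := by gcongr
        _ = _ := one_mul _
    have low4 : √m * (d ^ κ * A) ≤ J := (sq_le_sq₀ (by positivity) hJ0).1 low3
    have low5 : d ^ κ * A ≤ 1 / √m * J := by
      rw [one_div_mul_eq_div, le_div_iff₀ (by positivity)]; linarith
    refine low5.trans ?_
    apply mul_le_mul <;> first | positivity | linarith
  have hXe : eN X ≤ 3 / 4 := by simpa using hX.2
  have f1 : (3 / 20 : ℝ) ^ κ * |u X| ≤ d ^ κ * A := by
    refine le_trans ?_ (hmax' X hX9)
    gcongr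
    linarith
  have f2 : |u X| = (20 / 3) ^ κ * ((3 / 20 : ℝ) ^ κ * |u X|) := by
    rw [← mul_assoc, ← mul_pow]; norm_num
  rw [f2, mul_assoc]
  exact mul_le_mul_of_nonneg_left (f1.trans main) (by positivity)


/-! ### Barrier -/

lemma HasD2.rpow {g : ℝ → ℝ} {d1 d2 : ℝ} (hg : HasD2 g d1 d2) (h0 : 0 < g 0) (p : ℝ) :
    HasD2 (fun t => g t ^ p) (p * g 0 ^ (p - 1) * d1)
      (p * ((p - 1) * g 0 ^ (p - 2)) * d1 ^ 2 + p * g 0 ^ (p - 1) * d2) := by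
  obtain ⟨g', h1, h2, h3⟩ := hg
  have hd0 := h1.self_of_nhds
  refine ⟨fun t => p * g t ^ (p - 1) * g' t, ?_, by simp [h2], ?_⟩
  · filter_upwards [h1, hd0.continuousAt.eventually (lt_mem_nhds h0)] with t ht hpos
    refine (ht.rpow_const (p := p) (Or.inl hpos.ne')).congr_deriv ?_
    ring
  · have e1 := ((hd0.rpow_const (p := p - 1) (Or.inl h0.ne')).const_mul p).mul h3
    refine e1.congr_deriv ?_
    rw [h2, show p - 1 - 1 = p - 2 by ring]; ring

lemma hasD2_eN {n : ℕ} {Z : En n × ℝ} (hZ : 0 < eN Z) (o : Option (Fin n)) :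
    HasD2 (fun t => eN (Z + t • dir o)) (co o Z / eN Z) (1 / eN Z - co o Z ^ 2 / eN Z ^ 3) := by
  have h := (hasD2_quad (eN Z ^ 2) (2 * co o Z) 1).rpow (by simp; positivity) (1 / 2)
  have e : (fun t => (eN Z ^ 2 + 2 * co o Z * t + 1 * t ^ 2) ^ (1 / 2 : ℝ)) =
      fun t => eN (Z + t • dir o) := by
    funext t
    rw [← eN_sq_line, ← Real.sqrt_eq_rpow, Real.sqrt_sq (eN_nonneg _)]
  rw [e] at h
  have e0 : (eN Z ^ 2 + 2 * co o Z * 0 + 1 * 0 ^ 2) = eN Z ^ (2:ℝ) := by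
    rw [Real.rpow_two]; ring
  refine h.congr_val ?_ ?_
  · rw [e0, ← Real.rpow_mul hZ.le, show (2:ℝ) * (1 / 2 - 1) = -1 by norm_num, Real.rpow_neg_one]
    field_simp
  · rw [e0, ← Real.rpow_mul hZ.le, ← Real.rpow_mul hZ.le,
      show (2:ℝ) * (1 / 2 - 1) = -1 by norm_num,
      show (2:ℝ) * (1 / 2 - 2) = -(3:ℕ) by norm_num, Real.rpow_neg_one, Real.rpow_neg hZ.le,
      Real.rpow_natCast]
    field_simp; ring

def cy1 {n : ℕ} (y b : ℝ) : Option (Fin n) → ℝ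
  | none => b * y ^ (b - 1) - 1
  | some _ => 0

def cy2 {n : ℕ} (y b : ℝ) : Option (Fin n) → ℝ
  | none => b * ((b - 1) * y ^ (b - 2))
  | some _ => 0

lemma hasD2_cy {n : ℕ} {Z : En n × ℝ} (hZ : 0 < Z.2) (b : ℝ) (o : Option (Fin n)) :
    HasD2 (fun t => (Z + t • dir o).2 ^ b - (Z + t • dir o).2) (cy1 Z.2 b o) (cy2 Z.2 b o) := by
  cases o with
  | none =>
    have h := ((hasD2_id_add Z.2).rpow (by simpa using hZ) b).sub (hasD2_id_add Z.2)
    have e : (fun t => (Z.2 + t) ^ b - (Z.2 + t)) =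
        fun t => (Z + t • dir none).2 ^ b - (Z + t • dir none).2 := by
      funext t; simp [dir]
    rw [e] at h
    exact h.congr_val (by simp [cy1]) (by simp [cy2])
  | some i =>
    have h := hasD2_const (Z.2 ^ b - Z.2)
    simpa [dir, cy1, cy2] using h

lemma barrier_one {n : ℕ} {a : ℝ} (ha0 : 0 < a) (ha1 : a < 1) {v : En n × ℝ → ℝ} {ρ N : ℝ}
    (hρ : 0 < ρ) (hρ1 : ρ ≤ 1) (hN : 0 < N) (hc : ContinuousOn v (cP 0 ρ))
    (hv : IsAHarmonicOn a v (oP 0 ρ)) (hK : ∀ X ∈ cP (0 : En n × ℝ) ρ, v X ≤ N * ρ)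
    (hM : ∀ z : En n, (z, 0) ∈ cP (0 : En n × ℝ) ρ → v (z, 0) ≤ N * ‖z‖)
    {X : En n × ℝ} (hX : X ∈ cP (0 : En n × ℝ) ρ) :
    v X ≤ N * (eN X + (n + 1 + a) / a * (X.2 ^ (1 - a) - X.2)) := by
  have hb : 0 < 1 - a := by linarith
  set B : ℝ := (n + 1 + a) / a with hB
  have hB0 : 0 < B := by positivity
  set S : En n × ℝ → ℝ := fun X => eN X + B * (X.2 ^ (1 - a) - X.2) with hS
  have hcS : Continuous S := by
    have := Real.continuous_rpow_const hb.le
    have := continuous_eN (n := n)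
    fun_prop
  have hSe : ∀ Y ∈ cP (0 : En n × ℝ) ρ, eN Y ≤ S Y := by
    intro Y hY
    have y0 := hY.1
    have y1 : Y.2 ≤ 1 := by
      have := hY.2
      rw [sub_zero] at this
      exact (le_abs_self _).trans ((snd_le_eN Y).trans (this.trans hρ1))
    have : Y.2 ≤ Y.2 ^ (1 - a) := by
      rcases y0.eq_or_lt with h | h
      · rw [← h, Real.zero_rpow hb.ne']
      · have := Real.rpow_le_rpow_of_exponent_ge h y1 (show 1 - a ≤ 1 by linarith)
        rwa [Real.rpow_one] at this
    have := mul_nonneg hB0.le (sub_nonneg.2 this)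
    simp only [hS]; linarith
  set Φ : En n × ℝ → ℝ := fun X => v X - N * S X with hΦ
  have hcΦ : ContinuousOn Φ (cP 0 ρ) := hc.sub (hcS.const_mul N |>.continuousOn)
  obtain ⟨Z, hZ, hmax⟩ := (isCompact_cP _ _).exists_isMaxOn ⟨X, hX⟩ hcΦ
  have hXZ : Φ X ≤ Φ Z := hmax hX
  suffices hZ0 : Φ Z ≤ 0 by
    have : v X - N * S X ≤ 0 := hXZ.trans hZ0
    simp only [hS] at this; linarith
  have hSZ := mul_le_mul_of_nonneg_left (hSe Z hZ) hN.le
  rcases hZ.1.eq_or_lt with hz | hz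
  · have eZ : Z = (Z.1, 0) := by apply Prod.ext <;> simp [← hz]
    have h1 := hM Z.1 (eZ ▸ hZ)
    rw [← eZ] at h1
    have : N * ‖Z.1‖ ≤ N * eN Z := mul_le_mul_of_nonneg_left (fst_le_eN Z) hN.le
    simp only [hΦ]; linarith
  have hZe : eN Z ≤ ρ := by simpa using hZ.2
  rcases hZe.eq_or_lt with he | he
  · have h1 := hK Z hZ
    rw [← he] at h1
    simp only [hΦ]; linarith
  exfalso
  have hZo : Z ∈ oP (0 : En n × ℝ) ρ := ⟨hz, by simpa using he⟩
  have hloc : IsLocalMax Φ Z := by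
    filter_upwards [(isOpen_oP _ _).mem_nhds hZo] with Y hY using hmax (oP_sub_cP _ _ hY)
  have e0 : 0 < eN Z := hz.trans_le ((le_abs_self _).trans (snd_le_eN Z))
  have hcd : ContDiffAt ℝ 2 v Z := hv.1.contDiffAt ((isOpen_oP _ _).mem_nhds hZo)
  refine no_max (a := a / Z.2) hloc
    (fun o => fderiv ℝ v Z (dir o) - N * (co o Z / eN Z + B * cy1 Z.2 (1 - a) o))
    (fun o => D2 v Z (dir o) - N * (1 / eN Z - co o Z ^ 2 / eN Z ^ 3 + B * cy2 Z.2 (1 - a) o))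
    (fun o => (hasD2_contDiff hcd (dir o)).sub
      (((hasD2_eN e0 o).add ((hasD2_cy hz (1 - a) o).const_mul B)).const_mul N)) ?_
  have hsum : ∑ o, D2 v Z (dir o) + a / Z.2 * fderiv ℝ v Z (dir none) = 0 := by
    rw [← lap_eq]; exact hv.2 Z hZo
  have hs2 : ∑ o : Option (Fin n), cy2 Z.2 (1 - a) o = (1 - a) * (-a * Z.2 ^ ((1 - a) - 2)) := by
    rw [Fintype.sum_option]; simp [cy2]
  have hco : ∑ o, co o Z ^ 2 = eN Z ^ 2 := (eN_sq_sum Z).symm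
  have hyp : Z.2 ^ ((1 - a) - 1) = Z.2 * Z.2 ^ ((1 - a) - 2) := by
    rw [show (1 - a) - 1 = 1 + ((1 - a) - 2) by ring, Real.rpow_add hz, Real.rpow_one]
  have hcn : co none Z = Z.2 := rfl
  simp only [Finset.sum_sub_distrib, ← Finset.mul_sum, Finset.sum_add_distrib, hs2,
    ← Finset.sum_div, hco, Finset.sum_const, Finset.card_univ, Fintype.card_option,
    Fintype.card_fin, nsmul_eq_mul, cy1, hcn, hyp]
  have key : ∑ o, D2 v Z (dir o) - N * (((n + 1 : ℕ) : ℝ) * 1 / eN Z - eN Z ^ 2 / eN Z ^ 3 +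
      B * ((1 - a) * (-a * Z.2 ^ ((1 - a) - 2)))) + a / Z.2 * (fderiv ℝ v Z (dir none) -
      N * (Z.2 / eN Z + B * ((1 - a) * (Z.2 * Z.2 ^ ((1 - a) - 2)) - 1))) =
      N * (B * a / Z.2 - (n + a) / eN Z) := by
    have : ∑ o, D2 v Z (dir o) = - (a / Z.2 * fderiv ℝ v Z (dir none)) := by linarith
    rw [this]
    push_cast
    field_simp
    ring
  refine lt_of_lt_of_eq ?_ key.symm
  apply mul_pos hN
  rw [sub_pos, show B * a = n + 1 + a by rw [hB]; field_simp]
  have hle : Z.2 ≤ eN Z := (le_abs_self _).trans (snd_le_eN Z)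
  calc ((n:ℝ) + a) / eN Z ≤ (n + a) / Z.2 := by gcongr
    _ < (n + 1 + a) / Z.2 := by gcongr; linarith

lemma barrier {n : ℕ} {a : ℝ} (ha0 : 0 < a) (ha1 : a < 1) {v : En n × ℝ → ℝ} {ρ N : ℝ}
    (hρ : 0 < ρ) (hρ1 : ρ ≤ 1) (hN : 0 ≤ N) (hc : ContinuousOn v (cP 0 ρ))
    (hv : IsAHarmonicOn a v (oP 0 ρ)) (hK : ∀ X ∈ cP (0 : En n × ℝ) ρ, v X ≤ N * ρ)
    (hM : ∀ z : En n, (z, 0) ∈ cP (0 : En n × ℝ) ρ → v (z, 0) ≤ N * ‖z‖)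
    {y : ℝ} (hy0 : 0 ≤ y) (hy : y ≤ ρ) :
    v (0, y) ≤ N * ((1 + (n + 1 + a) / a) * y ^ (1 - a)) := by
  have hb : 0 < 1 - a := by linarith
  have hT : Tendsto (fun ε : ℝ => (N + ε) * ((1 + (n + 1 + a) / a) * y ^ (1 - a))) (𝓝[>] 0)
      (𝓝 (N * ((1 + (n + 1 + a) / a) * y ^ (1 - a)))) := by
    have : Continuous (fun ε : ℝ => (N + ε) * ((1 + (n + 1 + a) / a) * y ^ (1 - a))) := by fun_prop
    have := (this.tendsto 0).mono_left (nhdsWithin_le_nhds (s := Ioi 0))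
    simpa using this
  refine ge_of_tendsto hT ?_
  filter_upwards [self_mem_nhdsWithin] with ε hε
  have hε0 : 0 < ε := hε
  have := barrier_one (N := N + ε) (X := (0, y)) ha0 ha1 hρ hρ1 (by positivity) hc hv
    (fun X hX => (hK X hX).trans (by gcongr; linarith))
    (fun z hz => (hM z hz).trans (by gcongr; linarith))
    ⟨hy0, by simpa [eN_ver, abs_of_nonneg hy0] using hy⟩
  refine this.trans ?_
  gcongr
  rw [eN_ver, abs_of_nonneg hy0]
  have hyy : y ≤ y ^ (1 - a) := by
    rcases hy0.eq_or_lt with h | h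
    · rw [← h, Real.zero_rpow hb.ne']
    · have := Real.rpow_le_rpow_of_exponent_ge h (hy.trans hρ1) (show 1 - a ≤ 1 by linarith)
      rwa [Real.rpow_one] at this
  have : 0 ≤ (n + 1 + a) / a * y := by positivity
  simp only
  linarith


/-! ### Assembly -/

lemma IsAHarmonicOn.affine {n : ℕ} {a : ℝ} {u : En n × ℝ → ℝ} {S : Set (En n × ℝ)}
    (hS : IsOpen S) (h : IsAHarmonicOn a u S) (σ c : ℝ) :
    IsAHarmonicOn a (fun X => σ * u X + c) S := by
  refine ⟨(contDiffOn_const.mul h.1).add contDiffOn_const, fun p hp => ?_⟩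
  have hcd : ∀ q ∈ S, ContDiffAt ℝ 2 u q := fun q hq => h.1.contDiffAt (hS.mem_nhds hq)
  have hf : ∀ q ∈ S, ∀ v, fderiv ℝ (fun X => σ * u X + c) q v = σ * fderiv ℝ u q v := by
    intro q hq v
    have := (((hcd q hq).differentiableAt (by simp)).hasFDerivAt.const_mul σ).add_const c
    rw [this.fderiv]; simp
  have hd : ∀ v, D2 (fun X => σ * u X + c) p v = σ * D2 u p v := by
    intro v
    unfold D2
    have e : (fun q => fderiv ℝ (fun X => σ * u X + c) q v) =ᶠ[𝓝 p]
        fun q => σ * fderiv ℝ u q v := by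
      filter_upwards [hS.mem_nhds hp] with q hq using hf q hq v
    rw [e.fderiv_eq]
    have h2 : ContDiffAt ℝ 1 (fderiv ℝ u) p := (hcd p hp).fderiv_right (by norm_num)
    have h3 : DifferentiableAt ℝ (fun q => fderiv ℝ u q v) p :=
      (h2.differentiableAt (by simp)).clm_apply (differentiableAt_const v)
    rw [(h3.hasFDerivAt.const_mul σ).fderiv]; simp
  have e := h.2 p hp
  rw [lap_eq] at e ⊢
  simp only [hd, hf p hp, ← Finset.mul_sum]
  linear_combination σ * e

def cq (n : ℕ) (c0 : ℝ) : ℝ := n * Qc n 1 1 c0 (3 / 4)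
def ck (n : ℕ) (c0 : ℝ) : ℝ := 1 + (n + 4) * c0 / (3 / 16)
def cn (n : ℕ) (c0 : ℝ) : ℝ := 1 + (ck n c0 + 1) / (3 / 8)
def ce (n : ℕ) (a c0 : ℝ) : ℝ := cn n c0 * (1 + (n + 1 + a) / a)
def cd (n : ℕ) (c0 : ℝ) : ℝ := 8 * (2 * c0 + cq n c0)

lemma Dat.horiz {n : ℕ} {a T c0 : ℝ} {u : En n × ℝ → ℝ} (H : Dat n a u T T)
    (hc0 : 0 ≤ c0) (hK : ∀ X ∈ cP (0 : En n × ℝ) (3 / 4), |u X| ≤ c0 * T) {h : En n}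
    (hh : ‖h‖ ≤ 1 / 8) {y : ℝ} (hy0 : 0 ≤ y) (hy : y ≤ 3 / 8) :
    |u (h, y) - u (0, y) - (u (h, 0) - u (0, 0))| ≤ ce n a c0 * T * (‖h‖ * y ^ (1 - a)) := by
  have hT := H.m1
  have hin : eN (0 : En n × ℝ) + 3 / 4 < 1 := by rw [eN_zero]; norm_num
  have hk0 : 0 ≤ ck n c0 := by unfold ck; positivity
  have hn0 : 0 ≤ cn n c0 := by unfold cn; positivity
  have hfirst : ∀ X ∈ cP (0 : En n × ℝ) (3 / 8), |u (X + (h, 0)) - u X| ≤ ck n c0 * T * ‖h‖ := by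
    intro X hX
    have := H.first (by norm_num) hin hK (X := X) ⟨hX.1, by linarith [hX.2]⟩ (h := h) (by linarith)
    refine this.trans (le_of_eq ?_)
    unfold ck; ring
  have hin' : ∀ X : En n × ℝ, 0 ≤ X.2 → eN X ≤ 3 / 8 → X + (h, 0) ∈ halfBallWithBase n 1 := by
    intro X h1 h2
    have := eN_add X (h, 0)
    rw [eN_hor] at this
    exact mem_hbb.2 ⟨by simpa using h1, by linarith⟩
  have hsub : cP (0 : En n × ℝ) (3 / 8) ⊆ halfBallWithBase n 1 :=
    cP_hbb (by rw [eN_zero]; norm_num)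
  have f0 : |u (h, 0) - u (0, 0)| ≤ T * ‖h‖ := by
    have := H.t1 0 h (by simp) (by rw [zero_add]; linarith)
    simpa using this
  have hW : IsAHarmonicOn a (fun X => u (X + (h, 0)) - u X) (oP 0 (3 / 8)) := by
    refine H.h.diff isOpen_hb h (isOpen_oP _ _) (oP_hb (by rw [eN_zero]; norm_num)) ?_
    intro X hX
    have := hin' X hX.1.le (by simpa using hX.2.le)
    exact mem_hb.2 ⟨by simpa using hX.1, (mem_hbb.1 this).2⟩
  have cW : ContinuousOn (fun X => u (X + (h, 0)) - u X) (cP 0 (3 / 8)) :=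
    (H.c.comp (by fun_prop) fun X hX => hin' X hX.1 (by simpa using hX.2)).sub (H.c.mono hsub)
  have main : ∀ σ : ℝ, |σ| = 1 →
      σ * (u (h, y) - u (0, y) - (u (h, 0) - u (0, 0))) ≤
        ce n a c0 * T * (‖h‖ * y ^ (1 - a)) := by
    intro σ hσ
    have b := barrier (v := fun X => σ * (u (X + (h, 0)) - u X) + -(σ * (u (h, 0) - u (0, 0))))
      (ρ := 3 / 8) (N := cn n c0 * T * ‖h‖) H.a0 H.a1 (by norm_num) (by norm_num) (by positivity)
      ((continuousOn_const.mul cW).add continuousOn_const)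
      (hW.affine (isOpen_oP _ _) σ _) ?_ ?_ hy0 hy
    · simp only [Prod.mk_add_mk, zero_add, add_zero] at b
      calc _ = _ := by ring
        _ ≤ _ := b
        _ = _ := by unfold ce; ring
    · intro X hX
      have h1 := hfirst X hX
      rw [← mul_neg, ← mul_add]
      refine (le_abs_self _).trans ?_
      rw [abs_mul, hσ, one_mul, ← sub_eq_add_neg]
      refine (abs_sub _ _).trans ?_
      have : cn n c0 * T * ‖h‖ * (3 / 8) = (3 / 8) * (T * ‖h‖) + ck n c0 * T * ‖h‖ + T * ‖h‖ := by
        unfold cn; ring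
      have : 0 ≤ T * ‖h‖ := by positivity
      linarith
    · intro z hz
      have hz1 : ‖z‖ ≤ 3 / 8 := by simpa [eN_hor] using hz.2
      have := H.t2 0 h z (by simp) (by rw [zero_add]; linarith) (by rw [zero_add]; linarith)
        (by rw [zero_add]; linarith [norm_add_le z h])
      simp only [zero_add] at this
      rw [← mul_neg, ← mul_add]
      refine (le_abs_self _).trans ?_
      rw [abs_mul, hσ, one_mul, ← sub_eq_add_neg]
      simp only [Prod.mk_add_mk, add_zero]
      refine this.trans ?_
      have : 1 ≤ cn n c0 := by
        unfold cn
        have : 0 ≤ (ck n c0 + 1) / (3 / 8) := by positivity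
        linarith
      calc T * ‖h‖ * ‖z‖ = 1 * T * ‖h‖ * ‖z‖ := by ring
        _ ≤ cn n c0 * T * ‖h‖ * ‖z‖ := by gcongr
  have p1 := main 1 (by simp)
  have p2 := main (-1) (by simp)
  rw [abs_le]; constructor <;> linarith

def cf (n : ℕ) (a c0 : ℝ) : ℝ :=
  ce n a c0 + cq n c0 + 1 + 64 * (2 * c0 + 1 + cd n c0) + cd n c0

lemma Dat.expansion {n : ℕ} {a T c0 : ℝ} {u : En n × ℝ → ℝ} (H : Dat n a u T T)
    (hc0 : 0 ≤ c0) (hK : ∀ X ∈ cP (0 : En n × ℝ) (3 / 4), |u X| ≤ c0 * T)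
    {l : En n →L[ℝ] ℝ} (hl : ‖l‖ ≤ T)
    (hlt : ∀ x : En n, ‖x‖ < 1 → |u (x, 0) - u (0, 0) - l x| ≤ T * ‖x‖ ^ 2) :
    ∃ D : ℝ, |D| ≤ cf n a c0 * T ∧ ∀ p ∈ halfBall n (1 / 2),
      |u p - u (0, 0) - l p.1 - D * p.2 ^ (1 - a)| ≤
        cf n a c0 * T * (‖p.1‖ ^ 2 + p.2 ^ 2 + ‖p.1‖ * p.2 ^ (1 - a)) := by
  have hT := H.m1
  have ha0 := H.a0
  have ha1 := H.a1
  have hb : 0 < 1 - a := by linarith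
  have hin : eN (0 : En n × ℝ) + 3 / 4 < 1 := by rw [eN_zero]; norm_num
  have hq0 : 0 ≤ cq n c0 := by unfold cq Qc; positivity
  have hk0 : 0 ≤ ck n c0 := by unfold ck; positivity
  have hn0 : 0 ≤ cn n c0 := by unfold cn; positivity
  have he0 : 0 ≤ ce n a c0 := by unfold ce; positivity
  have hd0 : 0 ≤ cd n c0 := by unfold cd; positivity
  have hm : ∀ y : ℝ, 0 ≤ y → y ≤ 3 / 16 →
      (0 : En n × ℝ) + y • (0, 1) ∈ cP (0 : En n × ℝ) (3 / 4 / 4) := by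
    intro y h1 h2
    refine ⟨by simpa using h1, ?_⟩
    have : (0 : En n × ℝ) + y • (0, 1) - 0 = (0, y) := by apply Prod.ext <;> simp
    rw [this, eN_ver, abs_of_nonneg h1]; linarith
  have hmp : ∀ y ∈ Ioo (0:ℝ) (3 / 16), (0 : En n × ℝ) + y • (0, 1) ∈ halfBall n 1 := by
    intro y hy
    have := hm y hy.1.le hy.2.le
    refine mem_hb.2 ⟨by simpa using hy.1, ?_⟩
    have := eN_le_of_cP this
    rw [eN_zero] at this; linarith
  obtain ⟨D, hD⟩ := vert_exp (Y := 3 / 16) (Q := cq n c0 * T) H.a0 H.a1 (by norm_num)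
    (g := fun y => u ((0 : En n × ℝ) + y • (0, 1)))
    (H.c.comp (by fun_prop) fun y hy =>
      cP_hbb (X0 := 0) (R := 3 / 4 / 4) (by rw [eN_zero]; norm_num) (hm y hy.1 hy.2.le))
    (fun y hy => (H.vdata (hmp y hy)).1) (fun y hy => (H.vdata (hmp y hy)).2) (by
      intro y hy
      have := H.lapx (by norm_num) (by positivity) hin hK (hm y hy.1.le hy.2.le)
        (by simpa using hy.1)
      have e : cq n c0 * T = n * Qc n T T (c0 * T) (3 / 4) := by unfold cq Qc; ring
      rw [e]
      simpa using this)
  have hv : ∀ y : ℝ, (0 : En n × ℝ) + y • (0, 1) = (0, y) := fun y => by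
    apply Prod.ext <;> simp
  simp only [hv] at hD
  have hDb : |D| ≤ cd n c0 * T := by
    have h8 := hD (1 / 8) ⟨by norm_num, by norm_num⟩
    have k0 := hK (0, 0) ⟨le_rfl, by rw [sub_zero, eN_hor, norm_zero]; norm_num⟩
    have k8 := hK (0, 1 / 8) ⟨by norm_num, by rw [sub_zero, eN_ver]; norm_num [abs_of_pos]⟩
    have hp : (1 / 8 : ℝ) ≤ (1 / 8 : ℝ) ^ (1 - a) := by
      have := Real.rpow_le_rpow_of_exponent_ge (x := 1 / 8) (by norm_num) (by norm_num)
        (show 1 - a ≤ 1 by linarith)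
      rwa [Real.rpow_one] at this
    have t1 : |D * (1 / 8) ^ (1 - a)| ≤ 2 * (c0 * T) + cq n c0 * T * (1 / 8) ^ 2 := by
      have := abs_sub (u (0, 1 / 8) - u (0, 0))
        (u (0, 1 / 8) - u (0, 0) - D * (1 / 8) ^ (1 - a))
      rw [sub_sub_cancel] at this
      linarith [abs_sub (u (0, 1 / 8)) (u (0, 0))]
    rw [abs_mul, abs_of_pos (a := (1 / 8 : ℝ) ^ (1 - a)) (by linarith)] at t1
    have t2 : |D| * (1 / 8) ≤ |D| * (1 / 8) ^ (1 - a) := by gcongr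
    have : 0 ≤ cq n c0 * T := by positivity
    have : cd n c0 * T = 8 * (2 * (c0 * T) + cq n c0 * T) := by unfold cd; ring
    linarith
  refine ⟨D, hDb.trans ?_, ?_⟩
  · gcongr
    unfold cf
    linarith
  rintro ⟨x, y⟩ hp
  have hy0 : 0 < y := hp.2
  have hpe : ‖x‖ ^ 2 + y ^ 2 < (1 / 2) ^ 2 := hp.1
  have hx1 : ‖x‖ < 1 / 2 := by nlinarith [norm_nonneg x, sq_nonneg y]
  have hy1 : y < 1 / 2 := by nlinarith [sq_nonneg ‖x‖]
  have hyb : 0 ≤ y ^ (1 - a) := Real.rpow_nonneg hy0.le _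
  have hyb1 : y ^ (1 - a) ≤ 1 := Real.rpow_le_one hy0.le (by linarith) hb.le
  simp only
  have G0 : 0 ≤ ‖x‖ * y ^ (1 - a) := by positivity
  have G1 : 0 ≤ ‖x‖ ^ 2 := by positivity
  have G2 : 0 ≤ y ^ 2 := by positivity
  rcases lt_or_ge (‖x‖ ^ 2 + y ^ 2) (1 / 64) with hc | hc
  · have hx : ‖x‖ ≤ 1 / 8 := by nlinarith [norm_nonneg x]
    have hy : y < 1 / 8 := by nlinarith
    have a1 := H.horiz hc0 hK hx hy0.le (by linarith)
    have a2 := hD y ⟨hy0, by linarith⟩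
    have a3 := hlt x (by linarith)
    have e : u (x, y) - u (0, 0) - l x - D * y ^ (1 - a) =
        (u (x, y) - u (0, y) - (u (x, 0) - u (0, 0))) + (u (0, y) - u (0, 0) - D * y ^ (1 - a)) +
          (u (x, 0) - u (0, 0) - l x) := by ring
    rw [e]
    refine (abs_add_three _ _ _).trans ?_
    set G := ‖x‖ ^ 2 + y ^ 2 + ‖x‖ * y ^ (1 - a) with hG
    have g1 : ce n a c0 * T * (‖x‖ * y ^ (1 - a)) ≤ ce n a c0 * T * G := by
      gcongr; linarith
    have g2 : cq n c0 * T * y ^ 2 ≤ cq n c0 * T * G := by gcongr; linarith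
    have g3 : T * ‖x‖ ^ 2 ≤ T * G := by gcongr; linarith
    have g4 : 0 ≤ (64 * (2 * c0 + 1 + cd n c0) + cd n c0) * T * G := by positivity
    have g5 : cf n a c0 * T * G = ce n a c0 * T * G + cq n c0 * T * G + T * G +
      (64 * (2 * c0 + 1 + cd n c0) + cd n c0) * T * G := by unfold cf; ring
    linarith
  · have k0 := hK (0, 0) ⟨le_rfl, by rw [sub_zero, eN_hor, norm_zero]; norm_num⟩
    have kp := hK (x, y) ⟨hy0.le, by
      rw [sub_zero]
      have := eN_sq ((x, y) : En n × ℝ)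
      simp only at this
      nlinarith [eN_nonneg ((x, y) : En n × ℝ)]⟩
    have kl : |l x| ≤ T := by
      have := l.le_opNorm x
      rw [Real.norm_eq_abs] at this
      have : ‖l‖ * ‖x‖ ≤ T * 1 := by gcongr; linarith
      linarith
    have kd : |D * y ^ (1 - a)| ≤ cd n c0 * T * 1 := by
      rw [abs_mul, abs_of_nonneg hyb]
      gcongr
    have t : |u (x, y) - u (0, 0) - l x - D * y ^ (1 - a)| ≤ (2 * c0 + 1 + cd n c0) * T := by
      have t1 := abs_sub (u (x, y) - u (0, 0) - l x) (D * y ^ (1 - a))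
      have t2 := abs_sub (u (x, y) - u (0, 0)) (l x)
      have t3 := abs_sub (u (x, y)) (u (0, 0))
      linarith
    refine t.trans ?_
    set G := ‖x‖ ^ 2 + y ^ 2 + ‖x‖ * y ^ (1 - a) with hG
    have g1 : 1 / 64 ≤ G := by linarith
    have g4 : 0 ≤ (ce n a c0 + cq n c0 + 1 + cd n c0) * T * G := by positivity
    have g5 : cf n a c0 * T * G = (ce n a c0 + cq n c0 + 1 + cd n c0) * T * G +
      (2 * c0 + 1 + cd n c0) * T * (64 * G) := by unfold cf; ring
    have g6 : (2 * c0 + 1 + cd n c0) * T * 1 ≤ (2 * c0 + 1 + cd n c0) * T * (64 * G) := by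
      gcongr; linarith
    linarith


lemma flat_seg {n : ℕ} {x k z : En n} (h1 : ‖x‖ < 1) (h2 : ‖x + k‖ < 1)
    (hz : z ∈ segment ℝ x (x + k)) : z ∈ flatBall n 1 := by
  have hc : Convex ℝ (Metric.ball (0 : En n) 1) := convex_ball _ _
  have := hc.segment_subset (mem_ball_zero_iff.2 h1) (mem_ball_zero_iff.2 h2) hz
  exact mem_ball_zero_iff.1 this

lemma flat_open {n : ℕ} : IsOpen (flatBall n 1) := isOpen_lt continuous_norm continuous_const

lemma flat_convex {n : ℕ} : Convex ℝ (flatBall n 1) := by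
  have : flatBall n 1 = Metric.ball (0 : En n) 1 := by
    ext x; rw [mem_ball_zero_iff]; rfl
  rw [this]; exact convex_ball _ _

lemma mk_dat {n : ℕ} {a : ℝ} (ha0 : 0 < a) (ha1 : a < 1) {u : En n × ℝ → ℝ}
    {f' : En n → (En n →L[ℝ] ℝ)} {T1 T2 : ℝ} (hT1 : 0 ≤ T1) (hT2 : 0 ≤ T2)
    (hc : ContinuousOn u (halfBallWithBase n 1)) (hu : IsAHarmonicOn a u (halfBall n 1))
    (hf : ∀ x ∈ flatBall n 1, HasFDerivWithinAt (fun z => u (z, 0)) (f' x) (flatBall n 1) x)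
    (h1 : ∀ x ∈ flatBall n 1, ‖f' x‖ ≤ T1)
    (h2 : ∀ x ∈ flatBall n 1, ∀ x' ∈ flatBall n 1, ‖f' x - f' x'‖ ≤ T2 * ‖x - x'‖) :
    Dat n a u T1 T2 := by
  refine ⟨ha0, ha1, hc, hu, hT1, hT2, ?_, ?_⟩
  · intro x h hx hxh
    have := flat_convex.norm_image_sub_le_of_norm_hasFDerivWithin_le hf h1
      (show x ∈ flatBall n 1 from hx) (show x + h ∈ flatBall n 1 from hxh)
    simpa using this
  · intro x h k hx hxh hxk hxkh
    have hd : ∀ z ∈ segment ℝ x (x + k), z ∈ flatBall n 1 ∧ z + h ∈ flatBall n 1 := by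
      intro z hz
      refine ⟨flat_seg hx hxk hz, ?_⟩
      apply flat_seg (x := x + h) (k := k) hxh (by rwa [add_right_comm])
      have := (mem_segment_translate ℝ h (x := z) (b := x) (c := x + k)).2 hz
      rwa [add_comm h z, add_comm h x, add_comm h (x + k), add_right_comm] at this
    have hA : ∀ z ∈ flatBall n 1, HasFDerivAt (fun z => u (z, 0)) (f' z) z := fun z hz =>
      (hf z hz).hasFDerivAt (flat_open.mem_nhds hz)
    have := (convex_segment x (x + k)).norm_image_sub_le_of_norm_hasFDerivWithin_le (𝕜 := ℝ)
      (f := fun z => u (z + h, 0) - u (z, 0)) (f' := fun z => f' (z + h) - f' z)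
      (C := T2 * ‖h‖) (x := x) (y := x + k) ?_ ?_ (left_mem_segment ℝ _ _)
      (right_mem_segment ℝ _ _)
    · simpa using this
    · intro z hz
      have d1 : HasFDerivAt (fun z => u (z + h, 0)) (f' (z + h)) z :=
        (hasFDerivAt_comp_add_right h (f := fun z => u (z, 0))).2 (hA (z + h) (hd z hz).2)
      exact (d1.sub (hA z (hd z hz).1)).hasFDerivWithinAt
    · intro z hz
      have := h2 (z + h) (hd z hz).2 z (hd z hz).1
      rwa [add_sub_cancel_left] at this

lemma taylor_flat {n : ℕ} {u : En n × ℝ → ℝ} {f' : En n → (En n →L[ℝ] ℝ)} {T : ℝ} (hT : 0 ≤ T)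
    (hf : ∀ x ∈ flatBall n 1, HasFDerivWithinAt (fun z => u (z, 0)) (f' x) (flatBall n 1) x)
    (h2 : ∀ x ∈ flatBall n 1, ∀ x' ∈ flatBall n 1, ‖f' x - f' x'‖ ≤ T * ‖x - x'‖)
    (x : En n) (hx : ‖x‖ < 1) : |u (x, 0) - u (0, 0) - f' 0 x| ≤ T * ‖x‖ ^ 2 := by
  have hseg : ∀ z ∈ segment ℝ 0 x, z ∈ flatBall n 1 ∧ ‖z‖ ≤ ‖x‖ := by
    intro z hz
    have hb : z ∈ Metric.closedBall (0 : En n) ‖x‖ :=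
      (convex_closedBall _ _).segment_subset (by simp) (by simp) hz
    have hz1 := mem_closedBall_zero_iff.1 hb
    exact ⟨hz1.trans_lt hx, hz1⟩
  have h0 : (0 : En n) ∈ flatBall n 1 := by simp [flatBall]
  have := (convex_segment 0 x).norm_image_sub_le_of_norm_hasFDerivWithin_le' (𝕜 := ℝ)
    (f := fun z => u (z, 0)) (f' := f') (φ := f' 0) (C := T * ‖x‖) (x := 0) (y := x)
    (fun z hz => (hf z (hseg z hz).1).mono fun w hw => (hseg w hw).1) ?_
    (left_mem_segment ℝ _ _) (right_mem_segment ℝ _ _)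
  · rw [sub_zero] at this
    refine this.trans (le_of_eq ?_)
    ring
  · intro z hz
    refine (h2 z (hseg z hz).1 0 h0).trans ?_
    rw [sub_zero]
    have := (hseg z hz).2
    gcongr


/-- **Corollary 2.4 (first order expansion with normal term).** If `u` is `a`-harmonic in
`B_1^+`, lies in `L²(B_1^+, y^a)`, and its trace `f(x) = u(x,0)` is `C^{1,1}` on `B_1^0`,
then there is `D ∈ ℝ` with
`|u(x,y) - f(0) - ∇f(0)·x - D y^{1-a}| ≤ C (|x|² + y² + |x| y^{1-a})` in `B_{1/2}^+`,
where `C` and `|D|` are controlled in terms of `n`, `a`, the `C^{1,1}` norm of `f` and the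
weighted `L²` norm of `u` (here `a = 1-2s`, `1-a = 2s`). -/
theorem first_order_expansion (n : ℕ) (hn : 1 ≤ n) (s : ℝ) (hs : s ∈ Ioo (0 : ℝ) (1/2)) :
    ∃ C > 0, ∀ (u : En n × ℝ → ℝ) (f' : En n → (En n →L[ℝ] ℝ)) (M0 M1 M2 J : ℝ),
      ContinuousOn u (halfBallWithBase n 1) →
      IsAHarmonicOn (1 - 2*s) u (halfBall n 1) →
      IntegrableOn (fun p : En n × ℝ => p.2 ^ (1 - 2*s) * (u p)^2) (halfBall n 1) volume →
      (∀ x ∈ flatBall n 1, HasFDerivWithinAt (fun z => u (z, 0)) (f' x) (flatBall n 1) x) →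
      (∀ x ∈ flatBall n 1, |u (x, 0)| ≤ M0) →
      (∀ x ∈ flatBall n 1, ‖f' x‖ ≤ M1) →
      (∀ x ∈ flatBall n 1, ∀ x' ∈ flatBall n 1, ‖f' x - f' x'‖ ≤ M2 * ‖x - x'‖) →
      0 ≤ J →
      (∫ p in halfBall n 1, p.2 ^ (1 - 2*s) * (u p)^2) ≤ J^2 →
      ∃ D : ℝ, |D| ≤ C * (M0 + M1 + M2 + J) ∧
        ∀ p ∈ halfBall n (1/2),
          |u p - u (0, 0) - f' 0 p.1 - D * p.2 ^ (2*s)| ≤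
            C * (M0 + M1 + M2 + J) * (‖p.1‖^2 + p.2^2 + ‖p.1‖ * p.2 ^ (2*s)) := by
  obtain ⟨hs0, hs1⟩ := hs
  have ha0 : 0 < 1 - 2 * s := by linarith
  have ha1 : 1 - 2 * s < 1 := by linarith
  obtain ⟨c, hc, hsup⟩ := sup_bound n ha0 ha1
  have hc0 : 0 ≤ 2 * c := by positivity
  have hcf : 0 < cf n (1 - 2 * s) (2 * c) := by
    unfold cf cd ce cn ck cq Qc; positivity
  refine ⟨cf n (1 - 2 * s) (2 * c), hcf, ?_⟩
  intro u f' M0 M1 M2 J huc hu hint hf h0 h1 h2 hJ0 hJ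
  have z0 : (0 : En n) ∈ flatBall n 1 := by simp [flatBall]
  have hM0 : 0 ≤ M0 := (abs_nonneg _).trans (h0 0 z0)
  have hM1 : 0 ≤ M1 := (norm_nonneg _).trans (h1 0 z0)
  have hM2 : 0 ≤ M2 := by
    set w : En n := EuclideanSpace.single ⟨0, hn⟩ (1 / 2 : ℝ) with hw
    have hwn : ‖w‖ = 1 / 2 := by rw [hw]; simp
    have hwm : w ∈ flatBall n 1 := by
      change ‖w‖ < 1
      rw [hwn]; norm_num
    have := (norm_nonneg _).trans (h2 w hwm 0 z0)
    rw [sub_zero, hwn] at this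
    linarith
  set T := M0 + M1 + M2 + J with hT
  have hT0 : 0 ≤ T := by positivity
  have h1T : ∀ x ∈ flatBall n 1, ‖f' x‖ ≤ T := fun x hx => (h1 x hx).trans (by linarith)
  have h2T : ∀ x ∈ flatBall n 1, ∀ x' ∈ flatBall n 1, ‖f' x - f' x'‖ ≤ T * ‖x - x'‖ :=
    fun x hx x' hx' => (h2 x hx x' hx').trans (by gcongr; linarith)
  have H1 := mk_dat ha0 ha1 hM1 hM2 huc hu hf h1 h2
  have H := mk_dat ha0 ha1 hT0 hT0 huc hu hf h1T h2T
  have hK : ∀ X ∈ cP (0 : En n × ℝ) (3 / 4), |u X| ≤ 2 * c * T := by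
    intro X hX
    refine (hsup u M1 M2 J H1 hJ0 hint hJ X hX).trans ?_
    have : c * (M1 + M2 + J) ≤ c * T := by gcongr; linarith
    have : 0 ≤ c * T := by positivity
    linarith
  have := H.expansion hc0 hK (l := f' 0) (h1T 0 z0) (taylor_flat hT0 hf h2T)
  rwa [show 1 - (1 - 2 * s) = 2 * s by ring] at this

end
end

section
/- Let α ∈ (0,1) and let X₀ = (x₀,y₀) be any point with |x₀|² + y₀² = 1 and y₀ > 0. There exists a constant C > 0, depending only on n, a and α, such that the function B(X) = C(1 − |X|²)^α + |X − X₀|^α satisfies ΔB(X) + (a/y) ∂_y B(X) ≤ 0 at every point X = (x,y) ∈ B_1^+ (equivalently, div(y^a ∇B) ≤ 0 in B_1^+). -/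
open Set Filter Topology MeasureTheory
open scoped RealInnerProductSpace

noncomputable section

/-- Linear form giving the derivative of `‖q.1 - x₀‖^2 + (q.2 - y₀)^2`. -/
def dirL {n : ℕ} (x : En n) (y : ℝ) : En n × ℝ →L[ℝ] ℝ :=
  (2:ℝ) • ((innerSL ℝ x).comp (ContinuousLinearMap.fst ℝ (En n) ℝ) +
    y • ContinuousLinearMap.snd ℝ (En n) ℝ)

lemma dirL_apply {n : ℕ} (x : En n) (y : ℝ) (v : En n × ℝ) :
    dirL x y v = 2 * (inner ℝ x v.1 + y * v.2) := by
  simp [dirL]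
  ring

lemma quad_hasFDerivAt {n : ℕ} (x₀ : En n) (y₀ : ℝ) (q : En n × ℝ) :
    HasFDerivAt (fun q : En n × ℝ => ‖q.1 - x₀‖^2 + (q.2 - y₀)^2)
      (dirL (q.1 - x₀) (q.2 - y₀)) q := by
  have h1 : HasFDerivAt (fun q : En n × ℝ => q.1 - x₀) (ContinuousLinearMap.fst ℝ (En n) ℝ) q :=
    hasFDerivAt_fst.sub_const x₀
  have h2 : HasFDerivAt (fun q : En n × ℝ => q.2 - y₀) (ContinuousLinearMap.snd ℝ (En n) ℝ) q :=
    hasFDerivAt_snd.sub_const y₀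
  have h := h1.norm_sq.add (h2.pow 2)
  refine h.congr_fderiv ?_
  ext v <;> simp [dirL]

lemma pow_fderiv {n : ℕ} (x₀ : En n) (y₀ c k γ : ℝ) (q : En n × ℝ)
    (h : 0 < c + k * (‖q.1 - x₀‖^2 + (q.2 - y₀)^2)) :
    HasFDerivAt (fun q : En n × ℝ => (c + k * (‖q.1 - x₀‖^2 + (q.2 - y₀)^2)) ^ γ)
      ((γ * (c + k * (‖q.1 - x₀‖^2 + (q.2 - y₀)^2)) ^ (γ - 1)) •
        (k • dirL (q.1 - x₀) (q.2 - y₀))) q := by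
  exact (((quad_hasFDerivAt x₀ y₀ q).const_mul k).const_add c).rpow_const (Or.inl h.ne')

lemma dirL_fderiv {n : ℕ} (x₀ : En n) (y₀ : ℝ) (v q : En n × ℝ) :
    HasFDerivAt (fun q : En n × ℝ => dirL (q.1 - x₀) (q.2 - y₀) v) (dirL v.1 v.2) q := by
  have : (fun q : En n × ℝ => dirL (q.1 - x₀) (q.2 - y₀) v) =
      fun q => dirL v.1 v.2 q - dirL v.1 v.2 (x₀, y₀) := by
    ext q
    simp only [dirL_apply, real_inner_comm v.1, inner_sub_right]
    ring
  rw [this]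
  exact (dirL v.1 v.2).hasFDerivAt.sub_const _

lemma pow_fderiv2 {n : ℕ} (x₀ : En n) (y₀ c k γ : ℝ) (v q : En n × ℝ)
    (h : 0 < c + k * (‖q.1 - x₀‖^2 + (q.2 - y₀)^2)) :
    ∃ L : En n × ℝ →L[ℝ] ℝ, HasFDerivAt (fun q : En n × ℝ =>
      (γ * (c + k * (‖q.1 - x₀‖^2 + (q.2 - y₀)^2)) ^ (γ - 1)) *
        (k * dirL (q.1 - x₀) (q.2 - y₀) v)) L q ∧
      L v = γ * (γ - 1) * (c + k * (‖q.1 - x₀‖^2 + (q.2 - y₀)^2)) ^ (γ - 2) *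
          (k * dirL (q.1 - x₀) (q.2 - y₀) v) ^ 2 +
        γ * (c + k * (‖q.1 - x₀‖^2 + (q.2 - y₀)^2)) ^ (γ - 1) * (k * dirL v.1 v.2 v) := by
  refine ⟨_, ((pow_fderiv x₀ y₀ c k (γ-1) q h).const_mul γ).mul
    ((dirL_fderiv x₀ y₀ v q).const_mul k), ?_⟩
  have : γ - 1 - 1 = γ - 2 := by ring
  simp only [this, add_apply, smul_apply, smul_eq_mul]
  ring

lemma two_pow {n : ℕ} (x₁ : En n) (y₁ c₁ k₁ γ₁ : ℝ) (x₂ : En n) (y₂ c₂ k₂ γ₂ C : ℝ)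
    (p : En n × ℝ)
    (h1 : 0 < c₁ + k₁ * (‖p.1 - x₁‖^2 + (p.2 - y₁)^2))
    (h2 : 0 < c₂ + k₂ * (‖p.1 - x₂‖^2 + (p.2 - y₂)^2)) (v : En n × ℝ) :
    fderiv ℝ (fun q : En n × ℝ => C * (c₁ + k₁ * (‖q.1 - x₁‖^2 + (q.2 - y₁)^2)) ^ γ₁ +
      (c₂ + k₂ * (‖q.1 - x₂‖^2 + (q.2 - y₂)^2)) ^ γ₂) p v =
      C * ((γ₁ * (c₁ + k₁ * (‖p.1 - x₁‖^2 + (p.2 - y₁)^2)) ^ (γ₁ - 1)) *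
        (k₁ * dirL (p.1 - x₁) (p.2 - y₁) v)) +
      (γ₂ * (c₂ + k₂ * (‖p.1 - x₂‖^2 + (p.2 - y₂)^2)) ^ (γ₂ - 1)) *
        (k₂ * dirL (p.1 - x₂) (p.2 - y₂) v) := by
  have h := ((pow_fderiv x₁ y₁ c₁ k₁ γ₁ p h1).const_mul C).add (pow_fderiv x₂ y₂ c₂ k₂ γ₂ p h2)
  have h' := congrArg (fun L => L v) h.fderiv
  simp only [add_apply, smul_apply, smul_eq_mul] at h'
  exact h'

lemma two_pow_D2 {n : ℕ} (x₁ : En n) (y₁ c₁ k₁ γ₁ : ℝ) (x₂ : En n) (y₂ c₂ k₂ γ₂ C : ℝ)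
    (p : En n × ℝ)
    (h1 : 0 < c₁ + k₁ * (‖p.1 - x₁‖^2 + (p.2 - y₁)^2))
    (h2 : 0 < c₂ + k₂ * (‖p.1 - x₂‖^2 + (p.2 - y₂)^2)) (v : En n × ℝ) :
    D2 (fun q : En n × ℝ => C * (c₁ + k₁ * (‖q.1 - x₁‖^2 + (q.2 - y₁)^2)) ^ γ₁ +
      (c₂ + k₂ * (‖q.1 - x₂‖^2 + (q.2 - y₂)^2)) ^ γ₂) p v =
      C * (γ₁ * (γ₁ - 1) * (c₁ + k₁ * (‖p.1 - x₁‖^2 + (p.2 - y₁)^2)) ^ (γ₁ - 2) *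
          (k₁ * dirL (p.1 - x₁) (p.2 - y₁) v) ^ 2 +
        γ₁ * (c₁ + k₁ * (‖p.1 - x₁‖^2 + (p.2 - y₁)^2)) ^ (γ₁ - 1) * (k₁ * dirL v.1 v.2 v)) +
      (γ₂ * (γ₂ - 1) * (c₂ + k₂ * (‖p.1 - x₂‖^2 + (p.2 - y₂)^2)) ^ (γ₂ - 2) *
          (k₂ * dirL (p.1 - x₂) (p.2 - y₂) v) ^ 2 +
        γ₂ * (c₂ + k₂ * (‖p.1 - x₂‖^2 + (p.2 - y₂)^2)) ^ (γ₂ - 1) * (k₂ * dirL v.1 v.2 v)) := by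
  obtain ⟨L₁, hL₁, e₁⟩ := pow_fderiv2 x₁ y₁ c₁ k₁ γ₁ v p h1
  obtain ⟨L₂, hL₂, e₂⟩ := pow_fderiv2 x₂ y₂ c₂ k₂ γ₂ v p h2
  have h := (hL₁.const_mul C).add hL₂
  have c1 : Continuous (fun q : En n × ℝ => c₁ + k₁ * (‖q.1 - x₁‖^2 + (q.2 - y₁)^2)) := by
    fun_prop
  have c2 : Continuous (fun q : En n × ℝ => c₂ + k₂ * (‖q.1 - x₂‖^2 + (q.2 - y₂)^2)) := by
    fun_prop
  have ev := (c1.tendsto p).eventually (lt_mem_nhds h1)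
  have ev2 := (c2.tendsto p).eventually (lt_mem_nhds h2)
  have h' := h.congr_of_eventuallyEq (by
    filter_upwards [ev, ev2] with q a b
    exact two_pow x₁ y₁ c₁ k₁ γ₁ x₂ y₂ c₂ k₂ γ₂ C q a b v)
  unfold D2
  rw [h'.fderiv, ← e₁, ← e₂]
  simp

lemma two_pow_lap {n : ℕ} (x₁ : En n) (y₁ c₁ k₁ γ₁ : ℝ) (x₂ : En n) (y₂ c₂ k₂ γ₂ C : ℝ)
    (p : En n × ℝ)
    (h1 : 0 < c₁ + k₁ * (‖p.1 - x₁‖^2 + (p.2 - y₁)^2))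
    (h2 : 0 < c₂ + k₂ * (‖p.1 - x₂‖^2 + (p.2 - y₂)^2)) :
    lap (fun q : En n × ℝ => C * (c₁ + k₁ * (‖q.1 - x₁‖^2 + (q.2 - y₁)^2)) ^ γ₁ +
      (c₂ + k₂ * (‖q.1 - x₂‖^2 + (q.2 - y₂)^2)) ^ γ₂) p =
      C * (γ₁ * (γ₁ - 1) * (c₁ + k₁ * (‖p.1 - x₁‖^2 + (p.2 - y₁)^2)) ^ (γ₁ - 2) *
          (4 * k₁ ^ 2 * (‖p.1 - x₁‖^2 + (p.2 - y₁)^2)) +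
        γ₁ * (c₁ + k₁ * (‖p.1 - x₁‖^2 + (p.2 - y₁)^2)) ^ (γ₁ - 1) * (k₁ * (2 * (n + 1)))) +
      (γ₂ * (γ₂ - 1) * (c₂ + k₂ * (‖p.1 - x₂‖^2 + (p.2 - y₂)^2)) ^ (γ₂ - 2) *
          (4 * k₂ ^ 2 * (‖p.1 - x₂‖^2 + (p.2 - y₂)^2)) +
        γ₂ * (c₂ + k₂ * (‖p.1 - x₂‖^2 + (p.2 - y₂)^2)) ^ (γ₂ - 1) * (k₂ * (2 * (n + 1)))) := by
  unfold lap
  simp only [two_pow_D2 x₁ y₁ c₁ k₁ γ₁ x₂ y₂ c₂ k₂ γ₂ C p h1 h2]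
  have key : ∀ (x : En n) (y A B k : ℝ),
      (∑ i : Fin n, (A * (k * dirL x y (EuclideanSpace.single i 1, 0)) ^ 2 +
        B * (k * dirL (EuclideanSpace.single i (1:ℝ)) 0 (EuclideanSpace.single i 1, 0)))) +
       (A * (k * dirL x y (0, 1)) ^ 2 + B * (k * dirL (0 : En n) 1 (0, 1))) =
      A * (4 * k ^ 2 * (‖x‖^2 + y^2)) + B * (k * (2 * (n+1))) := by
    intro x y A B k
    have e : ‖x‖^2 = ∑ i, (x i)^2 := by
      rw [EuclideanSpace.norm_sq_eq]; simp
    simp only [dirL_apply, EuclideanSpace.inner_single_right, inner_zero_right]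
    rw [e]
    simp only [Finset.sum_add_distrib, mul_add, Finset.mul_sum]
    simp
    have : ∀ i, A * (k * (2 * x i))^2 = A * (4 * k^2 * x i ^ 2) := fun i => by ring
    simp only [this]
    ring
  rw [← key (p.1 - x₁) (p.2 - y₁), ← key (p.1 - x₂) (p.2 - y₂), Finset.sum_add_distrib,
    ← Finset.mul_sum]
  ring

lemma geom {n : ℕ} (x x₀ : En n) (y y₀ : ℝ) (h0 : ‖x₀‖^2 + y₀^2 = 1)
    (h : ‖x‖^2 + y^2 < 1) :
    (1 - (‖x‖^2 + y^2))^2 ≤ 4 * (‖x - x₀‖^2 + (y - y₀)^2) := by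
  set r := Real.sqrt (‖x‖^2 + y^2) with hr
  have hr2 : r^2 = ‖x‖^2 + y^2 := Real.sq_sqrt (by positivity)
  have hr0 : 0 ≤ r := Real.sqrt_nonneg _
  have hi := real_inner_le_norm x x₀
  have ht : ‖x‖ * ‖x₀‖ + y * y₀ ≤ r := by
    apply Real.le_sqrt_of_sq_le
    have : ‖x‖^2 + y^2 = (‖x‖^2 + y^2) * (‖x₀‖^2 + y₀^2) := by rw [h0, mul_one]
    rw [this]
    nlinarith [sq_nonneg (‖x‖ * y₀ - y * ‖x₀‖)]
  rw [norm_sub_sq_real]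
  rw [← hr2] at h ⊢
  have hr1 : r < 1 := by nlinarith
  have : (1 - r)^2 ≤ ‖x‖ ^ 2 - 2 * inner ℝ x x₀ + ‖x₀‖ ^ 2 + (y - y₀) ^ 2 := by
    nlinarith
  have h3 : (1 - r^2)^2 ≤ 4 * (1 - r)^2 := by
    have : (1 - r^2)^2 = (1+r)^2 * (1-r)^2 := by ring
    rw [this]
    exact mul_le_mul_of_nonneg_right (by nlinarith) (sq_nonneg _)
  linarith

lemma pow_compare (w d α : ℝ) (hα : α ∈ Ioo (0 : ℝ) 1) (hw : 0 < w) (h : w^2 ≤ 4 * d) :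
    d ^ (α/2 - 1) ≤ 4 * w ^ (α - 2) := by
  obtain ⟨h0, h1⟩ := hα
  have hd : w^2/4 ≤ d := by linarith
  have hp : 0 < w^2/4 := by positivity
  calc d ^ (α/2 - 1) ≤ (w^2/4) ^ (α/2 - 1) :=
        Real.rpow_le_rpow_of_nonpos hp hd (by linarith)
    _ = (4:ℝ) ^ (1 - α/2) * w ^ (α - 2) := by
        rw [Real.div_rpow (by positivity) (by norm_num), ← Real.rpow_natCast w 2,
          ← Real.rpow_mul hw.le, div_eq_mul_inv, ← Real.rpow_neg (by norm_num), mul_comm]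
        congr 2 <;> push_cast <;> ring
    _ ≤ 4 * w ^ (α - 2) := by
        have : (4:ℝ) ^ (1 - α/2) ≤ (4:ℝ) ^ (1:ℝ) :=
          Real.rpow_le_rpow_of_exponent_le (by norm_num) (by linarith)
        rw [Real.rpow_one] at this
        exact mul_le_mul_of_nonneg_right this (by positivity)

/-- **Lemma 4.1 (barrier for `(∂B_1)^+`).** For `α ∈ (0,1)` and `X₀ ∈ (∂B_1)^+` there is a
constant `C > 0`, depending only on `n`, `a` and `α`, such that
`B(X) = C (1-|X|²)^α + |X-X₀|^α` is a supersolution of `div(y^a ∇B) ≤ 0` in `B_1^+`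
(here `a = 1-2s`). -/
theorem barrier_for_lateral_boundary (n : ℕ) (hn : 1 ≤ n) (s : ℝ)
    (hs : s ∈ Ioo (0 : ℝ) (1/2)) (α : ℝ) (hα : α ∈ Ioo (0 : ℝ) 1) :
    ∃ C > 0, ∀ (x₀ : En n) (y₀ : ℝ), ‖x₀‖^2 + y₀^2 = 1 → 0 < y₀ →
      ∀ p ∈ halfBall n 1,
        lap (fun q : En n × ℝ =>
            C * (1 - (‖q.1‖^2 + q.2^2)) ^ α + (‖q.1 - x₀‖^2 + (q.2 - y₀)^2) ^ (α/2)) p +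
          ((1 - 2*s) / p.2) *
            fderiv ℝ (fun q : En n × ℝ =>
              C * (1 - (‖q.1‖^2 + q.2^2)) ^ α + (‖q.1 - x₀‖^2 + (q.2 - y₀)^2) ^ (α/2))
              p (0, 1) ≤ 0 := by
  have hα' := hα
  obtain ⟨hα0, hα1⟩ := hα
  obtain ⟨hs0, hs1⟩ := hs
  have hn' : (1:ℝ) ≤ n := by exact_mod_cast hn
  obtain ⟨a, ha⟩ : ∃ a, a = 1 - 2 * s := ⟨_, rfl⟩
  have ha0 : 0 < a := by linarith
  obtain ⟨K, hK⟩ : ∃ K : ℝ, K = n - 1 + α + a := ⟨_, rfl⟩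
  have hK0 : 0 < K := by linarith
  obtain ⟨C, hC⟩ : ∃ C : ℝ, C = 2 * K / (1 - α) := ⟨_, rfl⟩
  have hC0 : 0 < C := by rw [hC]; exact div_pos (by linarith) (by linarith)
  have hCK : C * (1 - α) = 2 * K := by
    rw [hC]; exact div_mul_cancel₀ _ (by linarith)
  refine ⟨C, hC0, ?_⟩
  rintro x₀ y₀ h0 hy₀ p ⟨hp, hy⟩
  rw [one_pow] at hp
  have hg := geom p.1 x₀ p.2 y₀ h0 hp
  have hfun : (fun q : En n × ℝ =>
      C * (1 - (‖q.1‖^2 + q.2^2)) ^ α + (‖q.1 - x₀‖^2 + (q.2 - y₀)^2) ^ (α/2)) =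
      (fun q : En n × ℝ => C * (1 + (-1) * (‖q.1 - 0‖^2 + (q.2 - 0)^2)) ^ α +
        (0 + 1 * (‖q.1 - x₀‖^2 + (q.2 - y₀)^2)) ^ (α/2)) := by
    ext q
    simp only [sub_zero, zero_add, one_mul, neg_mul, sub_eq_add_neg (1:ℝ)]
  have hw : 0 < 1 - (‖p.1‖^2 + p.2^2) := by linarith
  have hd : 0 < ‖p.1 - x₀‖^2 + (p.2 - y₀)^2 := by nlinarith
  have e1 : 1 + (-1) * (‖p.1 - 0‖^2 + (p.2 - 0)^2) = 1 - (‖p.1‖^2 + p.2^2) := by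
    simp only [sub_zero]; ring
  have e2 : 0 + 1 * (‖p.1 - x₀‖^2 + (p.2 - y₀)^2) = ‖p.1 - x₀‖^2 + (p.2 - y₀)^2 := by ring
  rw [hfun, two_pow_lap _ _ _ _ _ _ _ _ _ _ _ _ (by rw [e1]; exact hw) (by rw [e2]; exact hd),
    two_pow _ _ _ _ _ _ _ _ _ _ _ _ (by rw [e1]; exact hw) (by rw [e2]; exact hd)]
  rw [e1, e2, ← ha]
  simp only [dirL_apply, inner_zero_right, sub_zero]
  have hc := pow_compare _ _ α hα' hw hg
  obtain ⟨d, hdd⟩ : ∃ d, d = ‖p.1 - x₀‖^2 + (p.2 - y₀)^2 := ⟨_, rfl⟩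
  obtain ⟨w, hww⟩ : ∃ w, w = 1 - (‖p.1‖^2 + p.2^2) := ⟨_, rfl⟩
  have hr : ‖p.1‖^2 + p.2^2 = 1 - w := by linarith
  have hw1 : w ≤ 1 := by rw [hww]; nlinarith [sq_nonneg ‖p.1‖, sq_nonneg p.2]
  rw [← hdd] at hd hc ⊢
  rw [← hww] at hw hc ⊢
  rw [hr]
  have ew : w ^ (α - 1) = w * w ^ (α - 2) := by
    rw [show α - 1 = 1 + (α - 2) by ring, Real.rpow_add hw, Real.rpow_one]
  have ed : d ^ (α/2 - 1) = d * d ^ (α/2 - 2) := by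
    rw [show α/2 - 1 = 1 + (α/2 - 2) by ring, Real.rpow_add hd, Real.rpow_one]
  have hW : 0 < w ^ (α - 2) := Real.rpow_pos_of_pos hw _
  have hD : 0 < d ^ (α/2 - 1) := Real.rpow_pos_of_pos hd _
  obtain ⟨W, hWe⟩ : ∃ W, W = w ^ (α - 2) := ⟨_, rfl⟩
  obtain ⟨D, hDe⟩ : ∃ D, D = d ^ (α/2 - 1) := ⟨_, rfl⟩
  obtain ⟨D', hDe'⟩ : ∃ D', D' = d ^ (α/2 - 2) := ⟨_, rfl⟩
  rw [← hDe, ← hDe'] at ed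
  rw [ew]
  rw [← hWe] at hW hc ⊢
  rw [← hDe] at hD hc ⊢
  rw [← hDe']
  have main : C * (2 * (n + 1 + a) * (w * W) + 4 * (1 - α) * (1 - w) * W) ≥ K * D := by
    have a1 : 2 * (1 - α) * W ≤ 2 * (n + 1 + a) * (w * W) + 4 * (1 - α) * (1 - w) * W := by
      have : 2 * (1 - α) ≤ 2 * (n + 1 + a) * w + 4 * (1 - α) * (1 - w) := by
        have : (2:ℝ) * w ≤ (n + 1 + a) * w := mul_le_mul_of_nonneg_right (by linarith) hw.le
        nlinarith [mul_nonneg (sub_nonneg.2 hα1.le) (sub_nonneg.2 hw1), mul_pos hα0 hw]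
      nlinarith [mul_le_mul_of_nonneg_right this hW.le]
    have a2 := mul_le_mul_of_nonneg_left a1 hC0.le
    have a3 := mul_le_mul_of_nonneg_left hc hK0.le
    have a4 : C * (2 * (1 - α) * W) = 4 * K * W := by linear_combination 2 * W * hCK
    linarith
  have hq : 0 ≤ a * (y₀ / p.2) * D := by positivity
  have hfin : C * (α * (α - 1) * W * (4 * (-1) ^ 2 * (1 - w)) +
        α * (w * W) * (-1 * (2 * (n + 1)))) +
      (α / 2 * (α / 2 - 1) * D' * (4 * 1 ^ 2 * d) + α / 2 * D * (1 * (2 * (n + 1)))) +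
      a / p.2 * (C * (α * (w * W) * (-1 * (2 * (0 + p.2 * 1)))) +
        α / 2 * D * (1 * (2 * (0 + (p.2 - y₀) * 1)))) =
      α * (K * D - C * (2 * (n + 1 + a) * (w * W) + 4 * (1 - α) * (1 - w) * W)
        - a * (y₀ / p.2) * D) := by
    rw [hK, ed]
    field_simp
    ring
  rw [hfin]
  exact mul_nonpos_of_nonneg_of_nonpos hα0.le (by linarith)


end
end

section
/- Let α ∈ (0,1) and let u : closure(B_1^+) → ℝ be continuous and a-harmonic in B_1^+. Assume for some point (x₀,y₀) ∈ (∂B_1)^+ and some C₀ ≥ 0 that |u(x₀,y₀) − u(x,y)| ≤ C₀ (|x−x₀|² + (y−y₀)²)^{α/2} for every (x,y) ∈ ∂B_1^+ = B_1^0 ∪ (∂B_1)^+. Then there is a constant C depending only on s, n and α such that |u(x₀,y₀) − u(x,y)| ≤ C C₀ (|x−x₀|² + (y−y₀)²)^{α/2} for all (x,y) ∈ B_1^+. -/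
open Set Filter Topology MeasureTheory
open scoped RealInnerProductSpace

noncomputable section

lemma second_deriv_max (h h' : ℝ → ℝ) (c : ℝ) (hd : ∀ᶠ t in 𝓝 0, HasDerivAt h (h' t) t)
    (h2 : HasDerivAt h' c 0) (hm : IsLocalMax h 0) : h' 0 = 0 ∧ c ≤ 0 := by
  have h0 : h' 0 = 0 := hm.hasDerivAt_eq_zero hd.self_of_nhds
  refine ⟨h0, ?_⟩
  by_contra hc
  push Not at hc
  have e1 : deriv h =ᶠ[𝓝 0] h' := hd.mono fun t ht => ht.deriv
  have e2 : deriv (deriv h) 0 = c := by rw [e1.deriv_eq]; exact h2.deriv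
  have hmin : IsLocalMin h 0 := isLocalMin_of_deriv_deriv_pos (by rw [e2]; exact hc)
    (by rw [e1.self_of_nhds, h0]) hd.self_of_nhds.continuousAt
  have hconst : h =ᶠ[𝓝 0] fun _ => h 0 := by
    filter_upwards [hm, hmin] with t h1 h2 using le_antisymm h1 h2
  have e3 : deriv h =ᶠ[𝓝 0] deriv (fun _ => h 0) := hconst.deriv
  have e4 := e3.deriv_eq
  rw [e2] at e4
  simp at e4
  linarith

lemma phi_deriv (α M R b c d e : ℝ) (hR : 0 < R) (hd : 0 < d) :
    (∀ᶠ t in 𝓝 (0 : ℝ), HasDerivAt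
      (fun t : ℝ => (R + 2 * b * t + c * t ^ 2) ^ (α / 2) + M * (d - e * t) ^ α)
      ((2 * b + 2 * c * t) * (α / 2) * (R + 2 * b * t + c * t ^ 2) ^ (α / 2 - 1)
        + M * (-e * α * (d - e * t) ^ (α - 1))) t) ∧
    HasDerivAt (fun t : ℝ =>
      (2 * b + 2 * c * t) * (α / 2) * (R + 2 * b * t + c * t ^ 2) ^ (α / 2 - 1)
        + M * (-e * α * (d - e * t) ^ (α - 1)))
      (c * α * R ^ (α / 2 - 1) + b ^ 2 * α * (α - 2) * R ^ (α / 2 - 2)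
        + M * (e ^ 2 * α * (α - 1) * d ^ (α - 2))) 0 := by
  have q1 : ∀ t : ℝ, HasDerivAt (fun t : ℝ => R + 2 * b * t + c * t ^ 2) (2 * b + 2 * c * t) t := by
    intro t
    have := (((hasDerivAt_id t).const_mul (2 * b)).const_add R).add
      ((hasDerivAt_pow 2 t).const_mul c)
    exact this.congr_deriv (by simp; ring)
  have q2 : ∀ t : ℝ, HasDerivAt (fun t : ℝ => d - e * t) (-e) t := by
    intro t
    have := ((hasDerivAt_id t).const_mul e).const_sub d
    exact this.congr_deriv (by simp)
  have q3 : ∀ t : ℝ, HasDerivAt (fun t : ℝ => (2 * b + 2 * c * t) * (α / 2)) (c * α) t := by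
    intro t
    have := (((hasDerivAt_id t).const_mul (2 * c)).const_add (2 * b)).mul_const (α / 2)
    exact this.congr_deriv (by ring)
  constructor
  · have p1 : ∀ᶠ t in 𝓝 (0 : ℝ), 0 < R + 2 * b * t + c * t ^ 2 :=
      (q1 0).continuousAt.eventually_const_lt (by simpa using hR)
    have p2 : ∀ᶠ t in 𝓝 (0 : ℝ), 0 < d - e * t :=
      (q2 0).continuousAt.eventually_const_lt (by simpa using hd)
    filter_upwards [p1, p2] with t h1 h2
    exact ((q1 t).rpow_const (Or.inl h1.ne')).add (((q2 t).rpow_const (Or.inl h2.ne')).const_mul M)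
  · have r1 := (q1 0).rpow_const (p := α / 2 - 1) (Or.inl (by simpa using hR.ne'))
    have r2 := (q2 0).rpow_const (p := α - 1) (Or.inl (by simpa using hd.ne'))
    have := ((q3 0).mul r1).add ((r2.const_mul (-e * α)).const_mul M)
    refine this.congr_deriv ?_
    have i1 : α / 2 - 1 - 1 = α / 2 - 2 := by ring
    have i2 : α - 1 - 1 = α - 2 := by ring
    simp only [i1, i2]
    simp
    ring

lemma u_line {n : ℕ} (u : En n × ℝ → ℝ) (Ω : Set (En n × ℝ)) (hΩ : IsOpen Ω)
    (hu : ContDiffOn ℝ 2 u Ω) (p v : En n × ℝ) (hp : p ∈ Ω) :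
    (∀ᶠ t in 𝓝 (0 : ℝ), HasDerivAt (fun t : ℝ => u (p + t • v)) (fderiv ℝ u (p + t • v) v) t) ∧
    HasDerivAt (fun t : ℝ => fderiv ℝ u (p + t • v) v) (D2 u p v) 0 := by
  have l : ∀ t : ℝ, HasDerivAt (fun t : ℝ => p + t • v) v t := by
    intro t
    have := ((hasDerivAt_id t).smul_const v).const_add p
    simpa using this
  have hev : ∀ᶠ t in 𝓝 (0 : ℝ), p + t • v ∈ Ω :=
    (l 0).continuousAt.eventually_mem (by simpa using hΩ.mem_nhds hp)
  constructor
  · filter_upwards [hev] with t ht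
    have : DifferentiableAt ℝ u (p + t • v) :=
      (hu.contDiffAt (hΩ.mem_nhds ht)).differentiableAt (by norm_num)
    exact this.hasFDerivAt.comp_hasDerivAt t (l t)
  · have c1 : ContDiffAt ℝ 1 (fderiv ℝ u) p :=
      (hu.contDiffAt (hΩ.mem_nhds hp)).fderiv_right (by norm_num)
    have d1 : DifferentiableAt ℝ (fun q => fderiv ℝ u q v) p :=
      (c1.differentiableAt (by norm_num)).clm_apply (differentiableAt_const v)
    have d2 : HasFDerivAt (fun q => fderiv ℝ u q v) (fderiv ℝ (fun q => fderiv ℝ u q v) p)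
      (p + (0 : ℝ) • v) := by simpa using d1.hasFDerivAt
    exact d2.comp_hasDerivAt 0 (l 0)

/-- squared distance -/
def RR {n : ℕ} (x₀ : En n) (y₀ : ℝ) (p : En n × ℝ) : ℝ := ‖p.1 - x₀‖ ^ 2 + (p.2 - y₀) ^ 2

/-- distance to tangent plane -/
def dd {n : ℕ} (x₀ : En n) (y₀ : ℝ) (p : En n × ℝ) : ℝ := 1 - (⟪p.1, x₀⟫ + p.2 * y₀)

lemma RR_eq {n : ℕ} (x₀ : En n) (y₀ : ℝ) (h : ‖x₀‖ ^ 2 + y₀ ^ 2 = 1) (p : En n × ℝ) :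
    RR x₀ y₀ p = (‖p.1‖ ^ 2 + p.2 ^ 2 - 1) + 2 * dd x₀ y₀ p := by
  unfold RR dd
  rw [norm_sub_sq_real]
  linear_combination h

lemma dd_sq_le {n : ℕ} (x₀ : En n) (y₀ : ℝ) (h : ‖x₀‖ ^ 2 + y₀ ^ 2 = 1) (p : En n × ℝ) :
    dd x₀ y₀ p ^ 2 ≤ RR x₀ y₀ p := by
  have e : dd x₀ y₀ p = -(⟪p.1 - x₀, x₀⟫ + (p.2 - y₀) * y₀) := by
    unfold dd
    rw [inner_sub_left, real_inner_self_eq_norm_sq]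
    linear_combination -h
  have cs := abs_real_inner_le_norm (p.1 - x₀) x₀
  rw [e, neg_sq]
  have cs2 : ⟪p.1 - x₀, x₀⟫ ^ 2 ≤ (‖p.1 - x₀‖ * ‖x₀‖) ^ 2 := sq_le_sq' (by linarith [neg_abs_le ⟪p.1 - x₀, x₀⟫]) (le_trans (le_abs_self _) cs)
  unfold RR
  set I := ⟪p.1 - x₀, x₀⟫
  set A := ‖p.1 - x₀‖
  set B := ‖x₀‖
  set D := p.2 - y₀
  have hA : 0 ≤ A := norm_nonneg _
  have hB : 0 ≤ B := norm_nonneg _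
  have t1 : |I + D * y₀| ≤ A * B + |D| * |y₀| :=
    (abs_add_le _ _).trans (by rw [abs_mul]; linarith)
  have t2 : (I + D * y₀) ^ 2 ≤ (A * B + |D| * |y₀|) ^ 2 := by
    rw [← sq_abs (I + D * y₀)]; gcongr
  refine t2.trans ?_
  rw [← sq_abs D]
  rw [← sq_abs y₀] at h
  have : A ^ 2 + |D| ^ 2 = (A ^ 2 + |D| ^ 2) * (B ^ 2 + |y₀| ^ 2) := by rw [h, mul_one]
  rw [this]
  nlinarith [sq_nonneg (A * |y₀| - B * |D|)]

lemma RR_line {n : ℕ} (x₀ : En n) (y₀ : ℝ) (p v : En n × ℝ) (t : ℝ) :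
    RR x₀ y₀ (p + t • v) = RR x₀ y₀ p + 2 * (⟪p.1 - x₀, v.1⟫ + (p.2 - y₀) * v.2) * t
      + (‖v.1‖ ^ 2 + v.2 ^ 2) * t ^ 2 := by
  unfold RR
  have : (p + t • v).1 - x₀ = (p.1 - x₀) + t • v.1 := by simp; abel
  rw [this, norm_add_sq_real, inner_smul_right, norm_smul, mul_pow]
  simp
  ring

lemma dd_line {n : ℕ} (x₀ : En n) (y₀ : ℝ) (p v : En n × ℝ) (t : ℝ) :
    dd x₀ y₀ (p + t • v) = dd x₀ y₀ p - (⟪v.1, x₀⟫ + v.2 * y₀) * t := by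
  unfold dd
  simp [inner_add_left, inner_smul_left]
  ring

lemma isOpen_halfBall (n : ℕ) : IsOpen (halfBall n 1) := by
  unfold halfBall
  apply IsOpen.inter
  · exact isOpen_lt (f := fun p : En n × ℝ => ‖p.1‖ ^ 2 + p.2 ^ 2) (g := fun _ => 1 ^ 2) (by fun_prop) (by fun_prop)
  · exact isOpen_lt (f := fun _ : En n × ℝ => (0 : ℝ)) (g := fun p => p.2) (by fun_prop) (by fun_prop)

lemma isCompact_closedHalfBall (n : ℕ) : IsCompact (closedHalfBall n 1) := by
  have hc : IsClosed (closedHalfBall n 1) := by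
    unfold closedHalfBall
    apply IsClosed.inter
    · exact isClosed_le (f := fun p : En n × ℝ => ‖p.1‖ ^ 2 + p.2 ^ 2) (g := fun _ => 1 ^ 2) (by fun_prop) (by fun_prop)
    · exact isClosed_le (f := fun _ : En n × ℝ => (0 : ℝ)) (g := fun p => p.2) (by fun_prop) (by fun_prop)
  refine Metric.isCompact_of_isClosed_isBounded hc ?_
  refine (Metric.isBounded_closedBall (x := (0 : En n × ℝ)) (r := 1)).subset ?_
  rintro p ⟨h1, h2⟩
  rw [mem_closedBall_zero_iff, Prod.norm_def, Real.norm_eq_abs]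
  refine max_le ?_ ?_
  · exact abs_le_of_sq_le_sq' (by nlinarith [sq_nonneg p.2]) (by norm_num) |>.2
  · rw [abs_le]
    exact abs_le_of_sq_le_sq' (by nlinarith [sq_nonneg ‖p.1‖]) (by norm_num)

set_option maxHeartbeats 1000000 in
/-- the interior maximum is impossible -/
lemma no_int_max (n : ℕ) (a : ℝ) (ha : 0 < a) (ha1 : a < 1) (α : ℝ) (hα : α ∈ Ioo (0 : ℝ) 1)
    (M : ℝ) (hM : M * (1 - α) = n + 2) (hM0 : 0 < M)
    (u : En n × ℝ → ℝ) (x₀ : En n) (y₀ σ K : ℝ) (hK : 0 < K)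
    (hu : IsAHarmonicOn a u (halfBall n 1)) (h : ‖x₀‖ ^ 2 + y₀ ^ 2 = 1) (hy : 0 < y₀)
    (p : En n × ℝ) (hp : p ∈ halfBall n 1)
    (hmax : IsLocalMax (fun q => σ * u q - K * ((RR x₀ y₀ q) ^ (α / 2) + M * (dd x₀ y₀ q) ^ α)) p) :
    False := by
  have hRR := RR_eq x₀ y₀ h p
  have hle := dd_sq_le x₀ y₀ h p
  have hR0 : 0 ≤ RR x₀ y₀ p := by unfold RR; positivity
  have hp1 := hp.1
  have hp2 : 0 < p.2 := hp.2
  have hd : 0 < dd x₀ y₀ p := by linarith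
  have hR : 0 < RR x₀ y₀ p := lt_of_lt_of_le (by positivity) hle
  obtain ⟨hu2, hueq⟩ := hu
  have key : ∀ v : En n × ℝ,
      σ * fderiv ℝ u p v = K * ((⟪p.1 - x₀, v.1⟫ + (p.2 - y₀) * v.2) * α * RR x₀ y₀ p ^ (α / 2 - 1)
        + M * (-(⟪v.1, x₀⟫ + v.2 * y₀) * α * dd x₀ y₀ p ^ (α - 1))) ∧
      σ * D2 u p v ≤ K * ((‖v.1‖ ^ 2 + v.2 ^ 2) * α * RR x₀ y₀ p ^ (α / 2 - 1)
        + (⟪p.1 - x₀, v.1⟫ + (p.2 - y₀) * v.2) ^ 2 * α * (α - 2) * RR x₀ y₀ p ^ (α / 2 - 2)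
        + M * ((⟪v.1, x₀⟫ + v.2 * y₀) ^ 2 * α * (α - 1) * dd x₀ y₀ p ^ (α - 2))) := by
    intro v
    obtain ⟨u1, u2⟩ := u_line u _ (isOpen_halfBall n) hu2 p v hp
    obtain ⟨f1, f2⟩ := phi_deriv α M (RR x₀ y₀ p) (⟪p.1 - x₀, v.1⟫ + (p.2 - y₀) * v.2)
      (‖v.1‖ ^ 2 + v.2 ^ 2) (dd x₀ y₀ p) (⟪v.1, x₀⟫ + v.2 * y₀) hR hd
    have hloc : IsLocalMax (fun t : ℝ => σ * u (p + t • v) - K * ((RR x₀ y₀ p + 2 * (⟪p.1 - x₀, v.1⟫ + (p.2 - y₀) * v.2) * t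
      + (‖v.1‖ ^ 2 + v.2 ^ 2) * t ^ 2) ^ (α / 2) + M * (dd x₀ y₀ p - (⟪v.1, x₀⟫ + v.2 * y₀) * t) ^ α)) 0 := by
      have ct : Tendsto (fun t : ℝ => p + t • v) (𝓝 0) (𝓝 p) := by
        have : Continuous (fun t : ℝ => p + t • v) := by fun_prop
        simpa using this.tendsto 0
      have := ct.eventually hmax
      unfold IsLocalMax IsMaxFilter
      filter_upwards [this] with t ht
      rw [RR_line, dd_line] at ht
      simpa using ht
    obtain ⟨z1, z2⟩ := second_deriv_max _ _ _
      (by filter_upwards [u1, f1] with t g1 g2; exact (g1.const_mul σ).sub (g2.const_mul K))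
      ((u2.const_mul σ).sub (f2.const_mul K)) hloc
    constructor
    · simp at z1
      linear_combination z1
    · linarith
  have hE := hueq p hp
  unfold lap at hE
  set X := RR x₀ y₀ p ^ (α / 2 - 1) with hX
  set Y := dd x₀ y₀ p ^ (α - 2) with hY
  have hX2 : RR x₀ y₀ p * RR x₀ y₀ p ^ (α / 2 - 2) = X := by
    rw [hX, ← Real.rpow_one_add' hR0 (by linarith [hα.2])]; congr 1; ring
  have hX0 : 0 < X := Real.rpow_pos_of_pos hR _
  have hY1 : 0 < dd x₀ y₀ p ^ (α - 1) := Real.rpow_pos_of_pos hd _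
  have hXY : X ≤ Y := by
    have : Y = (dd x₀ y₀ p ^ 2) ^ (α / 2 - 1) := by
      rw [hY, ← Real.rpow_natCast, ← Real.rpow_mul hd.le]; congr 1; push_cast; ring
    rw [this]
    exact Real.rpow_le_rpow_of_nonpos (by positivity) hle (by linarith [hα.2])
  have s1 : ∑ i : Fin n, (⟪p.1 - x₀, EuclideanSpace.single i (1 : ℝ)⟫) ^ 2 = ‖p.1 - x₀‖ ^ 2 := by
    rw [EuclideanSpace.norm_sq_eq]
    simp [EuclideanSpace.inner_single_right]
  have s2 : ∑ i : Fin n, (⟪EuclideanSpace.single i (1 : ℝ), x₀⟫) ^ 2 = ‖x₀‖ ^ 2 := by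
    rw [EuclideanSpace.norm_sq_eq]
    simp [EuclideanSpace.inner_single_left]
  have hsum : σ * ∑ i : Fin n, D2 u p (EuclideanSpace.single i 1, 0) ≤
      K * (n * α * X + ‖p.1 - x₀‖ ^ 2 * α * (α - 2) * RR x₀ y₀ p ^ (α / 2 - 2)
        + M * (‖x₀‖ ^ 2 * α * (α - 1) * Y)) := by
    rw [← s1, ← s2, Finset.mul_sum]
    refine (Finset.sum_le_sum fun i _ => (key (EuclideanSpace.single i 1, 0)).2).trans (le_of_eq ?_)
    simp only [mul_zero, zero_mul, add_zero, Finset.sum_mul, Finset.mul_sum, mul_add, Finset.sum_add_distrib]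
    simp
    ring
  obtain ⟨k1, k2⟩ := key (0, 1)
  simp only [inner_zero_right, inner_zero_left, norm_zero] at k1 k2
  have hm : σ * (a / p.2 * fderiv ℝ u p (0, 1)) ≤ K * (a * α * X) := by
    have : σ * (a / p.2 * fderiv ℝ u p (0, 1)) = a / p.2 * (σ * fderiv ℝ u p (0, 1)) := by ring
    rw [this, k1]
    have e1 : K * ((0 + (p.2 - y₀) * 1) * α * X + M * (-(0 + 1 * y₀) * α * dd x₀ y₀ p ^ (α - 1)))
       ≤ K * (p.2 * α * X) := by
      have := hα.1
      have p1 : 0 < y₀ * α * X := by positivity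
      have p2 : 0 < M * (y₀ * α * dd x₀ y₀ p ^ (α - 1)) := by positivity
      apply mul_le_mul_of_nonneg_left _ hK.le
      nlinarith
    refine (mul_le_mul_of_nonneg_left e1 (by positivity)).trans (le_of_eq ?_)
    field_simp
  have tot : 0 ≤ K * (α * ((n + 1) * X + (α - 2) * X - (n + 2) * Y + a * X)) := by
    have hs : σ * ((∑ i : Fin n, D2 u p (EuclideanSpace.single i 1, 0)) + D2 u p (0, 1)
      + (a / p.2) * fderiv ℝ u p (0, 1)) = 0 := by rw [hE, mul_zero]
    have : K * (n * α * X + ‖p.1 - x₀‖ ^ 2 * α * (α - 2) * RR x₀ y₀ p ^ (α / 2 - 2)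
        + M * (‖x₀‖ ^ 2 * α * (α - 1) * Y)) + K * ((0 ^ 2 + 1 ^ 2) * α * X + (0 + (p.2 - y₀) * 1) ^ 2 * α * (α - 2) * RR x₀ y₀ p ^ (α / 2 - 2) +
        M * ((0 + 1 * y₀) ^ 2 * α * (α - 1) * Y)) + K * (a * α * X) = K * (α * ((n + 1) * X + (α - 2) * X - (n + 2) * Y + a * X)) := by
      rw [← hM]
      have hr : RR x₀ y₀ p = ‖p.1 - x₀‖ ^ 2 + (p.2 - y₀) ^ 2 := rfl
      linear_combination (K * α * (α - 2)) * hX2 - (K * α * (α - 2) * RR x₀ y₀ p ^ (α / 2 - 2)) * hr + K * M * α * (α - 1) * Y * h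
    rw [← this]
    linarith
  have neg : (n + 1) * X + (α - 2) * X - (n + 2) * Y + a * X < 0 := by
    have : (n + 2 : ℝ) * X ≤ (n + 2) * Y := mul_le_mul_of_nonneg_left hXY (by positivity)
    have t : (α + a - 3) * X < 0 := mul_neg_of_neg_of_pos (by linarith [hα.2]) hX0
    linarith
  have := mul_pos hK (mul_pos hα.1 (neg_pos.2 neg))
  rw [mul_neg, mul_neg] at this
  exact absurd tot (not_le.2 (neg_pos.1 this))

lemma one_side (n : ℕ) (a : ℝ) (ha : 0 < a) (ha1 : a < 1) (α : ℝ) (hα : α ∈ Ioo (0 : ℝ) 1)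
    (M : ℝ) (hM : M * (1 - α) = n + 2) (hM0 : 0 < M)
    (u : En n × ℝ → ℝ) (x₀ : En n) (y₀ σ K : ℝ) (hK : 0 < K)
    (hc : ContinuousOn u (closedHalfBall n 1))
    (hu : IsAHarmonicOn a u (halfBall n 1)) (h : ‖x₀‖ ^ 2 + y₀ ^ 2 = 1) (hy : 0 < y₀)
    (hb : ∀ p : En n × ℝ, (‖p.1‖^2 < 1 ∧ p.2 = 0) ∨ p ∈ spherePlus n →
        σ * u p - σ * u (x₀, y₀) ≤ K * (RR x₀ y₀ p) ^ (α/2))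
    (p : En n × ℝ) (hp : p ∈ halfBall n 1) :
    σ * u p - σ * u (x₀, y₀) ≤ K * ((1 + M) * (RR x₀ y₀ p) ^ (α/2)) := by
  have hα0 := hα.1
  have cR : Continuous (fun q : En n × ℝ => (RR x₀ y₀ q) ^ (α / 2)) := by
    have : Continuous (fun q : En n × ℝ => RR x₀ y₀ q) := by unfold RR; fun_prop
    exact this.rpow_const fun _ => Or.inr (by linarith)
  have cd : Continuous (fun q : En n × ℝ => (dd x₀ y₀ q) ^ α) := by
    have : Continuous (fun q : En n × ℝ => dd x₀ y₀ q) := by unfold dd; fun_prop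
    exact this.rpow_const fun _ => Or.inr hα0.le
  have hsub : halfBall n 1 ⊆ closedHalfBall n 1 := fun q hq => ⟨hq.1.le, hq.2.le⟩
  have hdd : ∀ q ∈ closedHalfBall n 1, 0 ≤ dd x₀ y₀ q := by
    intro q hq
    have h1 := RR_eq x₀ y₀ h q
    have h2 := hq.1
    have h3 : 0 ≤ RR x₀ y₀ q := by unfold RR; positivity
    linarith
  have hbd : ∀ q ∈ closedHalfBall n 1, q ∉ halfBall n 1 →
      σ * u q - σ * u (x₀, y₀) ≤ K * (RR x₀ y₀ q) ^ (α/2) := by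
    rintro ⟨x, y⟩ hq hq'
    have q1 : ‖x‖ ^ 2 + y ^ 2 ≤ 1 := by simpa using hq.1
    have q2 : 0 ≤ y := hq.2
    rcases q2.eq_or_lt with hy0 | hy0
    · subst hy0
      have ct : Tendsto (fun t : ℝ => ((t • x, 0) : En n × ℝ)) (𝓝[<] 1) (𝓝 (x, 0)) := by
        have : Continuous (fun t : ℝ => ((t • x, 0) : En n × ℝ)) := by fun_prop
        simpa using (this.tendsto 1).mono_left nhdsWithin_le_nhds
      have hlt : ∀ᶠ t : ℝ in 𝓝[<] 1, ‖t • x‖ ^ 2 < 1 := by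
        filter_upwards [Ioo_mem_nhdsLT (show (0 : ℝ) < 1 by norm_num)] with t ht
        rw [norm_smul, mul_pow, Real.norm_eq_abs, sq_abs]
        have : t ^ 2 < 1 := by nlinarith [ht.1, ht.2]
        nlinarith [sq_nonneg t, sq_nonneg ‖x‖]
      have cu : Tendsto (fun t : ℝ => u (t • x, 0)) (𝓝[<] 1) (𝓝 (u (x, 0))) := by
        refine (hc (x, 0) hq).tendsto.comp (tendsto_nhdsWithin_iff.2 ⟨ct, ?_⟩)
        filter_upwards [hlt] with t ht
        exact ⟨by simpa using ht.le, le_refl _⟩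
      refine le_of_tendsto_of_tendsto ((cu.const_mul σ).sub_const _)
        (((cR.tendsto (x, 0)).comp ct).const_mul K) ?_
      filter_upwards [hlt] with t ht
      exact hb (t • x, 0) (Or.inl ⟨ht, rfl⟩)
    · refine hb _ (Or.inr ⟨le_antisymm q1 ?_, hy0⟩)
      by_contra hcon
      push Not at hcon
      exact hq' ⟨by simpa using hcon, hy0⟩
  obtain ⟨m, hm, hmm⟩ := (isCompact_closedHalfBall n).exists_isMaxOn ⟨p, hsub hp⟩
    (f := fun q => σ * u q - K * ((RR x₀ y₀ q) ^ (α / 2) + M * (dd x₀ y₀ q) ^ α))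
    ((continuousOn_const.mul hc).sub (by fun_prop))
  by_cases hmi : m ∈ halfBall n 1
  · exact (no_int_max n a ha ha1 α hα M hM hM0 u x₀ y₀ σ K hK hu h hy m hmi
      (hmm.isLocalMax (mem_of_superset ((isOpen_halfBall n).mem_nhds hmi) hsub))).elim
  · have b1 := hbd m hm hmi
    have b2 : σ * u p - K * ((RR x₀ y₀ p) ^ (α / 2) + M * (dd x₀ y₀ p) ^ α) ≤
      σ * u m - K * ((RR x₀ y₀ m) ^ (α / 2) + M * (dd x₀ y₀ m) ^ α) := hmm (hsub hp)
    have b3 : 0 ≤ K * (M * (dd x₀ y₀ m) ^ α) :=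
      mul_nonneg hK.le (mul_nonneg hM0.le (Real.rpow_nonneg (hdd m hm) _))
    have b4 : (dd x₀ y₀ p) ^ α ≤ (RR x₀ y₀ p) ^ (α / 2) := by
      have hd := hdd p (hsub hp)
      have : dd x₀ y₀ p ^ α = (dd x₀ y₀ p ^ 2) ^ (α / 2) := by
        rw [← Real.rpow_natCast, ← Real.rpow_mul hd]; congr 1; push_cast; ring
      rw [this]
      exact Real.rpow_le_rpow (by positivity) (dd_sq_le x₀ y₀ h p) (by linarith)
    have b5 : K * (M * (dd x₀ y₀ p) ^ α) ≤ K * (M * (RR x₀ y₀ p) ^ (α / 2)) :=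
      mul_le_mul_of_nonneg_left (mul_le_mul_of_nonneg_left b4 hM0.le) hK.le
    linarith

theorem boundary_continuity_lateral (n : ℕ) (hn : 1 ≤ n) (s : ℝ)
    (hs : s ∈ Ioo (0 : ℝ) (1/2)) (α : ℝ) (hα : α ∈ Ioo (0 : ℝ) 1) :
    ∃ C > 0, ∀ (u : En n × ℝ → ℝ) (x₀ : En n) (y₀ : ℝ) (C₀ : ℝ),
      ContinuousOn u (closedHalfBall n 1) →
      IsAHarmonicOn (1 - 2*s) u (halfBall n 1) →
      ‖x₀‖^2 + y₀^2 = 1 → 0 < y₀ → 0 ≤ C₀ →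
      (∀ p : En n × ℝ, (‖p.1‖^2 < 1 ∧ p.2 = 0) ∨ p ∈ spherePlus n →
        |u (x₀, y₀) - u p| ≤ C₀ * (‖p.1 - x₀‖^2 + (p.2 - y₀)^2) ^ (α/2)) →
      ∀ p ∈ halfBall n 1,
        |u (x₀, y₀) - u p| ≤ C * C₀ * (‖p.1 - x₀‖^2 + (p.2 - y₀)^2) ^ (α/2) := by
  have h1α : 0 < 1 - α := by linarith [hα.2]
  obtain ⟨M, hMd⟩ : ∃ M : ℝ, M = (n + 2) / (1 - α) := ⟨_, rfl⟩
  have hM0 : 0 < M := by rw [hMd]; positivity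
  have hM : M * (1 - α) = n + 2 := by rw [hMd]; field_simp
  refine ⟨1 + M, by linarith, ?_⟩
  intro u x₀ y₀ C₀ hc hu h hy hC hb p hp
  have ha : 0 < 1 - 2 * s := by linarith [hs.2]
  have ha1 : 1 - 2 * s < 1 := by linarith [hs.1]
  have main : ∀ K : ℝ, C₀ < K → |u (x₀, y₀) - u p| ≤ (1 + M) * K * (RR x₀ y₀ p) ^ (α/2) := by
    intro K hCK
    have hK : 0 < K := lt_of_le_of_lt hC hCK
    have hb' : ∀ q : En n × ℝ, (‖q.1‖^2 < 1 ∧ q.2 = 0) ∨ q ∈ spherePlus n →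
        |u (x₀, y₀) - u q| ≤ K * (RR x₀ y₀ q) ^ (α/2) := fun q hq =>
      (hb q hq).trans (mul_le_mul_of_nonneg_right hCK.le
        (Real.rpow_nonneg (by positivity) _))
    have A := one_side n _ ha ha1 α hα M hM hM0 u x₀ y₀ 1 K hK hc hu h hy
      (fun q hq => by linarith [(abs_le.1 (hb' q hq)).1]) p hp
    have B := one_side n _ ha ha1 α hα M hM hM0 u x₀ y₀ (-1) K hK hc hu h hy
      (fun q hq => by linarith [(abs_le.1 (hb' q hq)).2]) p hp
    rw [abs_le]
    constructor <;> linarith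
  have ct : Tendsto (fun K : ℝ => (1 + M) * K * (RR x₀ y₀ p) ^ (α/2)) (𝓝[>] C₀)
      (𝓝 ((1 + M) * C₀ * (RR x₀ y₀ p) ^ (α/2))) := by
    have : Continuous (fun K : ℝ => (1 + M) * K * (RR x₀ y₀ p) ^ (α/2)) := by fun_prop
    exact (this.tendsto C₀).mono_left nhdsWithin_le_nhds
  exact ge_of_tendsto ct (by filter_upwards [self_mem_nhdsWithin] with K hK using main K hK)

end
end

section
/- Let α ∈ (0, 1−a) and x₀ ∈ ℝ^n with |x₀| < 1. There exists a constant C ≥ 1, depending only on n, a and α, such that the function B(x,y) = (|x−x₀|² + y²)^{α/2} + C y^α satisfies ΔB(x,y) + (a/y) ∂_y B(x,y) ≤ 0 at every point (x,y) ∈ ℝ^n × (0,1) (equivalently, div(y^a ∇B) ≤ 0 there). -/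
open Set Filter Topology MeasureTheory
open scoped RealInnerProductSpace

noncomputable section

lemma aux_R {n : ℕ} (x₀ : En n) (q : En n × ℝ) :
    HasFDerivAt (fun q : En n × ℝ => ‖q.1 - x₀‖^2 + q.2^2)
      ((2:ℝ) • (innerSL ℝ (q.1 - x₀)).comp (ContinuousLinearMap.fst ℝ (En n) ℝ)
        + (2 * q.2) • ContinuousLinearMap.snd ℝ (En n) ℝ) q := by
  have h1 : HasFDerivAt (fun q : En n × ℝ => q.1 - x₀)
      (ContinuousLinearMap.fst ℝ (En n) ℝ) q := hasFDerivAt_fst.sub_const x₀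
  have h2 : HasFDerivAt (fun q : En n × ℝ => q.2)
      (ContinuousLinearMap.snd ℝ (En n) ℝ) q := hasFDerivAt_snd
  refine (h1.norm_sq.add (h2.pow 2)).congr_fderiv ?_
  ext v <;> simp

lemma aux_pos {n : ℕ} (x₀ : En n) (q : En n × ℝ) (hq : 0 < q.2) :
    0 < ‖q.1 - x₀‖^2 + q.2^2 := by positivity

lemma aux_first {n : ℕ} (x₀ : En n) (α C : ℝ) (q v : En n × ℝ) (hq : 0 < q.2) :
    fderiv ℝ (fun q : En n × ℝ => (‖q.1 - x₀‖^2 + q.2^2) ^ (α/2) + C * q.2 ^ α) q v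
      = α * (‖q.1 - x₀‖^2 + q.2^2) ^ (α/2 - 1) * (inner ℝ (q.1 - x₀) v.1 + q.2 * v.2)
        + C * α * q.2 ^ (α - 1) * v.2 := by
  have hR := aux_pos x₀ q hq
  have h2 : HasFDerivAt (fun q : En n × ℝ => q.2)
      (ContinuousLinearMap.snd ℝ (En n) ℝ) q := hasFDerivAt_snd
  have h := ((aux_R x₀ q).rpow_const (p := α/2) (Or.inl hR.ne')).add
    ((h2.rpow_const (p := α) (Or.inl hq.ne')).const_mul C)
  refine (DFunLike.congr_fun (HasFDerivAt.fderiv h) v).trans ?_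
  simp [inner_sub_left]
  ring

lemma aux_D2 {n : ℕ} (x₀ : En n) (α C : ℝ) (p v : En n × ℝ) (hp : 0 < p.2) :
    D2 (fun q : En n × ℝ => (‖q.1 - x₀‖^2 + q.2^2) ^ (α/2) + C * q.2 ^ α) p v
      = α * (α - 2) * (‖p.1 - x₀‖^2 + p.2^2) ^ (α/2 - 2) *
          (inner ℝ (p.1 - x₀) v.1 + p.2 * v.2)^2
        + α * (‖p.1 - x₀‖^2 + p.2^2) ^ (α/2 - 1) * (‖v.1‖^2 + v.2^2)
        + C * α * (α - 1) * p.2 ^ (α - 2) * v.2^2 := by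
  have hR := aux_pos x₀ p hp
  have hev : (fun q : En n × ℝ => fderiv ℝ (fun q : En n × ℝ =>
        (‖q.1 - x₀‖^2 + q.2^2) ^ (α/2) + C * q.2 ^ α) q v) =ᶠ[𝓝 p]
      (fun q : En n × ℝ =>
        α * (‖q.1 - x₀‖^2 + q.2^2) ^ (α/2 - 1) * (inner ℝ (q.1 - x₀) v.1 + q.2 * v.2)
        + C * α * q.2 ^ (α - 1) * v.2) := by
    have : ∀ᶠ q : En n × ℝ in 𝓝 p, 0 < q.2 :=
      continuous_snd.continuousAt.eventually (lt_mem_nhds hp)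
    filter_upwards [this] with q hq
    exact aux_first x₀ α C q v hq
  unfold D2
  rw [hev.fderiv_eq]
  have h1 : HasFDerivAt (fun q : En n × ℝ => q.1 - x₀)
      (ContinuousLinearMap.fst ℝ (En n) ℝ) p := hasFDerivAt_fst.sub_const x₀
  have h2 : HasFDerivAt (fun q : En n × ℝ => q.2)
      (ContinuousLinearMap.snd ℝ (En n) ℝ) p := hasFDerivAt_snd
  have hL := (h1.inner ℝ (hasFDerivAt_const v.1 p)).add (h2.mul_const v.2)
  have h := ((((aux_R x₀ p).rpow_const (p := α/2 - 1) (Or.inl hR.ne')).const_mul α).mul hL).add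
    (((h2.rpow_const (p := α - 1) (Or.inl hp.ne')).const_mul (C * α)).mul_const v.2)
  refine (DFunLike.congr_fun (HasFDerivAt.fderiv h) v).trans ?_
  have e1 : α/2 - 1 - 1 = α/2 - 2 := by ring
  have e2 : α - 1 - 1 = α - 2 := by ring
  simp [e1, e2, inner_sub_left]
  ring

lemma aux_lap {n : ℕ} (x₀ : En n) (α C : ℝ) (p : En n × ℝ) (hp : 0 < p.2) :
    lap (fun q : En n × ℝ => (‖q.1 - x₀‖^2 + q.2^2) ^ (α/2) + C * q.2 ^ α) p
      = α * (α + n - 1) * (‖p.1 - x₀‖^2 + p.2^2) ^ (α/2 - 1)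
        + C * α * (α - 1) * p.2 ^ (α - 2) := by
  have hR := aux_pos x₀ p hp
  unfold lap
  simp only [aux_D2 x₀ α C p _ hp]
  have hs : ∑ i : Fin n, ((p.1 - x₀) i)^2 = ‖p.1 - x₀‖^2 := by
    rw [EuclideanSpace.norm_sq_eq]; simp
  have hpow : (‖p.1 - x₀‖^2 + p.2^2) ^ (α/2 - 1)
      = (‖p.1 - x₀‖^2 + p.2^2) ^ (α/2 - 2) * (‖p.1 - x₀‖^2 + p.2^2) := by
    rw [← Real.rpow_add_one hR.ne']; congr 1; ring
  simp only [EuclideanSpace.inner_single_right, Finset.sum_add_distrib, mul_zero, add_zero,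
    inner_zero_right, one_mul, mul_one, zero_add, ← Finset.mul_sum, PiLp.norm_single]
  simp only [conj_trivial, hs]
  simp
  rw [hpow]
  ring

/-- **Lemma 4.3 (barrier for `B_1^0`).** For `α ∈ (0, 1-a)` and `|x₀| < 1` there is `C ≥ 1`,
depending only on `n`, `a` and `α`, such that `B(x,y) = |X-(x₀,0)|^α + C y^α` is a
supersolution of `div(y^a ∇B) ≤ 0` for `0 < y < 1` (here `a = 1-2s`, `1-a = 2s`). -/
theorem barrier_for_flat_boundary (n : ℕ) (hn : 1 ≤ n) (s : ℝ)
    (hs : s ∈ Ioo (0 : ℝ) (1/2)) (α : ℝ) (hα : α ∈ Ioo (0 : ℝ) (2*s)) :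
    ∃ C ≥ (1 : ℝ), ∀ (x₀ : En n), ‖x₀‖ < 1 →
      ∀ p : En n × ℝ, 0 < p.2 → p.2 < 1 →
        lap (fun q : En n × ℝ =>
            (‖q.1 - x₀‖^2 + q.2^2) ^ (α/2) + C * q.2 ^ α) p +
          ((1 - 2*s) / p.2) *
            fderiv ℝ (fun q : En n × ℝ =>
              (‖q.1 - x₀‖^2 + q.2^2) ^ (α/2) + C * q.2 ^ α) p (0, 1) ≤ 0 := by
  obtain ⟨hs0, hs1⟩ := hs
  obtain ⟨hα0, hα1⟩ := hα
  have hd : 0 < 2*s - α := by linarith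
  refine ⟨1 + (n + α) / (2*s - α), ?_, ?_⟩
  · have : 0 ≤ (n + α) / (2*s - α) := by positivity
    linarith
  intro x₀ _ p hp _
  set C : ℝ := 1 + (n + α) / (2*s - α) with hC
  have hCd : C * (2*s - α) = (2*s - α) + (n + α) := by
    rw [hC]; field_simp
  rw [aux_lap x₀ α C p hp, aux_first x₀ α C p _ hp]
  have hR := aux_pos x₀ p hp
  have hle : (‖p.1 - x₀‖^2 + p.2^2) ^ (α/2 - 1) ≤ p.2 ^ (α - 2) := by
    calc (‖p.1 - x₀‖^2 + p.2^2) ^ (α/2 - 1) ≤ (p.2^2) ^ (α/2 - 1) :=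
          Real.rpow_le_rpow_of_nonpos (by positivity) (by nlinarith [sq_nonneg ‖p.1 - x₀‖])
            (by linarith)
      _ = p.2 ^ (α - 2) := by
          rw [← Real.rpow_natCast_mul hp.le]; congr 1; push_cast; ring
  have hpow : p.2 ^ (α - 1) = p.2 ^ (α - 2) * p.2 := by
    rw [← Real.rpow_add_one hp.ne']; congr 1; ring
  have hY : 0 < p.2 ^ (α - 2) := Real.rpow_pos_of_pos hp _
  have hRR : 0 < (‖p.1 - x₀‖^2 + p.2^2) ^ (α/2 - 1) := Real.rpow_pos_of_pos hR _
  rw [hpow]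
  generalize (‖p.1 - x₀‖^2 + p.2^2) ^ (α/2 - 1) = A at *
  generalize p.2 ^ (α - 2) = Y at *
  have hn' : (1:ℝ) ≤ n := by exact_mod_cast hn
  have key : α * (α + n - 1) * A + C * α * (α - 1) * Y + (1 - 2*s) / p.2 *
      (α * A * (inner ℝ (p.1 - x₀) (0 : En n) + p.2 * 1) + C * α * (Y * p.2) * 1)
      = α * ((α + n - 2*s) * A - (C * (2*s - α)) * Y) := by
    rw [inner_zero_right]
    field_simp
    ring
  rw [key, hCd]
  have h1 : (α + n - 2*s) * A ≤ (α + n - 2*s) * Y :=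
    mul_le_mul_of_nonneg_left hle (by linarith)
  have h2 : (α + n - 2*s) * Y ≤ ((2*s - α) + (n + α)) * Y :=
    mul_le_mul_of_nonneg_right (by linarith) hY.le
  exact mul_nonpos_of_nonneg_of_nonpos hα0.le (by linarith)

end
end
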